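/- arXiv:1711.01964 — 8 statements merged into one kernel-verified Lean document; each statement's English description precedes it below -/
import Mathlib

section
/- Let 𝔤 be a Lie algebra over a field K of characteristic zero with Z(𝔤) ⊆ [𝔤,𝔤]. Let x·y be any symmetric K-bilinear product on 𝔤 such that x·y ∈ Z(𝔤) for all x,y ∈ 𝔤, and x·y = 0 whenever x ∈ [𝔤,𝔤] or y ∈ [𝔤,𝔤]. Then x·y is a CPA-structure on 𝔤; in particular, on the free-nilpotent Lie algebra F_{g,c} any symmetric bilinear assignment of central values to products of the free generators (with all other products of basis elements zero) defines a central CPA-structure. -/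
/-- A commutative post-Lie algebra structure (CPA-structure) on a Lie algebra `L` over `K`:
a bilinear product `x·y` such that (1) `x·y = y·x`, (2) `⁅x,y⁆·z = x·(y·z) - y·(x·z)`,
(3) `x·⁅y,z⁆ = ⁅x·y,z⁆ + ⁅y,x·z⁆`. -/
structure IsCPAStructure (K : Type*) {L : Type*} [CommRing K] [LieRing L] [LieAlgebra K L]
    (mul : L →ₗ[K] L →ₗ[K] L) : Prop where
  comm : ∀ x y : L, mul x y = mul y x
  bracket_mul : ∀ x y z : L, mul ⁅x, y⁆ z = mul x (mul y z) - mul y (mul x z)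
  mul_bracket : ∀ x y z : L, mul x ⁅y, z⁆ = ⁅mul x y, z⁆ + ⁅y, mul x z⁆

/-- On a Lie algebra `𝔤` (char. zero) with `Z(𝔤) ⊆ [𝔤,𝔤]`, any symmetric bilinear product
taking only central values and vanishing whenever one argument lies in `[𝔤,𝔤]` is a
CPA-structure (in particular a central one). -/
theorem isCPA_of_central_values_vanishing_on_derived
    (K : Type*) (L : Type*) [Field K] [CharZero K] [LieRing L] [LieAlgebra K L]
    (hstem : LieAlgebra.center K L ≤ ⁅(⊤ : LieIdeal K L), (⊤ : LieIdeal K L)⁆)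
    (mul : L →ₗ[K] L →ₗ[K] L)
    (hsymm : ∀ x y : L, mul x y = mul y x)
    (hcentral : ∀ x y : L, mul x y ∈ LieAlgebra.center K L)
    (hvanish : ∀ x y : L,
      (x ∈ ⁅(⊤ : LieIdeal K L), (⊤ : LieIdeal K L)⁆ ∨ y ∈ ⁅(⊤ : LieIdeal K L), (⊤ : LieIdeal K L)⁆) →
      mul x y = 0) :
    IsCPAStructure K mul := by
  have hder : ∀ x y : L, ⁅x, y⁆ ∈ ⁅(⊤ : LieIdeal K L), (⊤ : LieIdeal K L)⁆ := fun x y =>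
    LieSubmodule.lie_mem_lie (LieSubmodule.mem_top x) (LieSubmodule.mem_top y)
  have hr : ∀ x y z : L, ⁅x, mul y z⁆ = 0 := fun x y z =>
    (LieModule.mem_maxTrivSubmodule (R := K) (L := L) (M := L) _).1 (hcentral y z) x
  have hl : ∀ x y z : L, ⁅mul x y, z⁆ = 0 := fun x y z => by
    rw [← lie_skew, hr, neg_zero]
  refine ⟨hsymm, fun x y z => ?_, fun x y z => ?_⟩
  · rw [hvanish _ _ (Or.inl (hder x y)), hvanish x _ (Or.inr (hstem (hcentral y z))),
      hvanish y _ (Or.inr (hstem (hcentral x z))), sub_zero]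
  · rw [hvanish _ _ (Or.inr (hder y z)), hl, hr, add_zero]
end

section
/- Every CPA-structure on the free-nilpotent Lie algebra F_{2,3} on 2 generators of nilpotency class 3, over a field K of characteristic zero, is central, i.e., satisfies x·y ∈ Z(F_{2,3}) for all x,y. -/
/-- The free-nilpotent Lie algebra \`F_{g,c}\` on \`g\` generators of nilpotency class \`c\`:
the quotient of the free Lie algebra on \`g\` generators by the \`(c+1)\`-st term \`𝔤^{c+1}\` of
its lower central series (which is \`lowerCentralSeries c\` in Mathlib's indexing). -/
abbrev FreeNilpotentLieAlgebra (K : Type*) [Field K] (g c : ℕ) :=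
  FreeLieAlgebra K (Fin g) ⧸
    LieModule.lowerCentralSeries K (FreeLieAlgebra K (Fin g)) (FreeLieAlgebra K (Fin g)) c

/-- Coordinate model of `F_{2,3}`. -/
def F23Model (K : Type*) := Fin 5 → K

namespace F23Model

set_option linter.unusedSectionVars false
set_option linter.unusedSimpArgs false

variable {K : Type*} [Field K]

instance : AddCommGroup (F23Model K) := inferInstanceAs (AddCommGroup (Fin 5 → K))
instance : Module K (F23Model K) := inferInstanceAs (Module K (Fin 5 → K))

@[simp] theorem add_app (x y : F23Model K) (i : Fin 5) : (x + y) i = x i + y i := rfl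
@[simp] theorem sub_app (x y : F23Model K) (i : Fin 5) : (x - y) i = x i - y i := rfl
@[simp] theorem zero_app (i : Fin 5) : (0 : F23Model K) i = 0 := rfl
@[simp] theorem smul_app (a : K) (x : F23Model K) (i : Fin 5) : (a • x) i = a * x i := rfl

/-- Build a vector from its coordinates. -/
def mkv (a b c d e : K) : F23Model K := (![a, b, c, d, e] : Fin 5 → K)

@[simp] theorem mkv0 (a b c d e : K) : mkv a b c d e 0 = a := rfl
@[simp] theorem mkv1 (a b c d e : K) : mkv a b c d e 1 = b := rfl
@[simp] theorem mkv2 (a b c d e : K) : mkv a b c d e 2 = c := rfl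
@[simp] theorem mkv3 (a b c d e : K) : mkv a b c d e 3 = d := rfl
@[simp] theorem mkv4 (a b c d e : K) : mkv a b c d e 4 = e := rfl

theorem ext5 {x y : F23Model K} (h0 : x 0 = y 0) (h1 : x 1 = y 1) (h2 : x 2 = y 2)
    (h3 : x 3 = y 3) (h4 : x 4 = y 4) : x = y := by
  funext i
  fin_cases i <;> assumption

theorem toMkv (x : F23Model K) : ∃ a b c d e, x = mkv a b c d e :=
  ⟨x 0, x 1, x 2, x 3, x 4, ext5 rfl rfl rfl rfl rfl⟩

instance : Bracket (F23Model K) (F23Model K) where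
  bracket x y := mkv 0 0 (x 0 * y 1 - x 1 * y 0) (x 0 * y 2 - x 2 * y 0) (x 1 * y 2 - x 2 * y 1)

theorem brk (x y : F23Model K) : ⁅x, y⁆ =
    mkv 0 0 (x 0 * y 1 - x 1 * y 0) (x 0 * y 2 - x 2 * y 0) (x 1 * y 2 - x 2 * y 1) := rfl

instance : LieRing (F23Model K) where
  add_lie x y z := by apply ext5 <;> simp [brk] <;> ring
  lie_add x y z := by apply ext5 <;> simp [brk] <;> ring
  lie_self x := by apply ext5 <;> simp [brk] <;> ring
  leibniz_lie x y z := by apply ext5 <;> simp [brk] <;> ring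

instance : LieAlgebra K (F23Model K) where
  lie_smul t x y := by apply ext5 <;> simp [brk] <;> ring

theorem central_aux [CharZero K] (mul : F23Model K →ₗ[K] F23Model K →ₗ[K] F23Model K)
    (h : IsCPAStructure K mul) (x y : F23Model K) :
    mul x y 0 = 0 ∧ mul x y 1 = 0 ∧ mul x y 2 = 0 := by
  obtain ⟨e1, he1⟩ : ∃ e, e = mkv (1 : K) 0 0 0 0 := ⟨_, rfl⟩
  obtain ⟨e2, he2⟩ : ∃ e, e = mkv (0 : K) 1 0 0 0 := ⟨_, rfl⟩
  obtain ⟨e3, he3⟩ : ∃ e, e = mkv (0 : K) 0 1 0 0 := ⟨_, rfl⟩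
  obtain ⟨e4, he4⟩ : ∃ e, e = mkv (0 : K) 0 0 1 0 := ⟨_, rfl⟩
  obtain ⟨e5, he5⟩ : ∃ e, e = mkv (0 : K) 0 0 0 1 := ⟨_, rfl⟩
  have hb12 : ⁅e1, e2⁆ = e3 := by apply ext5 <;> simp [brk, *]
  have hb13 : ⁅e1, e3⁆ = e4 := by apply ext5 <;> simp [brk, *]
  have hb23 : ⁅e2, e3⁆ = e5 := by apply ext5 <;> simp [brk, *]
  have dec : ∀ z : F23Model K,
      z = z 0 • e1 + z 1 • e2 + z 2 • e3 + z 3 • e4 + z 4 • e5 := by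
    intro z; apply ext5 <;> simp [*]
  have lin : ∀ w z : F23Model K, mul w z = z 0 • mul w e1 + z 1 • mul w e2 + z 2 • mul w e3
      + z 3 • mul w e4 + z 4 • mul w e5 := by
    intro w z
    conv_lhs => rw [dec z]
    simp only [map_add, map_smul]
  have d3 : ∀ w, mul w e3 = ⁅mul w e1, e2⁆ + ⁅e1, mul w e2⁆ := by
    intro w; rw [← hb12, h.mul_bracket]
  have d4 : ∀ w, mul w e4 = ⁅mul w e1, e3⁆ + ⁅e1, mul w e3⁆ := by
    intro w; rw [← hb13, h.mul_bracket]
  have d5 : ∀ w, mul w e5 = ⁅mul w e2, e3⁆ + ⁅e2, mul w e3⁆ := by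
    intro w; rw [← hb23, h.mul_bracket]
  obtain ⟨a, c, r, v, v', hP⟩ : ∃ a c r v v', mul e1 e1 = mkv a c r v v' :=
    toMkv _
  obtain ⟨b, d, s, w, w', hQ⟩ : ∃ a c r v v', mul e1 e2 = mkv a c r v v' :=
    toMkv _
  obtain ⟨p, q, u, z, z', hR⟩ : ∃ a c r v v', mul e2 e2 = mkv a c r v v' :=
    toMkv _
  have hQ' : mul e2 e1 = mkv b d s w w' := by rw [h.comm, hQ]
  have e1e3 : mul e1 e3 = mkv 0 0 (a + d) s (-r) := by
    rw [d3, hP, hQ]; apply ext5 <;> simp [brk, he1, he2, he3]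
  have e2e3 : mul e2 e3 = mkv 0 0 (b + q) u (-s) := by
    rw [d3, hR, hQ']; apply ext5 <;> simp [brk, he1, he2, he3]
  have e1e4 : mul e1 e4 = mkv 0 0 0 (2 * a + d) c := by
    rw [d4, hP, e1e3]; apply ext5 <;> simp [brk, he1, he2, he3]; ring
  have e2e4 : mul e2 e4 = mkv 0 0 0 (2 * b + q) d := by
    rw [d4, hQ', e2e3]; apply ext5 <;> simp [brk, he1, he2, he3]; ring
  have e1e5 : mul e1 e5 = mkv 0 0 0 b (2 * d + a) := by
    rw [d5, hQ, e1e3]; apply ext5 <;> simp [brk, he1, he2, he3]; ring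
  have e2e5 : mul e2 e5 = mkv 0 0 0 p (2 * q + b) := by
    rw [d5, hR, e2e3]; apply ext5 <;> simp [brk, he1, he2, he3]; ring
  have e3e1 := (h.comm e3 e1).trans e1e3
  have e3e2 := (h.comm e3 e2).trans e2e3
  have e3e3 : mul e3 e3 = mkv 0 0 0 (b + q) (-(a + d)) := by
    rw [d3, e3e1, e3e2]; apply ext5 <;> simp [brk, he1, he2, he3]; try ring
  have e3e4 : mul e3 e4 = 0 := by
    rw [d4, e3e1, e3e3]; apply ext5 <;> simp [brk, he1, he2, he3]
  have e3e5 : mul e3 e5 = 0 := by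
    rw [d5, e3e2, e3e3]; apply ext5 <;> simp [brk, he1, he2, he3]
  have A := h.bracket_mul e1 e2 e1
  have B := h.bracket_mul e1 e2 e2
  have C := h.bracket_mul e1 e3 e1
  have D := h.bracket_mul e1 e3 e2
  have E := h.bracket_mul e2 e3 e2
  rw [hb12, lin e1 (mul e2 e1), lin e2 (mul e1 e1), e3e1, hP, hQ', hQ, hR, e1e3, e1e4, e1e5, e2e3,
    e2e4, e2e5] at A
  rw [hb12, lin e1 (mul e2 e2), lin e2 (mul e1 e2), e3e2, hR, hQ', hQ, hP, e1e3, e1e4, e1e5,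
    e2e3, e2e4, e2e5] at B
  rw [hb13, h.comm e4 e1, lin e1 (mul e3 e1), lin e3 (mul e1 e1), e3e1, e3e2, e3e3, e3e4, e3e5, hP,
    hQ, e1e3, e1e4, e1e5] at C
  rw [hb13, h.comm e4 e2, lin e1 (mul e3 e2), lin e3 (mul e1 e2), e3e1, e3e2, e3e3, e3e4, e3e5, hP,
    hQ, e1e3, e1e4, e1e5, e2e4] at D
  rw [hb23, h.comm e5 e2, lin e2 (mul e3 e2), lin e3 (mul e2 e2), e3e1, e3e2, e3e3, e3e4, e3e5, hR,
    hQ', e2e3, e2e4, e2e5] at E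
  have ev : ∀ {x y : F23Model K}, x = y → ∀ i, x i = y i := fun h i => by rw [h]
  have A0 := ev A 0
  have A1 := ev A 1
  have A2 := ev A 2
  have A3 := ev A 3
  have A4 := ev A 4
  have B0 := ev B 0
  have B1 := ev B 1
  have B2 := ev B 2
  have B3 := ev B 3
  have B4 := ev B 4
  have C2 := ev C 2
  have C3 := ev C 3
  have C4 := ev C 4
  have D2 := ev D 2
  have D3 := ev D 3
  have D4 := ev D 4
  have E2 := ev E 2
  have E3 := ev E 3
  have E4 := ev E 4
  clear A B C D E
  simp only [add_app, sub_app, smul_app, zero_app, mkv0, mkv1, mkv2, mkv3, mkv4] at A0 A1 A2 A3 A4 B0 B1 B2 B3 B4 C2 C3 C4 D2 D3 D4 E2 E3 E4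
  have key : (a = 0 ∧ b = 0 ∧ c = 0 ∧ d = 0 ∧ p = 0 ∧ q = 0) ∧ r = 0 ∧ s = 0 ∧ u = 0 := by
    clear e3e5 e3e4 e3e3 e3e2 e3e1 e1e3 e1e4 e1e5 e2e3 e2e4 e2e5 hP hQ hQ' hR d3 d4 d5 lin dec hb12 hb13 hb23
    have f1 : a * d = b * c := by grind only
    have f2 : a * q = c * p := by grind only
    have f3 : b * q = p * d := by grind only
    have t1 : a + d = 0 := by
      have : (a + d) * (a + d) = 0 := by grind only
      exact mul_self_eq_zero.mp this
    have t2 : b + q = 0 := by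
      have : (b + q) * (b + q) = 0 := by grind only
      exact mul_self_eq_zero.mp this
    obtain rfl : d = -a := by linear_combination t1
    obtain rfl : q = -b := by linear_combination t2
    have hs : s ^ 2 = u * r := by
      have : (2 : K) * (s ^ 2 - u * r) = 0 := by linear_combination -A3 - B4
      have := (mul_eq_zero.mp this).resolve_left two_ne_zero
      linear_combination this
    have hcu : c ^ 2 * u = -a ^ 2 * r - 2 * a * s * c := by grind only
    have hpr : p ^ 2 * r = 2 * p * b * s - b ^ 2 * u := by grind only
    have hc : c = 2 * (a * r + s * c) := by linear_combination C4
    have hp : p = 2 * (b * u - p * s) := by linear_combination E3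
    have hc0 : c = 0 := by
      have : (a * r + s * c) ^ 2 = 0 := by linear_combination c ^ 2 * hs + r * hcu
      rw [hc, pow_eq_zero_iff two_ne_zero |>.mp this, mul_zero]
    have hp0 : p = 0 := by
      have : (b * u - p * s) ^ 2 = 0 := by linear_combination p ^ 2 * hs + u * hpr
      rw [hp, pow_eq_zero_iff two_ne_zero |>.mp this, mul_zero]
    subst hc0 hp0
    have ha : a = 0 := by
      have : a * a = 0 := by linear_combination -f1
      exact mul_self_eq_zero.mp this
    have hb : b = 0 := by
      have : b * b = 0 := by linear_combination -f3
      exact mul_self_eq_zero.mp this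
    subst ha hb
    have hr : r = 0 := by linear_combination -A4
    have hu : u = 0 := by linear_combination B3
    subst hr hu
    have h0 : s = 0 := by linear_combination A3 + hs
    simp [h0]
  obtain ⟨⟨rfl, rfl, rfl, rfl, rfl, rfl⟩, rfl, rfl, rfl⟩ := key
  have d1 : ∀ i : Fin 5, i = 0 ∨ i = 1 ∨ i = 2 → mul e1 y i = 0 ∧ mul e2 y i = 0 ∧ mul e3 y i = 0 := by
    intro i hi
    rw [lin e1 y, lin e2 y, lin e3 y, e3e1, e3e2, e3e3, e3e4, e3e5, hP, hQ, hQ', hR, e1e3, e1e4,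
      e1e5, e2e3, e2e4, e2e5]
    rcases hi with rfl | rfl | rfl <;> simp
  have e4y : mul e4 y = 0 := by
    rw [h.comm, d4, h.comm y e1, h.comm y e3]
    apply ext5 <;> simp [brk, d1]
  have e5y : mul e5 y = 0 := by
    rw [h.comm, d5, h.comm y e2, h.comm y e3]
    apply ext5 <;> simp [brk, d1]
  rw [h.comm x y, lin y x, h.comm y e1, h.comm y e2, h.comm y e3, h.comm y e4, h.comm y e5,
    e4y, e5y]
  simp [d1]

end F23Model

section Transfer

variable (K : Type*) [Field K]

local notation "LL" => FreeLieAlgebra K (Fin 2)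
local notation "QQ" => FreeNilpotentLieAlgebra K 2 3

open F23Model

/-- The projection as a Lie algebra morphism. -/
noncomputable def f23Proj : LL →ₗ⁅K⁆ QQ where
  toLinearMap := ((LieSubmodule.Quotient.mk' (LieModule.lowerCentralSeries K LL LL 3) :
    LL →ₗ⁅K, LL⁆ QQ) : LL →ₗ[K] QQ)
  map_lie' := by intro x y; rfl

theorem f23Proj_surj : Function.Surjective (f23Proj K) := Quot.mk_surjective

theorem f23_nil (x y z w : QQ) : ⁅x, ⁅y, ⁅z, w⁆⁆⁆ = 0 := by
  obtain ⟨x, rfl⟩ := f23Proj_surj K x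
  obtain ⟨y, rfl⟩ := f23Proj_surj K y
  obtain ⟨z, rfl⟩ := f23Proj_surj K z
  obtain ⟨w, rfl⟩ := f23Proj_surj K w
  simp only [← LieHom.map_lie]
  refine (LieSubmodule.Quotient.mk_eq_zero (N := LieModule.lowerCentralSeries K LL LL 3)).mpr ?_
  simp only [LieModule.lowerCentralSeries_succ, LieModule.lowerCentralSeries_zero]
  exact LieSubmodule.lie_mem_lie (LieSubmodule.mem_top _) (LieSubmodule.lie_mem_lie
    (LieSubmodule.mem_top _) (LieSubmodule.lie_mem_lie (LieSubmodule.mem_top _)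
      (LieSubmodule.mem_top _)))

/-- The map from the free Lie algebra to the model. -/
noncomputable def f23Free : LL →ₗ⁅K⁆ F23Model K :=
  FreeLieAlgebra.lift K ![mkv 1 0 0 0 0, mkv 0 1 0 0 0]

theorem f23Free_lcs (x : LL) (hx : x ∈ LieModule.lowerCentralSeries K LL LL 3) :
    f23Free K x = 0 := by
  have h1 : ∀ x ∈ LieModule.lowerCentralSeries K LL LL 1,
      f23Free K x 0 = 0 ∧ f23Free K x 1 = 0 := by
    intro x hx
    rw [LieModule.lowerCentralSeries_succ, ← LieSubmodule.mem_toSubmodule,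
      LieSubmodule.lieIdeal_oper_eq_linear_span'] at hx
    induction hx using Submodule.span_induction with
    | mem x h => obtain ⟨y, -, z, hz, rfl⟩ := h; simp [brk]
    | zero => simp
    | add x y _ _ hx hy => simp [hx, hy]
    | smul a x _ hx => simp [hx]
  have h2 : ∀ x ∈ LieModule.lowerCentralSeries K LL LL 2,
      f23Free K x 0 = 0 ∧ f23Free K x 1 = 0 ∧ f23Free K x 2 = 0 := by
    intro x hx
    rw [LieModule.lowerCentralSeries_succ, ← LieSubmodule.mem_toSubmodule,
      LieSubmodule.lieIdeal_oper_eq_linear_span'] at hx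
    induction hx using Submodule.span_induction with
    | mem x h => obtain ⟨y, -, z, hz, rfl⟩ := h; simp [brk, h1 z hz]
    | zero => simp
    | add x y _ _ hx hy => simp [hx, hy]
    | smul a x _ hx => simp [hx]
  rw [LieModule.lowerCentralSeries_succ, ← LieSubmodule.mem_toSubmodule,
    LieSubmodule.lieIdeal_oper_eq_linear_span'] at hx
  induction hx using Submodule.span_induction with
  | mem x h => obtain ⟨y, -, z, hz, rfl⟩ := h; apply ext5 <;> simp [brk, h2 z hz]
  | zero => simp
  | add x y _ _ hx hy => simp [hx, hy]
  | smul a x _ hx => simp [hx]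

/-- The induced linear map from `F_{2,3}` to the model. -/
noncomputable def f23Phi : QQ →ₗ[K] F23Model K :=
  (LieModule.lowerCentralSeries K LL LL 3).toSubmodule.liftQ (f23Free K : LL →ₗ[K] F23Model K)
    (fun x hx => f23Free_lcs K x hx)

theorem f23Phi_proj (x : LL) : f23Phi K (f23Proj K x) = f23Free K x := rfl

/-- A generator. -/
noncomputable def g1 : QQ := f23Proj K (FreeLieAlgebra.of K 0)
/-- A generator. -/
noncomputable def g2 : QQ := f23Proj K (FreeLieAlgebra.of K 1)

/-- The map from the model to `F_{2,3}`. -/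
noncomputable def f23Psi : F23Model K →ₗ⁅K⁆ QQ where
  toFun x := x 0 • g1 K + x 1 • g2 K + x 2 • ⁅g1 K, g2 K⁆ + x 3 • ⁅g1 K, ⁅g1 K, g2 K⁆⁆
    + x 4 • ⁅g2 K, ⁅g1 K, g2 K⁆⁆
  map_add' x y := by simp only [add_app, add_smul]; abel
  map_smul' a x := by simp only [smul_app, mul_smul, smul_add, RingHom.id_apply]
  map_lie' := by
    intro x y
    have n := f23_nil K
    have n3 : ∀ a b c d : QQ, ⁅⁅a, ⁅b, c⁆⁆, d⁆ = 0 := by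
      intro a b c d; rw [← lie_skew, n, neg_zero]
    have n2 : ∀ a b c d : QQ, ⁅⁅a, b⁆, ⁅c, d⁆⁆ = 0 := by
      intro a b c d; rw [lie_lie, n, n, sub_zero]
    have k1 : ⁅g2 K, g1 K⁆ = -⁅g1 K, g2 K⁆ := (lie_skew _ _).symm
    have k2 : ∀ a : QQ, ⁅⁅g1 K, g2 K⁆, a⁆ = -⁅a, ⁅g1 K, g2 K⁆⁆ := fun a => (lie_skew _ _).symm
    simp only [brk, mkv0, mkv1, mkv2, mkv3, mkv4, lie_add, add_lie, lie_smul, smul_lie, lie_self,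
      n, n3, n2, k1, k2 (g1 K), k2 (g2 K)]
    module

theorem f23Psi_apply (x : F23Model K) : f23Psi K x =
    x 0 • g1 K + x 1 • g2 K + x 2 • ⁅g1 K, g2 K⁆ + x 3 • ⁅g1 K, ⁅g1 K, g2 K⁆⁆
    + x 4 • ⁅g2 K, ⁅g1 K, g2 K⁆⁆ := rfl

theorem f23Psi_Phi (x : QQ) : f23Psi K (f23Phi K x) = x := by
  obtain ⟨x, rfl⟩ := f23Proj_surj K x
  rw [f23Phi_proj]
  have : (f23Psi K).comp (f23Free K) = f23Proj K := by
    apply FreeLieAlgebra.hom_ext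
    intro i
    rw [LieHom.comp_apply, f23Free, FreeLieAlgebra.lift_of_apply, f23Psi_apply]
    fin_cases i <;> simp [g1, g2]
  exact LieHom.congr_fun this x

theorem f23Phi_Psi (x : F23Model K) : f23Phi K (f23Psi K x) = x := by
  have a1 : f23Free K (FreeLieAlgebra.of K 0) = mkv 1 0 0 0 0 := by
    rw [f23Free, FreeLieAlgebra.lift_of_apply]; rfl
  have a2 : f23Free K (FreeLieAlgebra.of K 1) = mkv 0 1 0 0 0 := by
    rw [f23Free, FreeLieAlgebra.lift_of_apply]; rfl
  rw [f23Psi_apply]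
  simp only [map_add, map_smul, g1, g2, ← LieHom.map_lie, f23Phi_proj]
  simp only [LieHom.map_lie, a1, a2]
  apply ext5 <;> simp [brk]

theorem f23Phi_lie (x y : QQ) : f23Phi K ⁅x, y⁆ = ⁅f23Phi K x, f23Phi K y⁆ := by
  conv_lhs => rw [← f23Psi_Phi K x, ← f23Psi_Phi K y, ← LieHom.map_lie, f23Phi_Psi]

end Transfer

/-- Every CPA-structure on the free-nilpotent Lie algebra `F_{2,3}` over a field of
characteristic zero is central. -/
theorem cpa_on_F23_is_central (K : Type*) [Field K] [CharZero K]
    (mul : FreeNilpotentLieAlgebra K 2 3 →ₗ[K]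
      FreeNilpotentLieAlgebra K 2 3 →ₗ[K] FreeNilpotentLieAlgebra K 2 3)
    (hcpa : IsCPAStructure K mul) :
    ∀ x y : FreeNilpotentLieAlgebra K 2 3,
      mul x y ∈ LieAlgebra.center K (FreeNilpotentLieAlgebra K 2 3) := by
  let ps : F23Model K →ₗ[K] FreeNilpotentLieAlgebra K 2 3 := f23Psi K
  let mul' : F23Model K →ₗ[K] F23Model K →ₗ[K] F23Model K :=
    (mul.compl₁₂ ps ps).compr₂ (f23Phi K)
  have hm : ∀ x y, mul' x y = f23Phi K (mul (f23Psi K x) (f23Psi K y)) := fun x y => rfl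
  have h' : IsCPAStructure K mul' := by
    constructor
    · intro x y
      rw [hm, hm, hcpa.comm]
    · intro x y z
      simp only [hm, f23Psi_Phi, LieHom.map_lie, hcpa.bracket_mul, map_sub]
    · intro x y z
      simp only [hm, LieHom.map_lie, hcpa.mul_bracket, map_add, f23Phi_lie, f23Phi_Psi]
  intro x y
  have key := F23Model.central_aux mul' h' (f23Phi K x) (f23Phi K y)
  rw [hm, f23Psi_Phi, f23Psi_Phi] at key
  rw [LieModule.mem_maxTrivSubmodule]
  intro z
  have : f23Phi K ⁅z, mul x y⁆ = 0 := by
    rw [f23Phi_lie]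
    apply F23Model.ext5 <;> simp [F23Model.brk, key]
  rw [← f23Psi_Phi K ⁅z, mul x y⁆, this, map_zero]
end

section
/- On the free-nilpotent Lie algebra 𝔤 = F_{3,2} on 3 generators of nilpotency class 2, over a field K of characteristic zero, there exists a CPA-structure x·y with 𝔤 · Z(𝔤) ≠ 0, i.e., with x·z ≠ 0 for some x ∈ 𝔤 and z ∈ Z(𝔤). Concretely, on the 6-dimensional Lie algebra with basis (e_1,…,e_6) and brackets [e_1,e_2]=e_4, [e_1,e_3]=e_5, [e_2,e_3]=e_6, the symmetric bilinear product determined by e_1·e_1 = e_2, e_1·e_2 = −e_5, e_1·e_5 = e_6, e_2·e_3 = −2e_6 (all other products of basis elements zero) is such a CPA-structure. -/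
/-- Coordinate model of `F_{3,2}`. -/
def F32Model (K : Type*) := Fin 6 → K

namespace F32Model

set_option linter.unusedSectionVars false

variable {K : Type*} [Field K]

instance : AddCommGroup (F32Model K) := inferInstanceAs (AddCommGroup (Fin 6 → K))
instance : Module K (F32Model K) := inferInstanceAs (Module K (Fin 6 → K))

theorem add_app (x y : F32Model K) (i : Fin 6) : (x + y) i = x i + y i := rfl
theorem sub_app (x y : F32Model K) (i : Fin 6) : (x - y) i = x i - y i := Pi.sub_apply x y i
theorem smul_app (a : K) (x : F32Model K) (i : Fin 6) : (a • x) i = a * x i := rfl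
theorem zero_app (i : Fin 6) : (0 : F32Model K) i = 0 := rfl

theorem ext6 {x y : F32Model K} (h0 : x 0 = y 0) (h1 : x 1 = y 1) (h2 : x 2 = y 2)
    (h3 : x 3 = y 3) (h4 : x 4 = y 4) (h5 : x 5 = y 5) : x = y := by
  funext i
  fin_cases i <;> assumption

/-- Constructor from coordinates. -/
def mk (a b c d e f : K) : F32Model K := ![a, b, c, d, e, f]

@[simp] theorem mk0 (a b c d e f : K) : mk a b c d e f 0 = a := rfl
@[simp] theorem mk1 (a b c d e f : K) : mk a b c d e f 1 = b := rfl
@[simp] theorem mk2 (a b c d e f : K) : mk a b c d e f 2 = c := rfl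
@[simp] theorem mk3 (a b c d e f : K) : mk a b c d e f 3 = d := rfl
@[simp] theorem mk4 (a b c d e f : K) : mk a b c d e f 4 = e := rfl
@[simp] theorem mk5 (a b c d e f : K) : mk a b c d e f 5 = f := rfl

instance : Bracket (F32Model K) (F32Model K) :=
  ⟨fun x y => mk 0 0 0 (x 0 * y 1 - x 1 * y 0) (x 0 * y 2 - x 2 * y 0) (x 1 * y 2 - x 2 * y 1)⟩

theorem bracket_def (x y : F32Model K) : ⁅x, y⁆ =
    mk 0 0 0 (x 0 * y 1 - x 1 * y 0) (x 0 * y 2 - x 2 * y 0) (x 1 * y 2 - x 2 * y 1) := rfl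

instance : LieRing (F32Model K) where
  add_lie x y z := by
    apply ext6 <;> simp [bracket_def, add_app] <;> ring
  lie_add x y z := by
    apply ext6 <;> simp [bracket_def, add_app] <;> ring
  lie_self x := by
    apply ext6 <;> simp [bracket_def, zero_app] <;> ring
  leibniz_lie x y z := by
    apply ext6 <;> simp [bracket_def, add_app]

instance : LieAlgebra K (F32Model K) where
  lie_smul a x y := by
    apply ext6 <;> simp [bracket_def, smul_app] <;> ring

/-- The product `e₁·e₁ = e₂`, `e₁·e₅ = e₆`, `e₂·e₃ = -e₆`. -/
def prod : F32Model K →ₗ[K] F32Model K →ₗ[K] F32Model K :=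
  LinearMap.mk₂ K
    (fun x y => mk 0 (x 0 * y 0) 0 0 0 (x 0 * y 4 + x 4 * y 0 - x 1 * y 2 - x 2 * y 1))
    (by intro x y z; apply ext6 <;> simp [add_app] <;> ring)
    (by intro a x y; apply ext6 <;> simp [smul_app] <;> ring)
    (by intro x y z; apply ext6 <;> simp [add_app] <;> ring)
    (by intro a x y; apply ext6 <;> simp [smul_app] <;> ring)

theorem prod_def (x y : F32Model K) : prod x y =
    mk 0 (x 0 * y 0) 0 0 0 (x 0 * y 4 + x 4 * y 0 - x 1 * y 2 - x 2 * y 1) := rfl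

theorem prod_cpa : IsCPAStructure K (prod (K := K)) where
  comm x y := by
    apply ext6 <;> simp [prod_def] <;> ring
  bracket_mul x y z := by
    apply ext6 <;> simp [prod_def, bracket_def, sub_app] <;> ring
  mul_bracket x y z := by
    apply ext6 <;> simp [prod_def, bracket_def, add_app] <;> ring

/-- Linear map to a Lie algebra with prescribed images of the generators. -/
def toLin {L : Type*} [LieRing L] [LieAlgebra K L] (v : Fin 3 → L) : F32Model K →ₗ[K] L where
  toFun x := x 0 • v 0 + x 1 • v 1 + x 2 • v 2 + x 3 • ⁅v 0, v 1⁆ + x 4 • ⁅v 0, v 2⁆ +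
    x 5 • ⁅v 1, v 2⁆
  map_add' x y := by simp only [add_app]; module
  map_smul' a x := by simp only [smul_app, RingHom.id_apply]; module

theorem toLin_def {L : Type*} [LieRing L] [LieAlgebra K L] (v : Fin 3 → L) (x : F32Model K) :
    toLin v x = x 0 • v 0 + x 1 • v 1 + x 2 • v 2 + x 3 • ⁅v 0, v 1⁆ + x 4 • ⁅v 0, v 2⁆ +
    x 5 • ⁅v 1, v 2⁆ := rfl

/-- The map of `toLin` as a Lie algebra morphism when the target has class at most two. -/
def toLie {L : Type*} [LieRing L] [LieAlgebra K L] (h : ∀ a b c : L, ⁅a, ⁅b, c⁆⁆ = 0)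
    (v : Fin 3 → L) : F32Model K →ₗ⁅K⁆ L :=
  { toLin v with
    map_lie' := by
      intro x y
      have h' : ∀ a b c : L, ⁅⁅a, b⁆, c⁆ = 0 := fun a b c => by
        rw [← lie_skew, h, neg_zero]
      change toLin v ⁅x, y⁆ = ⁅toLin v x, toLin v y⁆
      simp only [toLin_def, bracket_def, lie_add, add_lie, lie_smul, smul_lie, h, h', lie_self,
        mk0, mk1, mk2, mk3, mk4, mk5, smul_zero]
      rw [← lie_skew (v 0) (v 1), ← lie_skew (v 0) (v 2), ← lie_skew (v 1) (v 2)]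
      module }

theorem toLie_apply {L : Type*} [LieRing L] [LieAlgebra K L] (h : ∀ a b c : L, ⁅a, ⁅b, c⁆⁆ = 0)
    (v : Fin 3 → L) (x : F32Model K) : toLie h v x = toLin v x := rfl

/-- Generators of the model. -/
def gen : Fin 3 → F32Model K := ![mk 1 0 0 0 0 0, mk 0 1 0 0 0 0, mk 0 0 1 0 0 0]

/-- Generators of the free-nilpotent Lie algebra. -/
noncomputable def qgen (i : Fin 3) : FreeNilpotentLieAlgebra K 3 2 :=
  LieSubmodule.Quotient.mk (FreeLieAlgebra.of K i)

theorem q_class_two (a b c : FreeNilpotentLieAlgebra K 3 2) : ⁅a, ⁅b, c⁆⁆ = 0 := by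
  obtain ⟨a, rfl⟩ := LieSubmodule.Quotient.surjective_mk' _ a
  obtain ⟨b, rfl⟩ := LieSubmodule.Quotient.surjective_mk' _ b
  obtain ⟨c, rfl⟩ := LieSubmodule.Quotient.surjective_mk' _ c
  change (LieSubmodule.Quotient.mk ⁅a, ⁅b, c⁆⁆ : FreeNilpotentLieAlgebra K 3 2) = 0
  rw [LieSubmodule.Quotient.mk_eq_zero']
  rw [LieModule.lowerCentralSeries_succ, LieModule.lowerCentralSeries_succ,
    LieModule.lowerCentralSeries_zero]
  exact LieSubmodule.lie_mem_lie (LieSubmodule.mem_top _)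
    (LieSubmodule.lie_mem_lie (LieSubmodule.mem_top _) (LieSubmodule.mem_top _))

/-- The canonical map from the free Lie algebra to the model. -/
noncomputable def freeTo : FreeLieAlgebra K (Fin 3) →ₗ⁅K⁆ F32Model K := FreeLieAlgebra.lift K gen

theorem model_class_two (a b c : F32Model K) : ⁅a, ⁅b, c⁆⁆ = 0 := by
  apply ext6 <;> simp [bracket_def, zero_app]

theorem lcs_le_ker : LieModule.lowerCentralSeries K (FreeLieAlgebra K (Fin 3))
    (FreeLieAlgebra K (Fin 3)) 2 ≤ (freeTo (K := K)).ker := by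
  have h1 : LieModule.lowerCentralSeries K (FreeLieAlgebra K (Fin 3))
      (FreeLieAlgebra K (Fin 3)) 1 ≤
        LieIdeal.comap (freeTo (K := K)) (LieAlgebra.center K (F32Model K)) := by
    rw [LieModule.lowerCentralSeries_succ, LieSubmodule.lieIdeal_oper_eq_span,
      LieSubmodule.lieSpan_le]
    rintro _ ⟨a, b, rfl⟩
    change _ ∈ LieIdeal.comap _ _
    rw [LieIdeal.mem_comap, LieModule.mem_maxTrivSubmodule]
    intro x
    rw [LieHom.map_lie, model_class_two]
  rw [LieModule.lowerCentralSeries_succ, LieSubmodule.lieIdeal_oper_eq_span,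
    LieSubmodule.lieSpan_le]
  rintro _ ⟨a, ⟨b, hb⟩, rfl⟩
  have h2 := h1 hb
  rw [LieIdeal.mem_comap, LieModule.mem_maxTrivSubmodule] at h2
  change _ ∈ (freeTo (K := K)).ker
  rw [LieHom.mem_ker, LieHom.map_lie]
  exact h2 _

/-- The canonical map from the free-nilpotent Lie algebra to the model. -/
noncomputable def fromQ : FreeNilpotentLieAlgebra K 3 2 →ₗ[K] F32Model K :=
  Submodule.liftQ _ (freeTo (K := K) : FreeLieAlgebra K (Fin 3) →ₗ[K] F32Model K)
    (fun x hx => by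
      have := lcs_le_ker hx
      rwa [LieHom.mem_ker] at this)

theorem fromQ_mk (x : FreeLieAlgebra K (Fin 3)) :
    fromQ (LieSubmodule.Quotient.mk x : FreeNilpotentLieAlgebra K 3 2) = freeTo x := rfl

theorem fromQ_lie (x y : FreeNilpotentLieAlgebra K 3 2) : fromQ ⁅x, y⁆ = ⁅fromQ x, fromQ y⁆ := by
  obtain ⟨x, rfl⟩ := LieSubmodule.Quotient.surjective_mk' _ x
  obtain ⟨y, rfl⟩ := LieSubmodule.Quotient.surjective_mk' _ y
  exact LieHom.map_lie freeTo x y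

/-- The inverse map. -/
noncomputable def toQ : F32Model K →ₗ⁅K⁆ FreeNilpotentLieAlgebra K 3 2 := toLie q_class_two qgen

/-- The quotient map as a morphism of Lie algebras. -/
noncomputable def quo : FreeLieAlgebra K (Fin 3) →ₗ⁅K⁆ FreeNilpotentLieAlgebra K 3 2 :=
  { (LieSubmodule.Quotient.mk' (LieModule.lowerCentralSeries K (FreeLieAlgebra K (Fin 3))
      (FreeLieAlgebra K (Fin 3)) 2) : FreeLieAlgebra K (Fin 3) →ₗ[K] _) with
    map_lie' := fun {_ _} => rfl }

theorem toQ_gen (i : Fin 3) : toQ (gen i : F32Model K) = qgen i := by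
  rw [toQ, toLie_apply, toLin_def]
  fin_cases i <;> simp [gen]

theorem freeTo_of (i : Fin 3) : freeTo (FreeLieAlgebra.of K i) = gen i := by
  rw [freeTo, FreeLieAlgebra.lift_of_apply]

theorem toQ_fromQ (x : FreeNilpotentLieAlgebra K 3 2) : toQ (fromQ x) = x := by
  obtain ⟨x, rfl⟩ := LieSubmodule.Quotient.surjective_mk' _ x
  have h : (toQ (K := K)).comp freeTo = quo := by
    apply FreeLieAlgebra.hom_ext
    intro i
    change toQ (freeTo (FreeLieAlgebra.of K i)) = qgen i
    rw [freeTo_of, toQ_gen]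
  exact congrArg (fun f => f x) h

theorem fromQ_qgen (i : Fin 3) : fromQ (qgen i) = (gen i : F32Model K) := freeTo_of i

theorem fromQ_toQ (x : F32Model K) : fromQ (toQ x) = x := by
  rw [toQ, toLie_apply, toLin_def]
  simp only [map_add, map_smul, fromQ_lie, fromQ_qgen]
  apply ext6 <;> simp [gen, add_app, smul_app, bracket_def]

/-- The transported product. -/
noncomputable def qprod : FreeNilpotentLieAlgebra K 3 2 →ₗ[K]
    FreeNilpotentLieAlgebra K 3 2 →ₗ[K] FreeNilpotentLieAlgebra K 3 2 :=
  (prod.compl₁₂ fromQ fromQ).compr₂ (toQ (K := K) : F32Model K →ₗ[K] FreeNilpotentLieAlgebra K 3 2)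

theorem qprod_def (x y : FreeNilpotentLieAlgebra K 3 2) :
    qprod x y = toQ (prod (fromQ x) (fromQ y)) := rfl

theorem qprod_cpa : IsCPAStructure K (qprod (K := K)) where
  comm x y := by rw [qprod_def, qprod_def, prod_cpa.comm]
  bracket_mul x y z := by
    simp only [qprod_def, fromQ_toQ, fromQ_lie, prod_cpa.bracket_mul, map_sub]
  mul_bracket x y z := by
    simp only [qprod_def, fromQ_lie, prod_cpa.mul_bracket, map_add, LieHom.map_lie, toQ_fromQ]

end F32Model

/-- On the free-nilpotent Lie algebra `F_{3,2}` over a field of characteristic zero there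
exists a CPA-structure with `𝔤 · Z(𝔤) ≠ 0`. -/
theorem exists_cpa_on_F32_not_annihilating_center (K : Type*) [Field K] [CharZero K] :
    ∃ mul : FreeNilpotentLieAlgebra K 3 2 →ₗ[K]
        FreeNilpotentLieAlgebra K 3 2 →ₗ[K] FreeNilpotentLieAlgebra K 3 2,
      IsCPAStructure K mul ∧
        ∃ x z : FreeNilpotentLieAlgebra K 3 2,
          z ∈ LieAlgebra.center K (FreeNilpotentLieAlgebra K 3 2) ∧ mul x z ≠ 0 := by
  refine ⟨F32Model.qprod, F32Model.qprod_cpa, F32Model.qgen (K := K) 0,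
    ⁅F32Model.qgen (K := K) 0, F32Model.qgen 2⁆, ?_, ?_⟩
  · rw [LieModule.mem_maxTrivSubmodule]
    intro x
    exact F32Model.q_class_two (K := K) _ _ _
  · intro h
    have h2 := congrArg (fun q => F32Model.fromQ q 5) h
    simp [F32Model.qprod_def, F32Model.fromQ_toQ, F32Model.fromQ_lie, F32Model.fromQ_qgen,
      F32Model.prod_def, F32Model.bracket_def, F32Model.gen, F32Model.zero_app] at h2
end

section
/- Every CPA-structure on the free-nilpotent Lie algebra F_{3,3} on 3 generators of nilpotency class 3, over a field K of characteristic zero, is central, i.e., satisfies x·y ∈ Z(F_{3,3}) for all x,y. -/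
/-- Kronecker delta. -/
def dl (K : Type*) [Field K] (i j : Fin 3) : K := if i = j then 1 else 0

/-- The degree three obstruction. -/
def obs {K : Type*} [Field K] (c : Fin 3 → Fin 3 → Fin 3 → K) (x y z a b : Fin 3) : K :=
  c x y a * dl K z b - c x z a * dl K y b -
    ∑ k : Fin 3, (c z x k * (c y (k + 1) a * dl K (k + 2) b - c y (k + 2) a * dl K (k + 1) b) -
      c y x k * (c z (k + 1) a * dl K (k + 2) b - c z (k + 2) a * dl K (k + 1) b))

structure Good {K : Type*} [Field K] (c : Fin 3 → Fin 3 → Fin 3 → K) : Prop where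
  symm : ∀ i j k, c i j k = c j i k
  off : ∀ x y z a b, a ≠ b → obs c x y z a b = 0
  diag : ∀ x y z a b, obs c x y z a a = obs c x y z b b

lemma obs_shift {K : Type*} [Field K] (c : Fin 3 → Fin 3 → Fin 3 → K) (x y z a b : Fin 3) :
    obs (fun i j k => c (i + 1) (j + 1) (k + 1)) x y z a b =
      obs c (x + 1) (y + 1) (z + 1) (a + 1) (b + 1) := by
  unfold obs
  conv_rhs => rw [← Equiv.sum_comp (Equiv.addRight (1 : Fin 3))]
  have hd : ∀ i j : Fin 3, dl K (i + 1) (j + 1) = dl K i j := by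
    intro i j; simp [dl]
  have h2 : ∀ k : Fin 3, k + 1 + 2 = k + 2 + 1 := by decide
  simp only [Equiv.coe_addRight, h2, hd]

lemma Good.shift {K : Type*} [Field K] {c : Fin 3 → Fin 3 → Fin 3 → K} (h : Good c) :
    Good (fun i j k => c (i + 1) (j + 1) (k + 1)) where
  symm i j k := h.symm _ _ _
  off x y z a b hab := by
    rw [obs_shift]; exact h.off _ _ _ _ _ (by simpa using hab)
  diag x y z a b := by
    rw [obs_shift, obs_shift]; exact h.diag _ _ _ _ _

lemma cert_000 {K : Type*} [Field K] [CharZero K] {c : Fin 3 → Fin 3 → Fin 3 → K}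
    (hc : Good c) : c 0 0 0 = 0 := by
  obtain ⟨hs, h1, h2⟩ := hc
  have q1 := h1 0 0 1 0 1 (by decide)
  have q2 := h1 1 2 0 0 2 (by decide)
  have q3 := h1 0 2 0 0 1 (by decide)
  have q4 := h2 1 2 0 0 2
  simp [obs, dl, Fin.sum_univ_three, hs 1 0, hs 2 0, hs 2 1] at q1 q2 q3 q4
  linear_combination (1) * q1 +
    (1) * c 0 2 0 * q2 +
    (1) * c 0 1 1 * q3 +
    (1) * c 0 0 2 * q2 +
    (1) * c 0 0 0 * q4

lemma cert_001 {K : Type*} [Field K] [CharZero K] {c : Fin 3 → Fin 3 → Fin 3 → K}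
    (hc : Good c) : c 0 0 1 = 0 := by
  obtain ⟨hs, h1, h2⟩ := hc
  have q1 := h1 0 2 0 1 2 (by decide)
  have q2 := h1 0 0 1 1 2 (by decide)
  have q3 := h1 2 0 1 0 1 (by decide)
  have q4 := h1 2 0 1 1 0 (by decide)
  simp [obs, dl, Fin.sum_univ_three, hs 1 0, hs 2 0, hs 2 1] at q1 q2 q3 q4
  linear_combination (-1) * q1 +
    (1) * c 0 2 2 * q2 +
    (1) * c 0 1 1 * q3 +
    (1) * c 0 0 0 * q4

lemma cert_002 {K : Type*} [Field K] [CharZero K] {c : Fin 3 → Fin 3 → Fin 3 → K}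
    (hc : Good c) : c 0 0 2 = 0 := by
  obtain ⟨hs, h1, h2⟩ := hc
  have q1 := h1 0 0 1 2 1 (by decide)
  have q2 := h1 1 2 0 0 2 (by decide)
  have q3 := h1 0 2 0 2 1 (by decide)
  have q4 := h1 1 2 0 2 0 (by decide)
  simp [obs, dl, Fin.sum_univ_three, hs 1 0, hs 2 0, hs 2 1] at q1 q2 q3 q4
  linear_combination (1) * q1 +
    (1) * c 0 2 2 * q2 +
    (1) * c 0 1 1 * q3 +
    (1) * c 0 0 0 * q4

lemma cert_010 {K : Type*} [Field K] [CharZero K] {c : Fin 3 → Fin 3 → Fin 3 → K}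
    (hc : Good c) : c 0 1 0 = 0 := by
  obtain ⟨hs, h1, h2⟩ := hc
  have q1 := h1 1 2 0 0 2 (by decide)
  have q2 := h1 2 0 1 0 1 (by decide)
  have q3 := h1 1 0 1 0 2 (by decide)
  have q4 := h1 2 0 1 1 0 (by decide)
  simp [obs, dl, Fin.sum_univ_three, hs 1 0, hs 2 0, hs 2 1] at q1 q2 q3 q4
  linear_combination (-1) * q1 +
    (1) * c 0 1 1 * q2 +
    (1) * c 0 2 2 * q3 +
    (1) * c 0 0 0 * q4

lemma cert_020 {K : Type*} [Field K] [CharZero K] {c : Fin 3 → Fin 3 → Fin 3 → K}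
    (hc : Good c) : c 0 2 0 = 0 := by
  obtain ⟨hs, h1, h2⟩ := hc
  have q1 := h1 0 2 0 2 1 (by decide)
  have q2 := h1 1 2 0 0 2 (by decide)
  have q3 := h1 1 2 0 2 0 (by decide)
  have q4 := h1 2 0 1 0 1 (by decide)
  simp [obs, dl, Fin.sum_univ_three, hs 1 0, hs 2 0, hs 2 1] at q1 q2 q3 q4
  linear_combination (1) * c 0 1 1 * q1 +
    (1) * c 0 2 2 * q2 +
    (1) * c 0 0 0 * q3 +
    (1) * q4

lemma cert_012 {K : Type*} [Field K] [CharZero K] {c : Fin 3 → Fin 3 → Fin 3 → K}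
    (hc : Good c) : c 0 1 2 = 0 := by
  obtain ⟨hs, h1, h2⟩ := hc
  have q1 := h1 0 1 2 0 2 (by decide)
  have q2 := h1 2 0 1 0 2 (by decide)
  have q3 := h1 0 2 0 1 2 (by decide)
  have q4 := h1 2 0 1 0 1 (by decide)
  have q5 := h1 2 0 1 2 0 (by decide)
  have q6 := h1 1 2 0 0 1 (by decide)
  have q7 := h1 0 1 2 0 1 (by decide)
  have q8 := h2 0 0 1 1 2
  have q9 := h1 1 1 2 0 1 (by decide)
  have q10 := h1 2 1 2 0 2 (by decide)
  have q11 := h1 2 2 0 1 0 (by decide)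
  have q12 := h1 1 2 0 2 0 (by decide)
  have q13 := h1 0 0 1 2 0 (by decide)
  have q14 := h1 1 0 1 2 1 (by decide)
  have q15 := h2 2 0 1 0 2
  have q16 := h2 1 2 0 1 2
  simp [obs, dl, Fin.sum_univ_three, hs 1 0, hs 2 0, hs 2 1] at q1 q2 q3 q4 q5 q6 q7 q8 q9 q10 q11 q12 q13 q14 q15 q16
  linear_combination (-1/2) * c 2 2 1 * q1 +
    (-1/2) * c 2 2 1 * q2 +
    (-1/2) * c 2 2 1 * q3 +
    (1/2) * c 1 1 2 * q4 +
    (1/2) * c 0 1 0 * q5 +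
    (-1/2) * c 1 2 1 * q6 +
    (-1/2) * c 1 2 1 * q7 +
    (-1/2) * c 1 2 2 * q8 +
    (-1/6) * q9 +
    (1/6) * q10 +
    (-1/2) * c 0 0 1 * q11 +
    (1/2) * c 0 0 1 * q12 +
    (-1/3) * q13 +
    (1/3) * q14 +
    (1/3) * q15 +
    (1/3) * q16

lemma Good.first {K : Type*} [Field K] [CharZero K] {c : Fin 3 → Fin 3 → Fin 3 → K}
    (h : Good c) : c 0 0 0 = 0 ∧ c 0 0 1 = 0 ∧ c 0 0 2 = 0 ∧ c 0 1 0 = 0 ∧ c 0 2 0 = 0 ∧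
      c 0 1 2 = 0 :=
  ⟨cert_000 h, cert_001 h, cert_002 h, cert_010 h, cert_020 h, cert_012 h⟩

lemma Good.eq_zero {K : Type*} [Field K] [CharZero K] {c : Fin 3 → Fin 3 → Fin 3 → K}
    (h : Good c) (i j k : Fin 3) : c i j k = 0 := by
  obtain ⟨a1, a2, a3, a4, a5, a6⟩ := h.first
  obtain ⟨b1, b2, b3, b4, b5, b6⟩ := h.shift.first
  obtain ⟨c1, c2, c3, c4, c5, c6⟩ := h.shift.shift.first
  simp only [Fin.reduceAdd, Fin.isValue] at *
  have s1 := h.symm 1 0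
  have s2 := h.symm 2 0
  have s3 := h.symm 2 1
  fin_cases i <;> fin_cases j <;> fin_cases k <;> simp_all

/-- Concrete model of the free nilpotent Lie algebra: degree one, two and three coordinates. -/
@[ext]
structure Mod3 (K : Type*) where
  p : Fin 3 → K
  u : Fin 3 → K
  w : Fin 3 → Fin 3 → K

namespace Mod3

variable {K : Type*} [Field K]

instance : Zero (Mod3 K) := ⟨⟨0, 0, 0⟩⟩
instance : Add (Mod3 K) := ⟨fun x y => ⟨x.p + y.p, x.u + y.u, x.w + y.w⟩⟩
instance : Neg (Mod3 K) := ⟨fun x => ⟨-x.p, -x.u, -x.w⟩⟩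
instance : SMul K (Mod3 K) := ⟨fun t x => ⟨t • x.p, t • x.u, t • x.w⟩⟩

/-- untraced degree three part of the bracket -/
def t3 (x y : Mod3 K) (a b : Fin 3) : K := x.u a * y.p b - y.u a * x.p b

instance : Bracket (Mod3 K) (Mod3 K) :=
  ⟨fun x y => ⟨0, fun k => x.p (k + 1) * y.p (k + 2) - x.p (k + 2) * y.p (k + 1),
    fun a b => t3 x y a b - if a = b then t3 x y 2 2 else 0⟩⟩

@[simp] lemma zero_p : (0 : Mod3 K).p = 0 := rfl
@[simp] lemma zero_u : (0 : Mod3 K).u = 0 := rfl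
@[simp] lemma zero_w : (0 : Mod3 K).w = 0 := rfl
@[simp] lemma add_p (x y : Mod3 K) : (x + y).p = x.p + y.p := rfl
@[simp] lemma add_u (x y : Mod3 K) : (x + y).u = x.u + y.u := rfl
@[simp] lemma add_w (x y : Mod3 K) : (x + y).w = x.w + y.w := rfl
@[simp] lemma neg_p (x : Mod3 K) : (-x).p = -x.p := rfl
@[simp] lemma neg_u (x : Mod3 K) : (-x).u = -x.u := rfl
@[simp] lemma neg_w (x : Mod3 K) : (-x).w = -x.w := rfl
@[simp] lemma smul_p (t : K) (x : Mod3 K) : (t • x).p = t • x.p := rfl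
@[simp] lemma smul_u (t : K) (x : Mod3 K) : (t • x).u = t • x.u := rfl
@[simp] lemma smul_w (t : K) (x : Mod3 K) : (t • x).w = t • x.w := rfl
@[simp] lemma lie_p (x y : Mod3 K) : (⁅x, y⁆).p = 0 := rfl
lemma lie_u (x y : Mod3 K) (k : Fin 3) :
    (⁅x, y⁆).u k = x.p (k + 1) * y.p (k + 2) - x.p (k + 2) * y.p (k + 1) := rfl
lemma lie_w (x y : Mod3 K) (a b : Fin 3) :
    (⁅x, y⁆).w a b = t3 x y a b - if a = b then t3 x y 2 2 else 0 := rfl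

instance : AddCommGroup (Mod3 K) where
  add_assoc x y z := by ext <;> simp [add_assoc]
  zero_add x := by ext <;> simp
  add_zero x := by ext <;> simp
  nsmul := nsmulRec
  zsmul := zsmulRec
  neg_add_cancel x := by ext <;> simp
  add_comm x y := by ext <;> simp [add_comm]

instance : Module K (Mod3 K) where
  one_smul x := by ext <;> simp
  mul_smul s t x := by ext <;> simp [mul_assoc]
  smul_zero t := by ext <;> simp
  smul_add t x y := by ext <;> simp [mul_add]
  add_smul s t x := by ext <;> simp [add_mul]
  zero_smul x := by ext <;> simp

instance : LieRing (Mod3 K) where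
  add_lie x y z := by
    ext <;> simp [lie_u, lie_w, t3]
    · ring
    · split_ifs <;> ring
  lie_add x y z := by
    ext <;> simp [lie_u, lie_w, t3]
    · ring
    · split_ifs <;> ring
  lie_self x := by
    ext <;> simp [lie_u, lie_w, t3]
    · ring
  leibniz_lie x y z := by
    ext a b
    · simp
    · simp [lie_u]
    · fin_cases a <;> fin_cases b <;> simp [lie_u, lie_w, t3] <;> ring

instance : LieAlgebra K (Mod3 K) where
  lie_smul t x y := by
    ext <;> simp [lie_u, lie_w, t3]
    · ring
    · split_ifs <;> ring

lemma nil (x y z t : Mod3 K) : ⁅x, ⁅y, ⁅z, t⁆⁆⁆ = 0 := by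
  ext <;> simp [lie_u, lie_w, t3]

end Mod3

section Abstract

variable {K : Type*} [Field K] {L : Type*} [LieRing L] [LieAlgebra K L]

/-- basis vectors of degree one in the model -/
def Eb (K : Type*) [Field K] (i : Fin 3) : Mod3 K := ⟨fun j => dl K i j, 0, 0⟩

lemma stepA {mul : L →ₗ[K] L →ₗ[K] L} (hm : IsCPAStructure K mul) (e : Fin 3 → L)
    (φ : L →ₗ[K] Mod3 K) (φlie : ∀ x y, φ ⁅x, y⁆ = ⁅φ x, φ y⁆) (φe : ∀ i, φ (e i) = Eb K i)
    (i j k : Fin 3) : (φ (mul (e i) (e j))).p k = 0 := by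
  obtain ⟨P, hP⟩ : ∃ P : Fin 3 → Fin 3 → Mod3 K, ∀ i j, φ (mul (e i) (e j)) = P i j :=
    ⟨_, fun _ _ => rfl⟩
  have hs : ∀ i j, P i j = P j i := fun i j => by rw [← hP, ← hP, hm.comm]
  have key : ∀ a b c d, φ (mul ⁅e a, e b⁆ ⁅e c, e d⁆) =
      ⁅⁅P c a, Eb K b⁆ + ⁅Eb K a, P c b⁆, Eb K d⁆ + ⁅Eb K c, ⁅P d a, Eb K b⁆ + ⁅Eb K a, P d b⁆⁆ := by
    intro a b c d
    rw [hm.mul_bracket, hm.comm _ (e c), hm.comm _ (e d), hm.mul_bracket, hm.mul_bracket]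
    simp only [φlie, map_add, hP, φe]
  have key2 : ∀ a b c d, ⁅⁅P c a, Eb K b⁆ + ⁅Eb K a, P c b⁆, Eb K d⁆ +
      ⁅Eb K c, ⁅P d a, Eb K b⁆ + ⁅Eb K a, P d b⁆⁆ = ⁅⁅P a c, Eb K d⁆ + ⁅Eb K c, P a d⁆, Eb K b⁆ +
      ⁅Eb K a, ⁅P b c, Eb K d⁆ + ⁅Eb K c, P b d⁆⁆ := by
    intro a b c d
    rw [← key, ← key, hm.comm]
  have k1 := fun a b => congrArg (fun m : Mod3 K => m.w a b) (key2 0 1 1 2)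
  have k2 := fun a b => congrArg (fun m : Mod3 K => m.w a b) (key2 1 2 2 0)
  have k3 := fun a b => congrArg (fun m : Mod3 K => m.w a b) (key2 2 0 0 1)
  simp only [Mod3.add_w, Mod3.lie_w, Mod3.t3, Mod3.add_u, Mod3.lie_u, Pi.add_apply,
    Eb, dl, hs 1 0, hs 2 0, hs 2 1] at k1 k2 k3
  rw [hP]
  have a1 := k1 0 1
  have a2 := k1 0 2
  have a3 := k1 1 0
  have a4 := k1 1 2
  have a5 := k1 2 0
  have a6 := k1 2 1
  have a7 := k1 0 0
  have a8 := k1 1 1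
  have b1 := k2 0 1
  have b2 := k2 0 2
  have b3 := k2 1 0
  have b4 := k2 1 2
  have b5 := k2 2 0
  have b6 := k2 2 1
  have b7 := k2 0 0
  have b8 := k2 1 1
  have c1 := k3 0 1
  have c2 := k3 0 2
  have c3 := k3 1 0
  have c4 := k3 1 2
  have c5 := k3 2 0
  have c6 := k3 2 1
  have c7 := k3 0 0
  have c8 := k3 1 1
  clear k1 k2 k3 key key2
  simp at a1 a2 a3 a4 a5 a6 a7 a8 b1 b2 b3 b4 b5 b6 b7 b8 c1 c2 c3 c4 c5 c6 c7 c8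
  have d1 : (P 1 1).p 1 = 0 := by linear_combination b4 - a8
  have d2 : (P 2 2).p 2 = 0 := by linear_combination b7 + c5
  have d3 : (P 0 0).p 0 = 0 := by linear_combination b2 - c7
  fin_cases i <;> fin_cases j <;> fin_cases k <;>
    simp [hs 1 0, hs 2 0, hs 2 1, d1, d2, d3, a1, a2, a3.symm, a4, a5.symm, a6, b1.symm, b2, b4,
      b5, b6.symm, c1, c2.symm, c3, c5]

/-- degree two basis elements -/
def Ub (e : Fin 3 → L) (k : Fin 3) : L := ⁅e (k + 1), e (k + 2)⁆

/-- general element in terms of the generators -/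
def comb (e : Fin 3 → L) (a b : Fin 3 → K) (w : Fin 3 → Fin 3 → K) : L :=
  ∑ i, a i • e i + ∑ k, b k • Ub e k + ∑ k, ∑ i, w k i • ⁅Ub e k, e i⁆

lemma comb_coord (e : Fin 3 → L)
    (φ : L →ₗ[K] Mod3 K) (φlie : ∀ x y, φ ⁅x, y⁆ = ⁅φ x, φ y⁆) (φe : ∀ i, φ (e i) = Eb K i)
    (span : ∀ x : L, ∃ a b w, x = comb (K := K) e a b w)
    (x : L) (hx : (φ x).p = 0) : ∃ w, x = comb e (0 : Fin 3 → K) (φ x).u w := by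
  obtain ⟨a, b, w, h⟩ := span x
  have h' : φ x = φ (comb e a b w) := by rw [← h]
  simp only [comb, Ub, map_add, map_smul, φlie, φe, Fin.sum_univ_three] at h'
  have ha : a = 0 := by
    rw [h'] at hx
    funext j
    have := congrFun hx j
    simp only [Mod3.add_p, Mod3.smul_p, Mod3.lie_p, smul_zero, add_zero, Eb, Pi.add_apply,
      Pi.smul_apply, smul_eq_mul] at this
    fin_cases j <;> simpa [dl] using this
  have hb : b = (φ x).u := by
    rw [h']
    funext j
    simp only [Mod3.add_u, Mod3.smul_u, Mod3.lie_p, Eb, Pi.add_apply, Mod3.lie_u,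
      Pi.smul_apply, smul_eq_mul, Pi.zero_apply, mul_zero, zero_mul, sub_zero, add_zero, zero_add]
    fin_cases j <;> simp [dl]
  refine ⟨w, ?_⟩
  rw [← ha, ← hb]
  exact h

lemma nil_left (nil : ∀ x y z t : L, ⁅x, ⁅y, ⁅z, t⁆⁆⁆ = 0) (x y z t : L) :
    ⁅⁅⁅x, y⁆, z⁆, t⁆ = 0 := by
  rw [← lie_skew, ← lie_skew ⁅x, y⁆ z, lie_neg, nil, neg_zero, neg_zero]

lemma nil_mid (nil : ∀ x y z t : L, ⁅x, ⁅y, ⁅z, t⁆⁆⁆ = 0) (x y z t : L) :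
    ⁅⁅x, y⁆, ⁅z, t⁆⁆ = 0 := by
  rw [lie_lie, nil, nil, sub_zero]

lemma main_abs [CharZero K] {mul : L →ₗ[K] L →ₗ[K] L} (hm : IsCPAStructure K mul) (e : Fin 3 → L)
    (φ : L →ₗ[K] Mod3 K) (φlie : ∀ x y, φ ⁅x, y⁆ = ⁅φ x, φ y⁆) (φe : ∀ i, φ (e i) = Eb K i)
    (nil : ∀ x y z t : L, ⁅x, ⁅y, ⁅z, t⁆⁆⁆ = 0)
    (span : ∀ x : L, ∃ a b w, x = comb (K := K) e a b w) (x y : L) :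
    mul x y ∈ LieAlgebra.center K L := by
  have hA : ∀ i j, (φ (mul (e i) (e j))).p = 0 := fun i j => by
    funext k
    exact stepA hm e φ φlie φe i j k
  have hco : ∀ i j, ∃ w, mul (e i) (e j) =
      comb e (0 : Fin 3 → K) (φ (mul (e i) (e j))).u w := fun i j =>
    comb_coord e φ φlie φe span _ (hA i j)
  have nl := nil_left nil
  have nm := nil_mid nil
  -- third layer is killed by the generators
  have q1 : ∀ (i j : Fin 3) (a b : L), ⁅⁅mul (e i) (e j), a⁆, b⁆ = 0 := by
    intro i j a b
    obtain ⟨w, hw⟩ := hco i j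
    rw [hw]
    simp only [comb, Ub, Pi.zero_apply, zero_smul, Finset.sum_const_zero, zero_add, add_lie,
      lie_add, sum_lie, lie_sum, smul_lie, lie_smul, nl, smul_zero, add_zero]
  have q1' : ∀ (i j : Fin 3) (a b : L), ⁅⁅a, mul (e i) (e j)⁆, b⁆ = 0 := by
    intro i j a b
    rw [← lie_skew a, neg_lie, q1, neg_zero]
  have q2 : ∀ i j k, ⁅Ub e k, mul (e i) (e j)⁆ = 0 := by
    intro i j k
    obtain ⟨w, hw⟩ := hco i j
    rw [hw]
    simp only [comb, Ub, Pi.zero_apply, zero_smul, Finset.sum_const_zero, zero_add, add_lie,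
      lie_add, sum_lie, lie_sum, smul_lie, lie_smul, nm, smul_zero, add_zero]
  have h3 : ∀ y k i, mul (e y) ⁅Ub e k, e i⁆ = 0 := by
    intro y k i
    rw [hm.mul_bracket, q2, add_zero, Ub, hm.mul_bracket, add_lie, q1, q1', add_zero]
  have hexp : ∀ y z x, mul (e y) (mul (e z) (e x)) =
      ∑ k, (φ (mul (e z) (e x))).u k • mul (e y) (Ub e k) := by
    intro y z x
    obtain ⟨w, hw⟩ := hco z x
    conv_lhs => rw [hw]
    simp [comb, h3]
  have hgood : Good (fun i j k => (φ (mul (e i) (e j))).u k) := by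
    have hw1 : ∀ i j z a b, (⁅φ (mul (e i) (e j)), Eb K z⁆).w a b =
        (φ (mul (e i) (e j))).u a * dl K z b -
          if a = b then (φ (mul (e i) (e j))).u 2 * dl K z 2 else 0 := by
      intro i j z a b
      simp [Mod3.lie_w, Mod3.t3, hA, Eb]
    have hw2 : ∀ i j z a b, (⁅Eb K z, φ (mul (e i) (e j))⁆).w a b =
        -((φ (mul (e i) (e j))).u a * dl K z b -
          if a = b then (φ (mul (e i) (e j))).u 2 * dl K z 2 else 0) := by
      intro i j z a b
      rw [← lie_skew, Mod3.neg_w, Pi.neg_apply, Pi.neg_apply, hw1]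
    have main : ∀ x y z a b, obs (fun i j k => (φ (mul (e i) (e j))).u k) x y z a b -
        (if a = b then obs (fun i j k => (φ (mul (e i) (e j))).u k) x y z 2 2 else 0) = 0 := by
      intro x y z a b
      have h := hm.mul_bracket (e x) (e y) (e z)
      rw [hm.comm, hm.bracket_mul, hexp, hexp] at h
      have h' := congrArg (fun m : L => (φ m).w a b) h
      simp only [Ub, hm.mul_bracket, map_add, map_smul, φlie, φe, sub_eq_add_neg,
        Fin.sum_univ_three, map_neg, Mod3.add_w, Mod3.neg_w, Mod3.smul_w, Pi.add_apply,
        Pi.neg_apply, Pi.smul_apply, smul_eq_mul, hw1, hw2] at h'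
      simp only [obs, Fin.sum_univ_three]
      split_ifs at h' ⊢ with hab <;> linear_combination -h'
    refine ⟨fun i j k => by simp only [hm.comm (e i)], ?_, ?_⟩
    · intro x y z a b hab
      simpa [hab] using main x y z a b
    · intro x y z a b
      have h1 := main x y z a a
      have h2 := main x y z b b
      simp only [if_true] at h1 h2
      linear_combination h1 - h2
  have hc0 := hgood.eq_zero
  have cm : ∀ k i, ⁅Ub e k, e i⁆ ∈ LieAlgebra.center K L := by
    intro k i
    rw [LieModule.mem_maxTrivSubmodule]
    intro t
    rw [← lie_skew, Ub, nl, neg_zero]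
  have c1 : ∀ i j, mul (e i) (e j) ∈ LieAlgebra.center K L := by
    intro i j
    obtain ⟨w, hw⟩ := hco i j
    have h0 : (φ (mul (e i) (e j))).u = 0 := funext fun k => hc0 i j k
    rw [hw, h0]
    simp only [comb, Pi.zero_apply, zero_smul, Finset.sum_const_zero, zero_add]
    exact sum_mem fun k _ => sum_mem fun i _ => Submodule.smul_mem _ _ (cm k i)
  have c2 : ∀ i y, mul (e i) y ∈ LieAlgebra.center K L := by
    intro i y
    obtain ⟨a, b, w, rfl⟩ := span y
    simp only [comb, map_add, map_sum, map_smul, h3, smul_zero, Finset.sum_const_zero, add_zero]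
    refine add_mem (sum_mem fun j _ => Submodule.smul_mem _ _ (c1 i j))
      (sum_mem fun k _ => Submodule.smul_mem _ _ ?_)
    rw [Ub, hm.mul_bracket]
    have h1 := (LieModule.mem_maxTrivSubmodule K L L _).1 (c1 i (k + 1))
    have h2 := (LieModule.mem_maxTrivSubmodule K L L _).1 (c1 i (k + 2))
    rw [← lie_skew, h1, h2, neg_zero, add_zero]
    exact zero_mem _
  have c3 : ∀ k y, mul (Ub e k) y ∈ LieAlgebra.center K L := by
    intro k y
    rw [Ub, hm.bracket_mul]
    exact sub_mem (c2 _ _) (c2 _ _)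
  have c4 : ∀ k i y, mul ⁅Ub e k, e i⁆ y ∈ LieAlgebra.center K L := by
    intro k i y
    rw [hm.bracket_mul]
    exact sub_mem (c3 _ _) (c2 _ _)
  obtain ⟨a, b, w, rfl⟩ := span x
  simp only [comb, map_add, map_sum, map_smul, LinearMap.add_apply, LinearMap.sum_apply,
    LinearMap.smul_apply]
  exact add_mem (add_mem (sum_mem fun j _ => Submodule.smul_mem _ _ (c2 _ _))
    (sum_mem fun k _ => Submodule.smul_mem _ _ (c3 _ _)))
    (sum_mem fun k _ => sum_mem fun i _ => Submodule.smul_mem _ _ (c4 _ _ _))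

lemma comb_e (e : Fin 3 → L) (i : Fin 3) : ∃ a b w, e i = comb (K := K) e a b w :=
  ⟨Pi.single i 1, 0, 0, by simp [comb, Pi.single_apply]⟩

lemma comb_U (e : Fin 3 → L) (k : Fin 3) : ∃ a b w, Ub e k = comb (K := K) e a b w :=
  ⟨0, Pi.single k 1, 0, by simp [comb, Pi.single_apply]⟩

lemma comb_m (e : Fin 3 → L) (k i : Fin 3) : ∃ a b w, ⁅Ub e k, e i⁆ = comb (K := K) e a b w :=
  ⟨0, 0, Pi.single k (Pi.single i 1), by
    rw [comb, Finset.sum_eq_single (s := Finset.univ) (f := fun k' => ∑ i', _) k]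
    · simp [Pi.single_apply]
    · intro b _ hb
      simp [hb]
    · simp⟩

/-- the submodule of combinations -/
def combSub (e : Fin 3 → L) : Submodule K L where
  carrier := {x | ∃ a b w, x = comb (K := K) e a b w}
  add_mem' := by
    rintro _ _ ⟨a, b, w, rfl⟩ ⟨a', b', w', rfl⟩
    refine ⟨a + a', b + b', w + w', ?_⟩
    simp only [comb, Pi.add_apply, add_smul, Finset.sum_add_distrib]
    abel
  zero_mem' := ⟨0, 0, 0, by simp [comb]⟩
  smul_mem' := by
    rintro t _ ⟨a, b, w, rfl⟩
    refine ⟨t • a, t • b, t • w, ?_⟩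
    simp only [comb, Pi.smul_apply, smul_add, Finset.smul_sum, smul_eq_mul, mul_smul]

/-- combinations form a Lie subalgebra -/
def combLie (e : Fin 3 → L) (nil : ∀ x y z t : L, ⁅x, ⁅y, ⁅z, t⁆⁆⁆ = 0) : LieSubalgebra K L where
  __ := combSub (K := K) e
  lie_mem' := by
    intro x y hx hy
    change ⁅x, y⁆ ∈ combSub (K := K) e
    have nl := nil_left nil
    have nm := nil_mid nil
    have U : ∀ k, Ub e k ∈ combSub (K := K) e := comb_U e
    have m : ∀ k i, ⁅Ub e k, e i⁆ ∈ combSub (K := K) e := comb_m e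
    have m' : ∀ k i, ⁅e i, Ub e k⁆ ∈ combSub (K := K) e := fun k i => by
      rw [← lie_skew]; exact neg_mem (m k i)
    have ee : ∀ i j, ⁅e i, e j⁆ ∈ combSub (K := K) e := by
      have h : ∀ i j : Fin 3, i = j ∨ (∃ k : Fin 3, i = k + 1 ∧ j = k + 2) ∨
        (∃ k : Fin 3, j = k + 1 ∧ i = k + 2) := by decide
      intro i j
      rcases h i j with rfl | ⟨k, rfl, rfl⟩ | ⟨k, rfl, rfl⟩
      · rw [lie_self]; exact zero_mem _
      · exact U k
      · rw [← lie_skew]; exact neg_mem (U k)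
    have UU : ∀ k l, ⁅Ub e k, Ub e l⁆ = 0 := fun k l => nm _ _ _ _
    have mx : ∀ k i (x : L), ⁅⁅Ub e k, e i⁆, x⁆ = 0 := fun k i x => nl _ _ _ _
    have xm : ∀ k i (x : L), ⁅x, ⁅Ub e k, e i⁆⁆ = 0 := fun k i x => by
      rw [← lie_skew, mx, neg_zero]
    have step : ∀ z : L, (∀ i, ⁅z, e i⁆ ∈ combSub (K := K) e) →
        (∀ k, ⁅z, Ub e k⁆ ∈ combSub (K := K) e) → ⁅z, y⁆ ∈ combSub (K := K) e := by
      intro z h1 h2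
      obtain ⟨a, b, w, rfl⟩ := hy
      simp only [comb, lie_add, lie_sum, lie_smul, xm, smul_zero, Finset.sum_const_zero, add_zero]
      exact add_mem (sum_mem fun i _ => Submodule.smul_mem _ _ (h1 i))
        (sum_mem fun k _ => Submodule.smul_mem _ _ (h2 k))
    obtain ⟨a, b, w, rfl⟩ := hx
    simp only [comb, add_lie, sum_lie, smul_lie, mx, smul_zero, Finset.sum_const_zero, add_zero]
    refine add_mem (sum_mem fun i _ => Submodule.smul_mem _ _ (step _ (ee i) fun k => m' k i))
        (sum_mem fun k _ => Submodule.smul_mem _ _ (step _ (m k) fun l => ?_))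
    rw [UU]; exact zero_mem _

end Abstract

lemma free_induction {K : Type*} [Field K] (T : LieSubalgebra K (FreeLieAlgebra K (Fin 3)))
    (h : ∀ i, FreeLieAlgebra.of K i ∈ T) (x : FreeLieAlgebra K (Fin 3)) : x ∈ T := by
  let g : FreeLieAlgebra K (Fin 3) →ₗ⁅K⁆ T := FreeLieAlgebra.lift K fun i => ⟨_, h i⟩
  have hg : T.incl.comp g = LieHom.id := by
    apply FreeLieAlgebra.hom_ext
    intro i
    simp [g]
  have := LieHom.congr_fun hg x
  rw [LieHom.comp_apply, LieHom.id_apply] at this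
  rw [← this]
  exact (g x).2

lemma free_lcs {K : Type*} [Field K] {L : Type*} [LieRing L] [LieAlgebra K L] (x y z t : L) :
    ⁅x, ⁅y, ⁅z, t⁆⁆⁆ ∈ LieModule.lowerCentralSeries K L L 3 := by
  simp only [LieModule.lowerCentralSeries_succ, LieModule.lowerCentralSeries_zero]
  exact LieSubmodule.lie_mem_lie (LieSubmodule.mem_top _) (LieSubmodule.lie_mem_lie
    (LieSubmodule.mem_top _) (LieSubmodule.lie_mem_lie
    (LieSubmodule.mem_top _) (LieSubmodule.mem_top _)))

lemma model_lcs (K : Type*) [Field K] :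
    LieModule.lowerCentralSeries K (Mod3 K) (Mod3 K) 3 = ⊥ := by
  have h1 : ∀ m ∈ LieModule.lowerCentralSeries K (Mod3 K) (Mod3 K) 1, m.p = 0 := by
    intro m hm
    rw [LieModule.lowerCentralSeries_succ, ← LieSubmodule.mem_toSubmodule,
      LieSubmodule.lieIdeal_oper_eq_linear_span'] at hm
    induction hm using Submodule.span_induction with
    | mem x h => obtain ⟨a, _, b, _, rfl⟩ := h; rfl
    | zero => rfl
    | add x y _ _ hx hy => simp [hx, hy]
    | smul t x _ hx => simp [hx]
  have h2 : ∀ m ∈ LieModule.lowerCentralSeries K (Mod3 K) (Mod3 K) 2, m.p = 0 ∧ m.u = 0 := by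
    intro m hm
    rw [LieModule.lowerCentralSeries_succ, ← LieSubmodule.mem_toSubmodule,
      LieSubmodule.lieIdeal_oper_eq_linear_span'] at hm
    induction hm using Submodule.span_induction with
    | mem x h =>
      obtain ⟨a, _, b, hb, rfl⟩ := h
      refine ⟨rfl, funext fun k => ?_⟩
      simp [Mod3.lie_u, h1 b hb]
    | zero => exact ⟨rfl, rfl⟩
    | add x y _ _ hx hy => simp [hx, hy]
    | smul t x _ hx => simp [hx]
  rw [LieModule.lowerCentralSeries_succ, LieSubmodule.lie_eq_bot_iff]
  intro x _ m hm
  obtain ⟨hp, hu⟩ := h2 m hm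
  ext <;> simp [Mod3.lie_u, Mod3.lie_w, Mod3.t3, hp, hu]

theorem cpa_on_F33_is_central (K : Type*) [Field K] [CharZero K]
    (mul : FreeNilpotentLieAlgebra K 3 3 →ₗ[K]
      FreeNilpotentLieAlgebra K 3 3 →ₗ[K] FreeNilpotentLieAlgebra K 3 3)
    (hcpa : IsCPAStructure K mul) :
    ∀ x y : FreeNilpotentLieAlgebra K 3 3,
      mul x y ∈ LieAlgebra.center K (FreeNilpotentLieAlgebra K 3 3) := by
  let F := FreeLieAlgebra K (Fin 3)
  let I := LieModule.lowerCentralSeries K F F 3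
  let f : F →ₗ⁅K⁆ Mod3 K := FreeLieAlgebra.lift K (Eb K)
  have hker : ∀ x ∈ I, f x = 0 := by
    intro x hx
    have h := LieIdeal.map_lowerCentralSeries_le (R := K) 3 (f := f)
    rw [model_lcs, le_bot_iff] at h
    have := LieIdeal.mem_map (f := f) hx
    rw [h] at this
    simpa using this
  let φ : (F ⧸ I) →ₗ[K] Mod3 K := Submodule.liftQ I.toSubmodule (f : F →ₗ[K] Mod3 K) hker
  let mk : F → F ⧸ I := LieSubmodule.Quotient.mk
  have surj : ∀ q : F ⧸ I, ∃ x, mk x = q := Quot.mk_surjective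
  have φmk : ∀ x, φ (mk x) = f x := fun x => rfl
  have mklie : ∀ x y, mk ⁅x, y⁆ = ⁅mk x, mk y⁆ := fun x y => rfl
  let e : Fin 3 → F ⧸ I := fun i => mk (FreeLieAlgebra.of K i)
  have φlie : ∀ x y, φ ⁅x, y⁆ = ⁅φ x, φ y⁆ := by
    intro x y
    obtain ⟨x, rfl⟩ := surj x
    obtain ⟨y, rfl⟩ := surj y
    rw [← mklie, φmk, φmk, φmk, LieHom.map_lie]
  have φe : ∀ i, φ (e i) = Eb K i := fun i => by
    rw [show φ (e i) = f (FreeLieAlgebra.of K i) from φmk _]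
    exact FreeLieAlgebra.lift_of_apply _ _
  have nil : ∀ x y z t : F ⧸ I, ⁅x, ⁅y, ⁅z, t⁆⁆⁆ = 0 := by
    intro x y z t
    obtain ⟨x, rfl⟩ := surj x
    obtain ⟨y, rfl⟩ := surj y
    obtain ⟨z, rfl⟩ := surj z
    obtain ⟨t, rfl⟩ := surj t
    rw [← mklie, ← mklie, ← mklie]
    exact LieSubmodule.Quotient.mk_eq_zero'.2 (free_lcs x y z t)
  have span : ∀ x : F ⧸ I, ∃ a b w, x = comb (K := K) e a b w := by
    let T : LieSubalgebra K F :=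
      { carrier := {x | mk x ∈ combLie (K := K) e nil}
        add_mem' := fun {x y} hx hy => (combLie (K := K) e nil).add_mem hx hy
        zero_mem' := zero_mem (combLie (K := K) e nil)
        smul_mem' := fun t x hx => (combLie (K := K) e nil).smul_mem t hx
        lie_mem' := fun {x y} hx hy => (combLie (K := K) e nil).lie_mem hx hy }
    have hT : ∀ x, x ∈ T := free_induction T fun i => comb_e e i
    intro q
    obtain ⟨x, rfl⟩ := surj q
    exact hT x
  exact main_abs hcpa e φ φlie φe nil span
end

section
/- For every integer c ≥ 3, every CPA-structure on the free-nilpotent Lie algebra F_{3,c} on 3 generators of nilpotency class c, over a field K of characteristic zero, is central, i.e., satisfies x·y ∈ Z(F_{3,c}) for all x,y. -/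
namespace CPAFree

section General
variable {K : Type*} [Field K] {g : Type*} [LieRing g] [LieAlgebra K g]

/-- `Lc K g n` is the term `g^{n+1}` of the lower central series. -/
abbrev Lc (K : Type*) [Field K] (g : Type*) [LieRing g] [LieAlgebra K g] (n : ℕ) :
    LieSubmodule K g g :=
  LieModule.lowerCentralSeries K g g n

lemma lc_anti {m n : ℕ} (h : m ≤ n) {x : g} (hx : x ∈ Lc K g n) : x ∈ Lc K g m :=
  LieModule.antitone_lowerCentralSeries K g g h hx

lemma lie_mem_lc_succ {n : ℕ} (a : g) {b : g} (hb : b ∈ Lc K g n) : ⁅a, b⁆ ∈ Lc K g (n + 1) := by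
  rw [Lc, LieModule.lowerCentralSeries_succ]
  exact LieSubmodule.lie_mem_lie (LieSubmodule.mem_top a) hb

lemma lie_mem_lc_one (a b : g) : ⁅a, b⁆ ∈ Lc K g 1 :=
  lie_mem_lc_succ a (n := 0) (by simp [Lc])

/-- Induction principle for the terms of the lower central series. -/
lemma lc_succ_induction {n : ℕ} (S : Submodule K g)
    (h : ∀ a b : g, b ∈ Lc K g n → ⁅a, b⁆ ∈ S) {x : g} (hx : x ∈ Lc K g (n + 1)) : x ∈ S := by
  rw [Lc, LieModule.lowerCentralSeries_succ, ← LieSubmodule.mem_toSubmodule,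
    LieSubmodule.lieIdeal_oper_eq_linear_span'] at hx
  refine (Submodule.span_le.2 ?_) hx
  rintro _ ⟨a, -, b, hb, rfl⟩
  exact h a b hb

lemma lie_mem_lc (i j : ℕ) {x y : g} (hx : x ∈ Lc K g i) (hy : y ∈ Lc K g j) :
    ⁅x, y⁆ ∈ Lc K g (i + j + 1) := by
  induction i generalizing j x y with
  | zero => simpa using lie_mem_lc_succ x hy
  | succ i ih =>
    let S : Submodule K g :=
      { carrier := {x | ∀ y ∈ Lc K g j, ⁅x, y⁆ ∈ Lc K g (i + 1 + j + 1)}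
        add_mem' := fun {a b} ha hb y hy => by
          rw [add_lie]; exact add_mem (ha y hy) (hb y hy)
        zero_mem' := fun y _ => by rw [zero_lie]; exact zero_mem _
        smul_mem' := fun r a ha y hy => by
          rw [smul_lie]; exact (Lc K g _).smul_mem r (ha y hy) }
    refine lc_succ_induction S (fun a b hb => ?_) hx y hy
    intro y hy
    rw [lie_lie]
    refine sub_mem ?_ ?_
    · have := lie_mem_lc_succ a (ih j hb hy)
      exact lc_anti (by omega) this
    · have := ih (j + 1) hb (lie_mem_lc_succ a hy)
      exact lc_anti (by omega) this

/-- A derivation mapping a generating set into `g^{n+1}` raises the filtration degree by `n`. -/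
lemma deriv_mem {ι : Type*} (e : ι → g)
    (gen : ∀ S : LieSubalgebra K g, (∀ i, e i ∈ S) → ∀ x, x ∈ S)
    (D : g →ₗ[K] g) (hD : ∀ a b, D ⁅a, b⁆ = ⁅D a, b⁆ + ⁅a, D b⁆) (n : ℕ)
    (he : ∀ i, D (e i) ∈ Lc K g n) (x : g) : D x ∈ Lc K g n := by
  let S : LieSubalgebra K g :=
    { (Lc K g n).toSubmodule.comap D with
      lie_mem' := fun {a b} ha hb => by
        change D ⁅a, b⁆ ∈ Lc K g n
        rw [hD]
        refine add_mem ?_ ?_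
        · rw [← lie_skew]
          exact neg_mem (lc_anti (Nat.le_succ n) (lie_mem_lc_succ b ha))
        · exact lc_anti (Nat.le_succ n) (lie_mem_lc_succ a hb) }
  exact gen S he x

lemma deriv_mem_lc (D : g →ₗ[K] g) (hD : ∀ a b, D ⁅a, b⁆ = ⁅D a, b⁆ + ⁅a, D b⁆) (n : ℕ)
    (h : ∀ x, D x ∈ Lc K g n) (j : ℕ) {x : g} (hx : x ∈ Lc K g j) : D x ∈ Lc K g (j + n) := by
  induction j generalizing x with
  | zero => simpa using h x
  | succ j ih =>
    refine lc_succ_induction ((Lc K g (j + 1 + n)).toSubmodule.comap D) (fun a b hb => ?_) hx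
    change D ⁅a, b⁆ ∈ Lc K g (j + 1 + n)
    rw [hD]
    refine add_mem ?_ ?_
    · exact lc_anti (by omega) (lie_mem_lc n j (h a) hb)
    · exact lc_anti (by omega) (lie_mem_lc_succ a (ih hb))

end General
end CPAFree

namespace CPAFree

section Free
variable (K : Type*) [Field K]

/-- The free associative algebra on three letters. -/
abbrev FA := MonoidAlgebra K (FreeMonoid (Fin 3))

/-- The free Lie algebra on three letters. -/
abbrev FL := FreeLieAlgebra K (Fin 3)

attribute [local instance] LieRing.ofAssociativeRing

/-- The canonical map from the free Lie algebra to the free associative algebra. -/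
noncomputable def emb : FL K →ₗ⁅K⁆ FA K :=
  FreeLieAlgebra.lift K (fun i => MonoidAlgebra.single (FreeMonoid.of i) (1 : K))

/-- Coefficient of a word. -/
noncomputable def cf (a : FA K) (w : List (Fin 3)) : K := a.coeff (FreeMonoid.ofList w)

variable {K}

lemma cf_add (a b : FA K) (w : List (Fin 3)) : cf K (a + b) w = cf K a w + cf K b w := rfl
lemma cf_sub (a b : FA K) (w : List (Fin 3)) : cf K (a - b) w = cf K a w - cf K b w := rfl
lemma cf_smul (r : K) (a : FA K) (w : List (Fin 3)) : cf K (r • a) w = r * cf K a w := rfl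
lemma cf_zero (w : List (Fin 3)) : cf K 0 w = 0 := rfl

lemma cf_mul (a b : FA K) (w : List (Fin 3)) :
    cf K (a * b) w = ∑ i ∈ Finset.range (w.length + 1),
      cf K a (w.take i) * cf K b (w.drop i) := by
  classical
  unfold cf
  rw [MonoidAlgebra.coeff_mul_antidiag a b (FreeMonoid.ofList w)
    ((Finset.range (w.length + 1)).image
      (fun i => (FreeMonoid.ofList (w.take i), FreeMonoid.ofList (w.drop i))))]
  · rw [Finset.sum_image]
    intro i hi j hj hij
    simp only [Finset.coe_range, Set.mem_Iio] at hi hj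
    have h1 : w.take i = w.take j := FreeMonoid.ofList.injective (Prod.mk.inj hij).1
    have h2 := congrArg List.length h1
    simp only [List.length_take] at h2
    omega
  · rintro ⟨p, q⟩
    simp only [Finset.mem_image, Finset.mem_range, Prod.mk.injEq]
    constructor
    · rintro ⟨i, -, rfl, rfl⟩
      rw [← FreeMonoid.ofList_append, List.take_append_drop]
    · intro h
      have h' : p.toList ++ q.toList = w := by
        have := congrArg FreeMonoid.toList h
        simpa using this
      refine ⟨p.toList.length, ?_, ?_, ?_⟩
      · rw [← h']; simp
      · rw [← h']; simp
      · rw [← h']; simp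

lemma free_gen (S : LieSubalgebra K (FL K)) (h : ∀ i, FreeLieAlgebra.of K i ∈ S) (x : FL K) :
    x ∈ S := by
  let f : FL K →ₗ⁅K⁆ S := FreeLieAlgebra.lift K (fun i => ⟨FreeLieAlgebra.of K i, h i⟩)
  have hf : S.incl.comp f = LieHom.id := by
    ext i
    simp [f]
  have : S.incl (f x) = x := by
    have := congrArg (fun F : FL K →ₗ⁅K⁆ FL K => F x) hf
    simpa using this
  rw [← this]
  exact (f x).2

lemma emb_of (i : Fin 3) :
    emb K (FreeLieAlgebra.of K i) = MonoidAlgebra.single (FreeMonoid.of i) (1 : K) := by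
  simp [emb]

lemma emb_lie (a b : FL K) : emb K ⁅a, b⁆ = emb K a * emb K b - emb K b * emb K a := by
  rw [LieHom.map_lie]; rfl

lemma cf_emb_of (i : Fin 3) (w : List (Fin 3)) :
    cf K (emb K (FreeLieAlgebra.of K i)) w = if w = [i] then 1 else 0 := by
  classical
  rw [emb_of, cf, MonoidAlgebra.coeff_single, Finsupp.single_apply]
  congr 1
  apply propext
  constructor
  · intro h
    have := congrArg FreeMonoid.toList h
    simpa using this.symm
  · rintro rfl; rfl

lemma cf_emb_nil (x : FL K) : cf K (emb K x) [] = 0 := by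
  let S : LieSubalgebra K (FL K) :=
    { carrier := {x | cf K (emb K x) [] = 0}
      add_mem' := fun {a b} ha hb => by
        simp only [Set.mem_ofPred_eq] at *; rw [map_add, cf_add, ha, hb, add_zero]
      zero_mem' := by simp [cf_zero]
      smul_mem' := fun r a ha => by
        simp only [Set.mem_ofPred_eq] at *; rw [map_smul, cf_smul, ha, mul_zero]
      lie_mem' := fun {a b} ha hb => by
        simp only [Set.mem_ofPred_eq] at *

        have ha' : cf K (emb K a) [] = 0 := ha
        rw [emb_lie, cf_sub, cf_mul, cf_mul]
        simp [ha'] }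
  exact free_gen S (fun i => by change cf K _ _ = 0; simp [cf_emb_of]) x

lemma cf_emb_lie (a b : FL K) (w : List (Fin 3)) :
    cf K (emb K ⁅a, b⁆) w = ∑ i ∈ Finset.range (w.length + 1),
      (cf K (emb K a) (w.take i) * cf K (emb K b) (w.drop i) -
        cf K (emb K b) (w.take i) * cf K (emb K a) (w.drop i)) := by
  rw [emb_lie, cf_sub, cf_mul, cf_mul, Finset.sum_sub_distrib]

/-- Elements of `L^{n+1}` have no terms of degree at most `n`. -/
lemma cf_emb_of_mem_lc (n : ℕ) (x : FL K) (hx : x ∈ Lc K (FL K) n) (w : List (Fin 3))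
    (hw : w.length ≤ n) : cf K (emb K x) w = 0 := by
  induction n generalizing x w with
  | zero =>
    have : w = [] := by simpa using hw
    rw [this]; exact cf_emb_nil x
  | succ n ih =>
    let S : Submodule K (FL K) :=
      { carrier := {x | cf K (emb K x) w = 0}
        add_mem' := fun {a b} ha hb => by
          simp only [Set.mem_ofPred_eq] at *; rw [map_add, cf_add, ha, hb, add_zero]
        zero_mem' := by simp [cf_zero]
        smul_mem' := fun r a ha => by
          simp only [Set.mem_ofPred_eq] at *; rw [map_smul, cf_smul, ha, mul_zero] }
    refine lc_succ_induction S (fun a b hb => ?_) hx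
    change cf K (emb K ⁅a, b⁆) w = 0
    rw [cf_emb_lie]
    refine Finset.sum_eq_zero fun i hi => ?_
    rw [Finset.mem_range] at hi
    have h1 : cf K (emb K a) (w.take i) * cf K (emb K b) (w.drop i) = 0 := by
      rcases Nat.eq_zero_or_pos i with rfl | hpos
      · rw [List.take_zero, cf_emb_nil, zero_mul]
      · rw [ih b hb (w.drop i) (by rw [List.length_drop]; omega), mul_zero]
    have h2 : cf K (emb K b) (w.take i) * cf K (emb K a) (w.drop i) = 0 := by
      rcases Nat.lt_or_ge i w.length with hlt | hge
      · rw [ih b hb (w.take i) (by rw [List.length_take]; omega), zero_mul]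
      · rw [List.drop_of_length_le hge, cf_emb_nil, mul_zero]
    rw [h1, h2, sub_zero]

/-- The right-normed bracketing of a word. -/
noncomputable def dynW (K : Type*) [Field K] : List (Fin 3) → FL K
  | [] => 0
  | [i] => FreeLieAlgebra.of K i
  | i :: j :: w => ⁅FreeLieAlgebra.of K i, dynW K (j :: w)⁆

/-- The (unnormalised) Dynkin map from the free associative algebra to the free Lie algebra. -/
noncomputable def dyn (K : Type*) [Field K] (a : FA K) : FL K :=
  a.coeff.sum (fun w r => r • dynW K w.toList)

lemma dyn_add (a b : FA K) : dyn K (a + b) = dyn K a + dyn K b := by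
  unfold dyn
  rw [MonoidAlgebra.coeff_add, Finsupp.sum_add_index']
  · intro; simp
  · intros; rw [add_smul]

lemma dyn_smul (r : K) (a : FA K) : dyn K (r • a) = r • dyn K a := by
  unfold dyn
  rw [MonoidAlgebra.coeff_smul, Finsupp.sum_smul_index', Finsupp.smul_sum]
  · simp [mul_smul]
  · intro; simp

lemma dyn_neg (a : FA K) : dyn K (-a) = - dyn K a := by
  have := dyn_smul (-1 : K) a
  simpa using this

lemma dyn_sub (a b : FA K) : dyn K (a - b) = dyn K a - dyn K b := by
  rw [sub_eq_add_neg, dyn_add, dyn_neg, ← sub_eq_add_neg]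

lemma dyn_zero : dyn K (0 : FA K) = 0 := by simp [dyn]

lemma dyn_single (w : FreeMonoid (Fin 3)) (r : K) :
    dyn K (MonoidAlgebra.single w r) = r • dynW K w.toList := by
  unfold dyn
  rw [MonoidAlgebra.coeff_single, Finsupp.sum_single_index]
  simp

lemma dyn_of_mul (i : Fin 3) (a : FA K) :
    dyn K (MonoidAlgebra.single (FreeMonoid.of i) (1 : K) * a) =
      ⁅FreeLieAlgebra.of K i, dyn K a⁆ + cf K a [] • FreeLieAlgebra.of K i := by
  induction a using MonoidAlgebra.induction_linear with
  | zero => simp [dyn_zero, cf_zero]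
  | add a b ha hb => rw [mul_add, dyn_add, dyn_add, ha, hb, cf_add, lie_add, add_smul]; abel
  | single w r =>
    rw [MonoidAlgebra.single_mul_single, dyn_single, dyn_single, one_mul, lie_smul]
    classical
    rw [cf, MonoidAlgebra.coeff_single, Finsupp.single_apply]
    have h1 : (FreeMonoid.of i * w).toList = i :: w.toList := by simp
    rw [h1]
    rcases hw : w.toList with _ | ⟨j, v⟩
    · have : w = FreeMonoid.ofList [] := by rw [← hw]; rfl
      simp [this, dynW]
    · have : ¬ (w = FreeMonoid.ofList []) := by
        intro h; rw [h] at hw; simp at hw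
      rw [if_neg this]
      simp [dynW]

lemma dyn_emb_mul (x : FL K) (a : FA K) (ha : cf K a [] = 0) :
    dyn K (emb K x * a) = ⁅x, dyn K a⁆ := by
  let S : LieSubalgebra K (FL K) :=
    { carrier := {x | ∀ a : FA K, cf K a [] = 0 → dyn K (emb K x * a) = ⁅x, dyn K a⁆}
      add_mem' := fun {x y} hx hy a ha => by
        rw [map_add, add_mul, dyn_add, hx a ha, hy a ha, add_lie]
      zero_mem' := fun a ha => by simp [dyn_zero]
      smul_mem' := fun r x hx a ha => by
        rw [map_smul, smul_mul_assoc, dyn_smul, hx a ha, smul_lie]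
      lie_mem' := fun {x y} hx hy a ha => by
        have h0 : ∀ z : FL K, cf K (emb K z * a) [] = 0 := fun z => by
          rw [cf_mul]; simp [ha]
        rw [emb_lie, sub_mul, dyn_sub, mul_assoc, mul_assoc, hx _ (h0 y), hy _ (h0 x), hx a ha,
          hy a ha, lie_lie] }
  refine free_gen S (fun i a ha => ?_) x a ha
  rw [emb_of, dyn_of_mul, ha, zero_smul, add_zero]

/-- The composite of the embedding with the Dynkin map is a derivation. -/
lemma dyn_emb_lie (x y : FL K) :
    dyn K (emb K ⁅x, y⁆) = ⁅x, dyn K (emb K y)⁆ - ⁅y, dyn K (emb K x)⁆ := by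
  rw [emb_lie, dyn_sub, dyn_emb_mul _ _ (cf_emb_nil y), dyn_emb_mul _ _ (cf_emb_nil x)]

lemma dyn_emb_of (i : Fin 3) :
    dyn K (emb K (FreeLieAlgebra.of K i)) = FreeLieAlgebra.of K i := by
  rw [emb_of, dyn_single]; simp [dynW]

lemma dyn_emb_sub_mem_one (x : FL K) : dyn K (emb K x) - x ∈ Lc K (FL K) 1 := by
  let S : LieSubalgebra K (FL K) :=
    { carrier := {x | dyn K (emb K x) - x ∈ Lc K (FL K) 1}
      add_mem' := fun {x y} hx hy => by
        simp only [Set.mem_ofPred_eq] at *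
        have : dyn K (emb K (x + y)) - (x + y) =
          (dyn K (emb K x) - x) + (dyn K (emb K y) - y) := by
          rw [map_add, dyn_add]; abel
        rw [this]; exact add_mem hx hy
      zero_mem' := by simp [dyn_zero]
      smul_mem' := fun r x hx => by
        simp only [Set.mem_ofPred_eq] at *
        rw [map_smul, dyn_smul, ← smul_sub]
        exact (Lc K (FL K) 1).smul_mem r hx
      lie_mem' := fun {x y} hx hy => by
        change dyn K (emb K ⁅x, y⁆) - ⁅x, y⁆ ∈ Lc K (FL K) 1
        rw [dyn_emb_lie]
        exact sub_mem (sub_mem (lie_mem_lc_one _ _) (lie_mem_lc_one _ _)) (lie_mem_lc_one _ _) }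
  refine free_gen S (fun i => ?_) x
  change _ - _ ∈ Lc K (FL K) 1
  rw [dyn_emb_of, sub_self]; exact zero_mem _

lemma dyn_emb_sub_mem (n : ℕ) (x : FL K) (hx : x ∈ Lc K (FL K) n) :
    dyn K (emb K x) - ((n : K) + 1) • x ∈ Lc K (FL K) (n + 1) := by
  induction n generalizing x with
  | zero => simpa using dyn_emb_sub_mem_one x
  | succ n ih =>
    let S : Submodule K (FL K) :=
      { carrier := {x | dyn K (emb K x) - (((n + 1 : ℕ) : K) + 1) • x ∈ Lc K (FL K) (n + 1 + 1)}
        add_mem' := fun {x y} hx hy => by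
          simp only [Set.mem_ofPred_eq] at *
          rw [map_add, dyn_add, smul_add, add_sub_add_comm]
          exact add_mem hx hy
        zero_mem' := by simp [dyn_zero]
        smul_mem' := fun r x hx => by
          simp only [Set.mem_ofPred_eq] at *
          rw [map_smul, dyn_smul, smul_comm, ← smul_sub]
          exact (Lc K (FL K) _).smul_mem r hx }
    refine lc_succ_induction S (fun a b hb => ?_) hx
    change dyn K (emb K ⁅a, b⁆) - (((n + 1 : ℕ) : K) + 1) • ⁅a, b⁆ ∈ Lc K (FL K) (n + 1 + 1)
    have key : dyn K (emb K ⁅a, b⁆) - (((n + 1 : ℕ) : K) + 1) • ⁅a, b⁆ =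
        ⁅a, dyn K (emb K b) - ((n : K) + 1) • b⁆ + ⁅dyn K (emb K a) - a, b⁆ := by
      rw [dyn_emb_lie, lie_sub, sub_lie, lie_smul, ← lie_skew b (dyn K (emb K a))]
      push_cast
      module
    rw [key]
    refine add_mem (lie_mem_lc_succ a (ih b hb)) ?_
    exact lc_anti (by omega) (lie_mem_lc 1 n (dyn_emb_sub_mem_one a) hb)

lemma dynW_mem (w : List (Fin 3)) (n : ℕ) (h : n + 1 ≤ w.length) : dynW K w ∈ Lc K (FL K) n := by
  induction n generalizing w with
  | zero => simp [Lc]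
  | succ n ih =>
    match w, h with
    | i :: j :: v, h =>
      rw [dynW]
      exact lie_mem_lc_succ _ (ih (j :: v) (by simpa using h))

lemma dyn_mem (n : ℕ) (a : FA K) (h : ∀ w : List (Fin 3), w.length ≤ n → cf K a w = 0) :
    dyn K a ∈ Lc K (FL K) n := by
  unfold dyn Finsupp.sum
  refine sum_mem fun w hw => ?_
  refine (Lc K (FL K) n).smul_mem _ (dynW_mem _ _ ?_)
  by_contra hlt
  have := h w.toList (by omega)
  rw [Finsupp.mem_support_iff] at hw
  exact hw this

variable [CharZero K]

/-- In characteristic zero an element of the free Lie algebra without terms of degree at most `n`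
lies in `L^{n+1}`. -/
lemma mem_lc_of_cf (n : ℕ) (x : FL K)
    (h : ∀ w : List (Fin 3), w.length ≤ n → cf K (emb K x) w = 0) : x ∈ Lc K (FL K) n := by
  have hd := dyn_mem n _ h
  have : ∀ k ≤ n, x ∈ Lc K (FL K) k := by
    intro k
    induction k with
    | zero => intro _; simp [Lc]
    | succ k ih =>
      intro hk
      have h1 := dyn_emb_sub_mem k x (ih (by omega))
      have h2 := sub_mem (lc_anti hk hd) h1
      rw [sub_sub_cancel] at h2
      have h3 := (Lc K (FL K) (k + 1)).smul_mem ((k : K) + 1)⁻¹ h2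
      rwa [smul_smul, inv_mul_cancel₀ (by exact_mod_cast Nat.succ_ne_zero k), one_smul] at h3
  exact this n le_rfl

end Free
end CPAFree

namespace CPAFree

/-- The properties of the word coefficients on the free-nilpotent Lie algebra of class `c` on three
generators that are used in the proof. -/
structure Model (K : Type*) [Field K] (g : Type*) [LieRing g] [LieAlgebra K g] (c : ℕ) where
  co : g →ₗ[K] (List (Fin 3) → K)
  e : Fin 3 → g
  gen : ∀ S : LieSubalgebra K g, (∀ i, e i ∈ S) → ∀ x, x ∈ S
  co_lie : ∀ (x y : g) (w : List (Fin 3)), w.length ≤ c →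
    co ⁅x, y⁆ w = ∑ i ∈ Finset.range (w.length + 1),
      (co x (w.take i) * co y (w.drop i) - co y (w.take i) * co x (w.drop i))
  co_e : ∀ (i : Fin 3) (w : List (Fin 3)), w.length ≤ c → co (e i) w = if w = [i] then 1 else 0
  co_nil : ∀ x, co x [] = 0
  mem_lc : ∀ n ≤ c, ∀ x, (∀ w : List (Fin 3), w.length ≤ n → co x w = 0) → x ∈ Lc K g n
  of_mem_lc : ∀ n ≤ c, ∀ x ∈ Lc K g n, ∀ w : List (Fin 3), w.length ≤ n → co x w = 0
  lc_bot : ∀ x ∈ Lc K g c, x = 0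

section Quot
variable (K : Type*) [Field K]

/-- Truncated coefficients on the free Lie algebra. -/
noncomputable def trc (c : ℕ) : FL K →ₗ[K] (List (Fin 3) → K) where
  toFun x := fun w => if w.length ≤ c then cf K (emb K x) w else 0
  map_add' x y := by
    funext w
    by_cases h : w.length ≤ c
    · simp [h, cf_add]
    · simp [h]
  map_smul' r x := by
    funext w
    by_cases h : w.length ≤ c
    · simp [h, cf_smul]
    · simp [h]

lemma trc_apply (c : ℕ) (x : FL K) (w : List (Fin 3)) (h : w.length ≤ c) :
    trc K c x w = cf K (emb K x) w := by
  simp [trc, h]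

/-- Truncated coefficients on the free-nilpotent Lie algebra. -/
noncomputable def coF (c : ℕ) : FreeNilpotentLieAlgebra K 3 c →ₗ[K] (List (Fin 3) → K) :=
  Submodule.liftQ (Lc K (FL K) c).toSubmodule (trc K c) (by
    intro x hx
    rw [LinearMap.mem_ker]
    funext w
    by_cases h : w.length ≤ c
    · rw [trc_apply K c x w h]
      exact cf_emb_of_mem_lc c x hx w h
    · simp [trc, h])

/-- The quotient map. -/
noncomputable def mkF (c : ℕ) : FL K →ₗ⁅K⁆ FreeNilpotentLieAlgebra K 3 c :=
  { (Lc K (FL K) c).toSubmodule.mkQ with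
    map_lie' := fun {x y} => LieSubmodule.Quotient.mk_bracket (I := Lc K (FL K) c) x y }

lemma mkF_surj (c : ℕ) : Function.Surjective (mkF K c) :=
  Submodule.mkQ_surjective (Lc K (FL K) c).toSubmodule

lemma mkF_eq_zero (c : ℕ) (x : FL K) (hx : x ∈ Lc K (FL K) c) : mkF K c x = 0 :=
  (Submodule.Quotient.mk_eq_zero (Lc K (FL K) c).toSubmodule).2 hx

lemma coF_mk (c : ℕ) (x : FL K) (w : List (Fin 3)) (h : w.length ≤ c) :
    coF K c (mkF K c x) w = cf K (emb K x) w := by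
  rw [← trc_apply K c x w h]
  rfl

lemma mkF_mem (c n : ℕ) (x : FL K) (hx : x ∈ Lc K (FL K) n) :
    mkF K c x ∈ Lc K (FreeNilpotentLieAlgebra K 3 c) n :=
  LieIdeal.map_lowerCentralSeries_le n (f := mkF K c) (LieIdeal.mem_map hx)

lemma exists_mkF (c n : ℕ) (x : FreeNilpotentLieAlgebra K 3 c)
    (hx : x ∈ Lc K (FreeNilpotentLieAlgebra K 3 c) n) :
    ∃ y ∈ Lc K (FL K) n, mkF K c y = x := by
  rw [Lc, ← LieIdeal.lowerCentralSeries_map_eq n (mkF_surj K c)] at hx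
  obtain ⟨y, hy⟩ := LieIdeal.mem_map_of_surjective (mkF_surj K c) hx
  exact ⟨y.1, y.2, hy⟩

/-- The free-nilpotent Lie algebra on three generators has the required word coefficients. -/
noncomputable def model [CharZero K] (c : ℕ) : Model K (FreeNilpotentLieAlgebra K 3 c) c where
  co := coF K c
  e i := mkF K c (FreeLieAlgebra.of K i)
  gen S h x := by
    obtain ⟨y, rfl⟩ := mkF_surj K c x
    exact free_gen (S.comap (mkF K c)) h y
  co_lie x y w hw := by
    obtain ⟨x, rfl⟩ := mkF_surj K c x
    obtain ⟨y, rfl⟩ := mkF_surj K c y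
    rw [← LieHom.map_lie, coF_mk K c _ w hw, cf_emb_lie]
    refine Finset.sum_congr rfl fun i _ => ?_
    have h1 : (w.take i).length ≤ c := by rw [List.length_take]; omega
    have h2 : (w.drop i).length ≤ c := by rw [List.length_drop]; omega
    rw [coF_mk K c _ _ h1, coF_mk K c _ _ h1, coF_mk K c _ _ h2, coF_mk K c _ _ h2]
  co_e i w hw := by rw [coF_mk K c _ w hw, cf_emb_of]
  co_nil x := by
    obtain ⟨x, rfl⟩ := mkF_surj K c x
    rw [coF_mk K c _ _ (by simp), cf_emb_nil]
  mem_lc n hn x h := by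
    obtain ⟨x, rfl⟩ := mkF_surj K c x
    refine mkF_mem K c n x (mem_lc_of_cf n x fun w hw => ?_)
    rw [← coF_mk K c _ w (by omega)]
    exact h w hw
  of_mem_lc n hn x hx w hw := by
    obtain ⟨y, hy, rfl⟩ := exists_mkF K c n x hx
    rw [coF_mk K c _ w (by omega)]
    exact cf_emb_of_mem_lc n y hy w hw
  lc_bot x hx := by
    obtain ⟨y, hy, rfl⟩ := exists_mkF K c c x hx
    exact mkF_eq_zero K c y hy

end Quot
end CPAFree

namespace CPAFree

section Algebra
variable {K : Type*} [Field K]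

/-- Kronecker delta. -/
def dl (K : Type*) [Field K] (i j : Fin 3) : K := if i = j then 1 else 0

lemma E00 : dl K 0 0 = 1 := by simp [dl]
lemma E01 : dl K 0 1 = 0 := by simp [dl]
lemma E02 : dl K 0 2 = 0 := by simp [dl]
lemma E10 : dl K 1 0 = 0 := by simp [dl]
lemma E11 : dl K 1 1 = 1 := by simp [dl]
lemma E12 : dl K 1 2 = 0 := by simp [dl]
lemma E20 : dl K 2 0 = 0 := by simp [dl]
lemma E21 : dl K 2 1 = 0 := by simp [dl]
lemma E22 : dl K 2 2 = 1 := by simp [dl]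

/-- The coefficient of the word `abc` in `[[p, q], r]`, in terms of the linear parts. -/
def T3 (p q r : Fin 3 → K) (a b c : Fin 3) : K :=
  (p a * q b - q a * p b) * r c - r a * (p b * q c - q b * p c)

/-- The coefficient of the word `abc` in `[m, e_t]`, in terms of the quadratic part of `m`. -/
def Br (m : Fin 3 → Fin 3 → K) (t a b c : Fin 3) : K :=
  m a b * dl K t c - dl K t a * m b c

lemma fin3_cases (P : Fin 3 → Prop) (h0 : P 0) (h1 : P 1) (h2 : P 2) (i : Fin 3) : P i := by
  fin_cases i <;> assumption

lemma step_one_algebra (f : Fin 3 → Fin 3 → Fin 3 → K) (hs : ∀ i j, f i j = f j i)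
    (H : ∀ x y u v a b c : Fin 3,
      T3 (f u x) (dl K y) (dl K v) a b c + T3 (dl K x) (f u y) (dl K v) a b c
        - T3 (f v x) (dl K y) (dl K u) a b c - T3 (dl K x) (f v y) (dl K u) a b c =
      T3 (f x u) (dl K v) (dl K y) a b c + T3 (dl K u) (f x v) (dl K y) a b c
        - T3 (f y u) (dl K v) (dl K x) a b c - T3 (dl K u) (f y v) (dl K x) a b c)
    (i j k : Fin 3) : f i j k = 0 := by
  have s10 := hs 1 0
  have s20 := hs 2 0
  have s21 := hs 2 1
  have h0 := H 0 1 0 2 0 0 1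
  have h1 := H 0 1 0 2 0 0 2
  have h2 := H 0 1 0 2 0 1 1
  have h3 := H 0 1 0 2 0 1 2
  have h4 := H 0 1 0 2 0 2 2
  have h5 := H 0 1 0 2 1 1 2
  have h6 := H 0 1 0 2 1 2 2
  have h7 := H 0 1 1 2 0 0 1
  have h8 := H 0 1 1 2 0 0 2
  have h9 := H 0 1 1 2 0 1 1
  have h10 := H 0 1 1 2 0 2 1
  have h11 := H 0 1 1 2 0 2 2
  have h12 := H 0 1 1 2 1 1 2
  have h13 := H 0 2 1 2 0 0 1
  have h14 := H 0 2 1 2 0 1 1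
  have h15 := H 0 2 1 2 0 1 2
  have h16 := H 0 2 1 2 0 2 2
  have h17 := H 0 2 1 2 1 2 2
  simp only [T3, s10, s20, s21, E00, E01, E02, E10, E11, E12, E20, E21, E22] at h0 h1 h2 h3 h4 h5 h6 h7 h8 h9 h10 h11 h12 h13 h14 h15 h16 h17
  have v0 : f 0 0 0 = 0 := by
    linear_combination (1) * h3 +
      (-1) * h17
  have v1 : f 0 0 1 = 0 := by
    linear_combination (1) * h5
  have v2 : f 0 0 2 = 0 := by
    linear_combination (-1) * h6
  have v3 : f 0 1 0 = 0 := by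
    linear_combination (-1) * h1
  have v4 : f 0 1 1 = 0 := by
    linear_combination (1) * h12
  have v5 : f 0 1 2 = 0 := by
    linear_combination (1) * h4
  have v6 : f 0 2 0 = 0 := by
    linear_combination (1) * h0
  have v7 : f 0 2 1 = 0 := by
    linear_combination (-1) * h2
  have v8 : f 0 2 2 = 0 := by
    linear_combination (-1) * h17
  have v9 : f 1 1 0 = 0 := by
    linear_combination (-1) * h8
  have v10 : f 1 1 1 = 0 := by
    linear_combination (1) * h10 +
      (-1) * h1
  have v11 : f 1 1 2 = 0 := by
    linear_combination (1) * h11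
  have v12 : f 1 2 0 = 0 := by
    linear_combination (1) * h7
  have v13 : f 1 2 1 = 0 := by
    linear_combination (-1) * h9
  have v14 : f 1 2 2 = 0 := by
    linear_combination (1) * h16
  have v15 : f 2 2 0 = 0 := by
    linear_combination (1) * h13
  have v16 : f 2 2 1 = 0 := by
    linear_combination (-1) * h14
  have v17 : f 2 2 2 = 0 := by
    linear_combination (-1) * h15 +
      (1) * h0
  revert i j k
  refine fin3_cases _ ?_ ?_ ?_ <;> refine fin3_cases _ ?_ ?_ ?_ <;>
    refine fin3_cases _ ?_ ?_ ?_ <;> (try simp only [s10, s20, s21]) <;> assumption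

lemma step_two_algebra [CharZero K] (q : Fin 3 → Fin 3 → Fin 3 → Fin 3 → K)
    (hs : ∀ i j, q i j = q j i) (ha : ∀ i j a b, q i j a b = - q i j b a)
    (H : ∀ x y z a b c : Fin 3,
      Br (q z x) y a b c - Br (q z y) x a b c =
        (q y z 0 1 * (Br (q x 0) 1 a b c - Br (q x 1) 0 a b c)
          + q y z 0 2 * (Br (q x 0) 2 a b c - Br (q x 2) 0 a b c)
          + q y z 1 2 * (Br (q x 1) 2 a b c - Br (q x 2) 1 a b c))
        - (q x z 0 1 * (Br (q y 0) 1 a b c - Br (q y 1) 0 a b c)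
          + q x z 0 2 * (Br (q y 0) 2 a b c - Br (q y 2) 0 a b c)
          + q x z 1 2 * (Br (q y 1) 2 a b c - Br (q y 2) 1 a b c)))
    (i j a b : Fin 3) : q i j a b = 0 := by
  have s10 := hs 1 0
  have s20 := hs 2 0
  have s21 := hs 2 1
  have aa : ∀ i j a, q i j a a = 0 := fun i j a => by
    have h := ha i j a a
    have h2 : (2 : K) * q i j a a = 0 := by linear_combination h
    simpa using h2
  have a00 : ∀ i j, q i j 0 0 = 0 := fun i j => aa i j 0
  have a11 : ∀ i j, q i j 1 1 = 0 := fun i j => aa i j 1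
  have a22 : ∀ i j, q i j 2 2 = 0 := fun i j => aa i j 2
  have a10 : ∀ i j, q i j 1 0 = - q i j 0 1 := fun i j => ha i j 1 0
  have a20 : ∀ i j, q i j 2 0 = - q i j 0 2 := fun i j => ha i j 2 0
  have a21 : ∀ i j, q i j 2 1 = - q i j 1 2 := fun i j => ha i j 2 1
  have h0 := H 0 1 0 0 1 0
  have h1 := H 0 1 0 0 1 1
  have h2 := H 0 1 0 0 2 2
  have h3 := H 0 1 0 1 0 1
  have h4 := H 0 1 0 1 2 1
  have h5 := H 0 1 1 0 0 1
  have h6 := H 0 1 1 0 1 0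
  have h7 := H 0 1 1 0 2 2
  have h8 := H 0 1 1 1 0 1
  have h9 := H 0 1 2 0 0 2
  have h10 := H 0 1 2 0 1 2
  have h11 := H 0 1 2 0 2 0
  have h12 := H 0 1 2 0 2 1
  have h13 := H 0 1 2 1 1 2
  have h14 := H 0 1 2 1 2 1
  have h15 := H 0 2 0 0 1 1
  have h16 := H 0 2 0 0 2 0
  have h17 := H 0 2 0 0 2 2
  have h18 := H 0 2 0 1 2 1
  have h19 := H 0 2 1 0 0 1
  have h20 := H 0 2 1 0 1 0
  have h21 := H 0 2 1 0 1 2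
  have h22 := H 0 2 1 1 2 2
  have h23 := H 0 2 1 2 1 2
  have h24 := H 0 2 2 0 0 2
  have h25 := H 0 2 2 0 2 0
  have h26 := H 0 2 2 0 2 2
  have h27 := H 0 2 2 1 0 1
  have h28 := H 1 2 0 0 1 1
  have h29 := H 1 2 0 0 1 2
  have h30 := H 1 2 0 0 2 2
  have h31 := H 1 2 0 1 0 1
  have h32 := H 1 2 1 0 0 1
  have h33 := H 1 2 1 1 2 1
  have h34 := H 1 2 1 1 2 2
  have h35 := H 1 2 1 2 0 2
  have h36 := H 1 2 1 2 1 2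
  have h37 := H 1 2 2 0 1 1
  have h38 := H 1 2 2 1 1 2
  have h39 := H 1 2 2 1 2 1
  have h40 := H 1 2 2 2 1 2
  simp only [Br, s10, s20, s21, a00, a11, a22, a10, a20, a21, E00, E01, E02, E10, E11, E12, E20, E21, E22] at h0 h1 h2 h3 h4 h5 h6 h7 h8 h9 h10 h11 h12 h13 h14 h15 h16 h17 h18 h19 h20 h21 h22 h23 h24 h25 h26 h27 h28 h29 h30 h31 h32 h33 h34 h35 h36 h37 h38 h39 h40
  have v0 : q 0 0 0 1 = 0 := by
    linear_combination (-1) * q 0 2 0 1 * h22 +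
      (1) * h1 +
      (1) * q 0 0 1 2 * h19 +
      (1) * q 0 1 0 2 * h15
  have v1 : q 0 0 0 2 = 0 := by
    linear_combination (1) * h17 +
      (-1) * q 0 1 0 2 * h13 +
      (-1) * q 0 0 1 2 * h9 +
      (1) * q 0 2 0 1 * h2
  have v2 : q 0 0 1 2 = 0 := by
    linear_combination (1) * q 0 0 1 2 * h21 +
      (-1) * q 0 2 1 2 * h22 +
      (1/2) * q 0 1 0 2 * h18 +
      (1/2) * h4 +
      (1/2) * q 0 0 0 1 * h23
  have v3 : q 0 1 0 1 = 0 := by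
    linear_combination (-1/4) * h0 +
      (1/2) * q 0 2 0 1 * h30 +
      (-1/4) * h8 +
      (1/4) * q 0 2 0 1 * h36 +
      (-1/4) * q 1 2 0 1 * h23 +
      (-1/2) * q 1 2 0 1 * h17 +
      (1) * q 1 2 0 2 * h13 +
      (1) * q 0 2 1 2 * h9
  have v4 : q 0 1 0 2 = 0 := by
    linear_combination (1) * h30 +
      (-1) * q 1 1 0 2 * h13 +
      (-1) * q 0 1 1 2 * h9 +
      (1) * q 1 2 0 1 * h2
  have v5 : q 0 1 1 2 = 0 := by
    linear_combination (1) * h22 +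
      (1) * q 0 1 0 2 * h13 +
      (1) * q 0 0 1 2 * h9 +
      (-1) * q 0 2 0 1 * h2
  have v6 : q 0 2 0 1 = 0 := by
    linear_combination (-1) * h28 +
      (-1) * q 2 2 0 1 * h22 +
      (1) * q 0 2 1 2 * h19 +
      (1) * q 1 2 0 2 * h15
  have v7 : q 0 2 0 2 = 0 := by
    linear_combination (-1/4) * q 0 1 0 2 * h39 +
      (1) * q 1 2 0 1 * h22 +
      (1/2) * q 0 1 1 2 * h20 +
      (1/2) * h26 +
      (-1/4) * q 1 2 0 2 * h14 +
      (-1/4) * h16 +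
      (1/4) * q 0 1 0 2 * h31 +
      (1/4) * q 1 2 0 2 * h3
  have v8 : q 0 2 1 2 = 0 := by
    linear_combination (-1) * h13 +
      (-1) * q 0 2 0 1 * h22 +
      (1) * q 0 0 1 2 * h19 +
      (1) * q 0 1 0 2 * h15
  have v9 : q 1 1 0 1 = 0 := by
    linear_combination (-1) * q 1 2 0 1 * h30 +
      (-1) * q 1 1 0 2 * h28 +
      (-1) * q 0 1 1 2 * h32 +
      (1) * h5
  have v10 : q 1 1 0 2 = 0 := by
    linear_combination (-1/2) * h35 +
      (-1/2) * q 0 1 0 2 * h11 +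
      (-1) * q 1 1 0 2 * h12 +
      (1) * q 1 2 0 1 * h7 +
      (1/2) * q 1 1 1 2 * h11
  have v11 : q 1 1 1 2 = 0 := by
    linear_combination (1) * h34 +
      (1) * q 1 1 0 2 * h13 +
      (1) * q 0 1 1 2 * h9 +
      (-1) * q 1 2 0 1 * h2
  have v12 : q 1 2 0 1 = 0 := by
    linear_combination (-1) * q 2 2 0 1 * h30 +
      (-1) * q 1 2 0 2 * h28 +
      (-1) * q 0 2 1 2 * h32 +
      (1) * h19
  have v13 : q 1 2 0 2 = 0 := by
    linear_combination (1) * h9 +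
      (1) * q 1 2 0 1 * h30 +
      (1) * q 1 1 0 2 * h28 +
      (1) * q 0 1 1 2 * h32
  have v14 : q 1 2 1 2 = 0 := by
    linear_combination (-1/4) * h40 +
      (-1/4) * h33 +
      (-1/2) * q 0 2 1 2 * h9 +
      (-1/4) * q 0 2 1 2 * h6 +
      (-1/4) * q 0 1 1 2 * h25 +
      (-1/2) * q 0 1 1 2 * h19 +
      (1/2) * q 0 1 0 2 * h31 +
      (-1) * q 0 2 0 1 * h30
  have v15 : q 2 2 0 1 = 0 := by
    linear_combination (-1/2) * q 0 2 0 1 * h20 +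
      (-1) * q 2 2 0 1 * h29 +
      (-1) * h37 +
      (-1) * q 2 2 0 1 * h10 +
      (-1/2) * q 1 2 0 2 * h27 +
      (1) * q 2 2 1 2 * h19
  have v16 : q 2 2 0 2 = 0 := by
    linear_combination (1) * h24 +
      (1) * q 2 2 0 1 * h30 +
      (1) * q 1 2 0 2 * h28 +
      (1) * q 0 2 1 2 * h32
  have v17 : q 2 2 1 2 = 0 := by
    linear_combination (1) * h38 +
      (-1) * q 2 2 0 1 * h22 +
      (1) * q 0 2 1 2 * h19 +
      (1) * q 1 2 0 2 * h15
  revert i j a b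
  refine fin3_cases _ ?_ ?_ ?_ <;> refine fin3_cases _ ?_ ?_ ?_ <;>
    refine fin3_cases _ ?_ ?_ ?_ <;> refine fin3_cases _ ?_ ?_ ?_ <;>
    (try simp only [s10, s20, s21, a00, a11, a22, a10, a20, a21, neg_eq_zero]) <;> assumption

end Algebra
end CPAFree

namespace CPAFree

section Main
variable {K : Type*} [Field K] {g : Type*} [LieRing g] [LieAlgebra K g] {c : ℕ}

lemma co_lie_two (M : Model K g c) (hc : 3 ≤ c) (x y : g) (a b : Fin 3) :
    M.co ⁅x, y⁆ [a, b] = M.co x [a] * M.co y [b] - M.co y [a] * M.co x [b] := by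
  rw [M.co_lie x y [a, b] (by simp; omega)]
  simp [Finset.sum_range_succ, M.co_nil]

lemma co_lie_one (M : Model K g c) (hc : 3 ≤ c) (x y : g) (a : Fin 3) :
    M.co ⁅x, y⁆ [a] = 0 := by
  rw [M.co_lie x y [a] (by simp; omega)]
  simp [Finset.sum_range_succ, M.co_nil]

lemma co_lie_three (M : Model K g c) (hc : 3 ≤ c) (x y : g) (a b d : Fin 3) :
    M.co ⁅x, y⁆ [a, b, d] = M.co x [a] * M.co y [b, d] - M.co y [a] * M.co x [b, d]
      + (M.co x [a, b] * M.co y [d] - M.co y [a, b] * M.co x [d]) := by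
  rw [M.co_lie x y [a, b, d] (by simp; omega)]
  simp [Finset.sum_range_succ, M.co_nil]
  ring

lemma co_e_one (M : Model K g c) (hc : 3 ≤ c) (i a : Fin 3) : M.co (M.e i) [a] = dl K i a := by
  rw [M.co_e i [a] (by simp; omega), dl]
  simp [eq_comm]

lemma co_e_two (M : Model K g c) (hc : 3 ≤ c) (i a b : Fin 3) : M.co (M.e i) [a, b] = 0 := by
  rw [M.co_e i [a, b] (by simp; omega)]
  simp

lemma co_T3 (M : Model K g c) (hc : 3 ≤ c) (p q r : g) (plin qlin rlin : Fin 3 → K)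
    (hp : ∀ a, M.co p [a] = plin a) (hq : ∀ a, M.co q [a] = qlin a) (hr : ∀ a, M.co r [a] = rlin a)
    (a b d : Fin 3) :
    M.co ⁅⁅p, q⁆, r⁆ [a, b, d] = T3 plin qlin rlin a b d := by
  rw [co_lie_three M hc, co_lie_two M hc, co_lie_two M hc, co_lie_one M hc, co_lie_one M hc]
  simp only [hp, hq, hr, T3]
  ring

lemma co_Br (M : Model K g c) (hc : 3 ≤ c) (m : g) (hm : ∀ a, M.co m [a] = 0)
    (t a b d : Fin 3) :
    M.co ⁅m, M.e t⁆ [a, b, d] = Br (fun i j => M.co m [i, j]) t a b d := by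
  rw [co_lie_three M hc]
  simp only [hm, co_e_one M hc, Br]
  ring

/-- The quadratic part of a Lie element is antisymmetric. -/
lemma co_antisymm (M : Model K g c) (hc : 3 ≤ c) (x : g) (a b : Fin 3) :
    M.co x [a, b] = - M.co x [b, a] := by
  let S : LieSubalgebra K g :=
    { carrier := {x | M.co x [a, b] = - M.co x [b, a]}
      add_mem' := fun {x y} hx hy => by
        simp only [Set.mem_ofPred_eq, map_add, Pi.add_apply] at *
        rw [hx, hy]; ring
      zero_mem' := by simp
      smul_mem' := fun r x hx => by
        simp only [Set.mem_ofPred_eq, map_smul, Pi.smul_apply, smul_eq_mul] at *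
        rw [hx]; ring
      lie_mem' := fun {x y} _ _ => by
        change M.co ⁅x, y⁆ [a, b] = - M.co ⁅x, y⁆ [b, a]
        rw [co_lie_two M hc, co_lie_two M hc]; ring }
  refine M.gen S (fun i => ?_) x
  change M.co (M.e i) [a, b] = - M.co (M.e i) [b, a]
  rw [co_e_two M hc, co_e_two M hc]; simp

/-- Lie elements have no coefficient at pure powers. -/
lemma co_replicate (M : Model K g c) (x : g) (i : Fin 3) (m : ℕ) (h2 : 2 ≤ m) (hm : m ≤ c) :
    M.co x (List.replicate m i) = 0 := by
  let S : LieSubalgebra K g :=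
    { carrier := {x | M.co x (List.replicate m i) = 0}
      add_mem' := fun {x y} hx hy => by
        simp only [Set.mem_ofPred_eq, map_add, Pi.add_apply] at *
        rw [hx, hy]; ring
      zero_mem' := by simp
      smul_mem' := fun r x hx => by
        simp only [Set.mem_ofPred_eq, map_smul, Pi.smul_apply, smul_eq_mul] at *
        rw [hx]; ring
      lie_mem' := fun {x y} _ _ => by
        change M.co ⁅x, y⁆ (List.replicate m i) = 0
        rw [M.co_lie _ _ _ (by simpa using hm), Finset.sum_sub_distrib, sub_eq_zero,
          ← Finset.sum_range_reflect]
        refine Finset.sum_congr rfl (fun k hk => ?_)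
        simp only [List.length_replicate, Finset.mem_range] at hk ⊢
        simp only [List.take_replicate, List.drop_replicate]
        rw [mul_comm, show min (m + 1 - 1 - k) m = m - k by omega,
          show m - (m + 1 - 1 - k) = k by omega, show min k m = k by omega] }
  refine M.gen S (fun j => ?_) x
  change M.co (M.e j) (List.replicate m i) = 0
  rw [M.co_e j _ (by simpa using hm), if_neg]
  intro h
  have := congrArg List.length h
  simp at this
  omega

/-- The coefficients of `[X, e_y]`. -/
lemma co_lie_e (M : Model K g c) (X : g) (y s t : Fin 3) (v : List (Fin 3))
    (h : v.length + 2 ≤ c) :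
    M.co ⁅X, M.e y⁆ (s :: (v ++ [t])) =
      M.co X (s :: v) * (if t = y then 1 else 0) - (if s = y then 1 else 0) * M.co X (v ++ [t]) := by
  have hl : (s :: (v ++ [t])).length = v.length + 2 := by simp
  rw [M.co_lie _ _ _ (by omega), hl, Finset.sum_sub_distrib]
  congr 1
  · rw [Finset.sum_eq_single (v.length + 1)]
    · have h1 : (s :: (v ++ [t])).take (v.length + 1) = s :: v := by simp
      have h2 : (s :: (v ++ [t])).drop (v.length + 1) = [t] := by simp
      rw [h1, h2, M.co_e y [t] (by simp; omega)]
      simp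
    · intro k hk hne
      rw [M.co_e y _ (by simp; omega), if_neg, mul_zero]
      intro h'
      have := congrArg List.length h'
      rw [List.length_drop, hl] at this
      simp at this hk
      omega
    · intro h'; simp at h'
  · rw [Finset.sum_eq_single 1]
    · rw [M.co_e y _ (by simp; omega)]
      simp
    · intro k hk hne
      rw [M.co_e y _ (by simp; omega), if_neg, zero_mul]
      intro h'
      have := congrArg List.length h'
      rw [List.length_take, hl] at this
      simp at this hk
      omega
    · intro h'; simp at h'

variable {mul : g →ₗ[K] g →ₗ[K] g}

lemma mul_mem_lc (M : Model K g c) (hm : IsCPAStructure K mul) (n : ℕ)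
    (h : ∀ i j, mul (M.e i) (M.e j) ∈ Lc K g n) (x y : g) : mul x y ∈ Lc K g n := by
  refine deriv_mem M.e M.gen (mul x) (hm.mul_bracket x) n (fun i => ?_) y
  rw [hm.comm]
  exact deriv_mem M.e M.gen (mul (M.e i)) (hm.mul_bracket _) n (h i) x

lemma mul_mem_lc_add (M : Model K g c) (hm : IsCPAStructure K mul) (n : ℕ)
    (h : ∀ i j, mul (M.e i) (M.e j) ∈ Lc K g n) (x : g) {y : g} (j : ℕ) (hy : y ∈ Lc K g j) :
    mul x y ∈ Lc K g (j + n) :=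
  deriv_mem_lc (mul x) (hm.mul_bracket x) n (mul_mem_lc M hm n h x) j hy

lemma four_identity (hm : IsCPAStructure K mul) (x y u v : g) :
    mul ⁅x, y⁆ ⁅u, v⁆ = ⁅⁅mul u x, y⁆, v⁆ + ⁅⁅x, mul u y⁆, v⁆
      - ⁅⁅mul v x, y⁆, u⁆ - ⁅⁅x, mul v y⁆, u⁆ := by
  rw [hm.mul_bracket, hm.comm ⁅x, y⁆ u, hm.comm ⁅x, y⁆ v, hm.mul_bracket, hm.mul_bracket,
    ← lie_skew u, add_lie, add_lie]
  abel

lemma step_one (M : Model K g c) (hc : 3 ≤ c) (hm : IsCPAStructure K mul) (i j : Fin 3) :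
    mul (M.e i) (M.e j) ∈ Lc K g 1 := by
  refine M.mem_lc 1 (by omega) _ (fun w hw => ?_)
  have key := step_one_algebra (fun i j k => M.co (mul (M.e i) (M.e j)) [k])
    (fun i j => by rw [hm.comm]) (fun x y u v a b d => by
      have h : mul ⁅M.e x, M.e y⁆ ⁅M.e u, M.e v⁆ = mul ⁅M.e u, M.e v⁆ ⁅M.e x, M.e y⁆ := hm.comm _ _
      rw [four_identity hm, four_identity hm] at h
      have h2 := congrArg (fun X => M.co X [a, b, d]) h
      simp only [map_add, map_sub, Pi.add_apply, Pi.sub_apply] at h2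
      have E := fun i a => co_e_one M hc i a
      have T := co_T3 M hc
      rw [T _ _ _ _ _ _ (fun _ => rfl) (E y) (E v), T _ _ _ _ _ _ (E x) (fun _ => rfl) (E v),
        T _ _ _ _ _ _ (fun _ => rfl) (E y) (E u), T _ _ _ _ _ _ (E x) (fun _ => rfl) (E u),
        T _ _ _ _ _ _ (fun _ => rfl) (E v) (E y), T _ _ _ _ _ _ (E u) (fun _ => rfl) (E y),
        T _ _ _ _ _ _ (fun _ => rfl) (E v) (E x), T _ _ _ _ _ _ (E u) (fun _ => rfl) (E x)] at h2
      exact h2)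
  match w, hw with
  | [], _ => exact M.co_nil _
  | [k], _ => exact key i j k
  | _ :: _ :: _, hw => simp at hw

/-- The fundamental relation. -/
lemma fund (hm : IsCPAStructure K mul) (x y z : g) :
    ⁅mul z x, y⁆ + ⁅x, mul z y⁆ = mul x (mul y z) - mul y (mul x z) := by
  rw [← hm.mul_bracket, hm.comm, hm.bracket_mul]

lemma step_two [CharZero K] (M : Model K g c) (hc : 3 ≤ c) (hm : IsCPAStructure K mul)
    (i j : Fin 3) : mul (M.e i) (M.e j) ∈ Lc K g 2 := by
  have h1 := step_one M hc hm
  have hlin : ∀ x y a, M.co (mul (M.e x) (M.e y)) [a] = 0 := fun x y a =>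
    M.of_mem_lc 1 (by omega) _ (h1 x y) [a] (by simp)
  -- the derivation applied to a bracket of generators
  have hB : ∀ x i j a b d : Fin 3, M.co (mul (M.e x) ⁅M.e i, M.e j⁆) [a, b, d] =
      Br (fun k l => M.co (mul (M.e x) (M.e i)) [k, l]) j a b d
        - Br (fun k l => M.co (mul (M.e x) (M.e j)) [k, l]) i a b d := by
    intro x i j a b d
    rw [hm.mul_bracket, ← lie_skew (M.e i), map_add, map_neg, Pi.add_apply, Pi.neg_apply,
      co_Br M hc _ (hlin x i), co_Br M hc _ (hlin x j)]
    ring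
  -- the derivation applied to an element of the commutator
  have hC : ∀ (x : Fin 3) (m : g), (∀ a, M.co m [a] = 0) → ∀ a b d : Fin 3,
      M.co (mul (M.e x) m) [a, b, d] =
        M.co m [0, 1] * M.co (mul (M.e x) ⁅M.e 0, M.e 1⁆) [a, b, d]
        + M.co m [0, 2] * M.co (mul (M.e x) ⁅M.e 0, M.e 2⁆) [a, b, d]
        + M.co m [1, 2] * M.co (mul (M.e x) ⁅M.e 1, M.e 2⁆) [a, b, d] := by
    intro x m hml a b d
    have hr : m - (M.co m [0, 1] • ⁅M.e 0, M.e 1⁆ + M.co m [0, 2] • ⁅M.e 0, M.e 2⁆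
        + M.co m [1, 2] • ⁅M.e 1, M.e 2⁆) ∈ Lc K g 2 := by
      refine M.mem_lc 2 (by omega) _ (fun w hw => ?_)
      match w, hw with
      | [], _ => exact M.co_nil _
      | [k], _ =>
        simp only [map_sub, map_add, map_smul, Pi.sub_apply, Pi.add_apply, Pi.smul_apply,
          co_lie_one M hc, hml]
        simp
      | [k, l], _ =>
        simp only [map_sub, map_add, map_smul, Pi.sub_apply, Pi.add_apply, Pi.smul_apply,
          co_lie_two M hc, co_e_one M hc, smul_eq_mul]
        have h10 := co_antisymm M hc m 1 0
        have h20 := co_antisymm M hc m 2 0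
        have h21 := co_antisymm M hc m 2 1
        have haa : ∀ k, M.co m [k, k] = 0 := fun k => by
          have h := co_antisymm M hc m k k
          have h2 : (2 : K) * M.co m [k, k] = 0 := by linear_combination h
          simpa using h2
        have h00 := haa 0
        have h11 := haa 1
        have h22 := haa 2
        revert k l
        refine fin3_cases _ ?_ ?_ ?_ <;> refine fin3_cases _ ?_ ?_ ?_ <;>
          simp only [E00, E01, E02, E10, E11, E12, E20, E21, E22] <;> intros <;>
          (try simp only [h10, h20, h21, h00, h11, h22]) <;> ring
      | _ :: _ :: _ :: _, hw => simp at hw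
    have h3 := M.of_mem_lc 3 hc _ (mul_mem_lc_add M hm 1 h1 (M.e x) 2 hr) [a, b, d] (by simp)
    simp only [map_sub, map_add, map_smul, Pi.sub_apply, Pi.add_apply, Pi.smul_apply,
      smul_eq_mul] at h3
    linear_combination h3
  have key := step_two_algebra (fun i j a b => M.co (mul (M.e i) (M.e j)) [a, b])
    (fun i j => by rw [hm.comm]) (fun i j a b => co_antisymm M hc _ a b)
    (fun x y z a b d => by
      have h := congrArg (fun X => M.co X [a, b, d]) (fund hm (M.e x) (M.e y) (M.e z))
      simp only [map_add, map_sub, Pi.add_apply, Pi.sub_apply] at h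
      rw [← lie_skew (M.e x), map_neg, Pi.neg_apply, co_Br M hc _ (hlin z x),
        co_Br M hc _ (hlin z y), hC x _ (hlin y z), hC y _ (hlin x z)] at h
      simp only [hB] at h
      linear_combination h)
  refine M.mem_lc 2 (by omega) _ (fun w hw => ?_)
  match w, hw with
  | [], _ => exact M.co_nil _
  | [k], _ => exact hlin i j k
  | [k, l], _ => exact key i j k l
  | _ :: _ :: _ :: _, hw => simp at hw

lemma step_words (A B : List (Fin 3) → K) (x y z : Fin 3) (hxy : x ≠ y) (hzx : z ≠ x)
    (hzy : z ≠ y) (n : ℕ)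
    (H : ∀ (s t : Fin 3) (v : List (Fin 3)), v.length = n →
      (if t = y then A (s :: v) else 0) - (if s = y then A (v ++ [t]) else 0) =
      (if t = x then B (s :: v) else 0) - (if s = x then B (v ++ [t]) else 0)) :
    ∀ (p r : List (Fin 3)), p.length + r.length = n →
      A (p ++ z :: r) = 0 ∧ B (p ++ z :: r) = 0 := by
  intro p
  induction p with
  | nil =>
    intro r hr
    have h1 := H z y r (by simpa using hr)
    have h2 := H z x r (by simpa using hr)
    simp only [hzx, hzy, hxy, hxy.symm, if_true, if_false] at h1 h2
    simp only [List.nil_append]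
    exact ⟨by linear_combination h1, by linear_combination -h2⟩
  | cons s p ih =>
    intro r hr
    simp only [List.length_cons] at hr
    have hl : (p ++ z :: r).length = n := by simp; omega
    have key : ∀ t, A (p ++ z :: r ++ [t]) = 0 ∧ B (p ++ z :: r ++ [t]) = 0 := fun t => by
      have := ih (r ++ [t]) (by simp; omega)
      simpa using this
    have h1 := H s y _ hl
    have h2 := H s x _ hl
    simp only [(key _).1, (key _).2, hxy, hxy.symm, if_true, if_false, ite_self] at h1 h2
    simp only [List.cons_append]
    exact ⟨by linear_combination h1, by linear_combination -h2⟩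

lemma step_succ (M : Model K g c) (hm : IsCPAStructure K mul)
    (n : ℕ) (h2 : 2 ≤ n) (hn : n + 2 ≤ c) (h : ∀ i j, mul (M.e i) (M.e j) ∈ Lc K g n)
    (i j : Fin 3) : mul (M.e i) (M.e j) ∈ Lc K g (n + 1) := by
  have rel : ∀ x y s t : Fin 3, ∀ v : List (Fin 3), v.length = n →
      (if t = y then M.co (mul (M.e x) (M.e x)) (s :: v) else 0)
        - (if s = y then M.co (mul (M.e x) (M.e x)) (v ++ [t]) else 0) =
      (if t = x then M.co (mul (M.e x) (M.e y)) (s :: v) else 0)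
        - (if s = x then M.co (mul (M.e x) (M.e y)) (v ++ [t]) else 0) := by
    intro x y s t v hv
    have hmem : ⁅mul (M.e x) (M.e x), M.e y⁆ + ⁅M.e x, mul (M.e x) (M.e y)⁆ ∈ Lc K g (n + 2) := by
      rw [fund hm]
      refine sub_mem ?_ ?_
      · exact lc_anti (by omega) (mul_mem_lc_add M hm n h _ n (h _ _))
      · exact lc_anti (by omega) (mul_mem_lc_add M hm n h _ n (h _ _))
    have h0 := M.of_mem_lc (n + 2) hn _ hmem (s :: (v ++ [t])) (by simp; omega)
    rw [← lie_skew (M.e x), map_add, map_neg, Pi.add_apply, Pi.neg_apply,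
      co_lie_e M _ _ _ _ _ (by omega), co_lie_e M _ _ _ _ _ (by omega)] at h0
    simp only [mul_ite, ite_mul, mul_one, mul_zero, one_mul, zero_mul] at h0
    linear_combination h0
  have third : ∀ x z : Fin 3, z ≠ x → ∃ y, x ≠ y ∧ z ≠ y := by decide
  -- the diagonal products
  have diag : ∀ (x : Fin 3) (w : List (Fin 3)), w.length = n + 1 →
      M.co (mul (M.e x) (M.e x)) w = 0 := by
    intro x w hw
    by_cases hx : ∀ z ∈ w, z = x
    · rw [List.eq_replicate_of_mem hx]
      exact co_replicate M _ x _ (by omega) (by omega)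
    · push Not at hx
      obtain ⟨z, hzw, hzx⟩ := hx
      obtain ⟨y, hxy, hzy⟩ := third x z hzx
      obtain ⟨p, r, rfl⟩ := List.append_of_mem hzw
      refine (step_words _ _ x y z hxy hzx hzy n (rel x y) p r ?_).1
      simp at hw
      omega
  have off : ∀ (x y s : Fin 3) (v : List (Fin 3)), v.length = n → x ≠ y → s ≠ x →
      M.co (mul (M.e x) (M.e y)) (s :: v) = 0 := by
    intro x y s v hv hxy hs
    have := rel x y s x v hv
    rw [diag x _ (by simp [hv]), diag x _ (by simp [hv])] at this
    simp only [hs, if_true, if_false, ite_self] at this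
    linear_combination -this
  refine M.mem_lc (n + 1) (by omega) _ (fun w hw => ?_)
  rcases Nat.lt_or_ge w.length (n + 1) with hlt | hge
  · exact M.of_mem_lc n (by omega) _ (h i j) w (by omega)
  · have hw' : w.length = n + 1 := by omega
    by_cases hij : i = j
    · subst hij
      exact diag i w hw'
    · match w, hw' with
      | [], h => simp at h
      | s :: v, h =>
        have hv : v.length = n := by simpa using h
        by_cases hs : s = i
        · rw [hm.comm]
          exact off j i s v hv (Ne.symm hij) (by rw [hs]; exact hij)
        · exact off i j s v hv hij hs

lemma central_of_model [CharZero K] (M : Model K g c) (hc : 3 ≤ c) (hm : IsCPAStructure K mul)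
    (x y : g) : mul x y ∈ LieAlgebra.center K g := by
  have key : ∀ n, n + 3 ≤ c → ∀ i j, mul (M.e i) (M.e j) ∈ Lc K g (n + 2) := by
    intro n
    induction n with
    | zero => exact fun _ => step_two M hc hm
    | succ n ih =>
      intro hn
      exact step_succ M hm (n + 2) (by omega) (by omega) (ih (by omega))
  obtain ⟨n, rfl⟩ : ∃ n, c = n + 3 := ⟨c - 3, by omega⟩
  have h := mul_mem_lc M hm (n + 2) (key n le_rfl) x y
  rw [LieModule.mem_maxTrivSubmodule]
  intro z
  exact M.lc_bot _ (lie_mem_lc_succ z h)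

end Main
end CPAFree

/-- For every `c ≥ 3`, every CPA-structure on the free-nilpotent Lie algebra `F_{3,c}`
over a field of characteristic zero is central. -/
theorem cpa_on_F3c_is_central (K : Type*) [Field K] [CharZero K] :
    ∀ c : ℕ, 3 ≤ c →
      ∀ mul : FreeNilpotentLieAlgebra K 3 c →ₗ[K]
          FreeNilpotentLieAlgebra K 3 c →ₗ[K] FreeNilpotentLieAlgebra K 3 c,
        IsCPAStructure K mul →
          ∀ x y : FreeNilpotentLieAlgebra K 3 c,
            mul x y ∈ LieAlgebra.center K (FreeNilpotentLieAlgebra K 3 c) := by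
  intro c hc mul hm x y
  exact CPAFree.central_of_model (CPAFree.model K c) hc hm x y
end

section
/- Let F be the free Lie algebra over a field K of characteristic zero on a set X of generators containing two distinct elements x_1 and x_2. If u, v ∈ F satisfy the linear equation [x_1, u] + [x_2, v] = 0, then u and v are contained in the Lie subalgebra of F generated by x_1 and x_2. -/
attribute [local instance] LieRing.ofAssociativeRing

namespace FLAux

variable {K : Type*} [Field K] {X : Type*}

lemma mem_of_gen (S : LieSubalgebra K (FreeLieAlgebra K X))
    (hS : ∀ x, FreeLieAlgebra.of K x ∈ S) (a : FreeLieAlgebra K X) : a ∈ S := by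
  have h : S.incl.comp (FreeLieAlgebra.lift K (fun x => (⟨FreeLieAlgebra.of K x, hS x⟩ : S)))
      = LieHom.id := by
    ext x
    simp
  have := congrArg (fun f => f a) h
  simp only [LieHom.comp_apply, LieHom.id_apply] at this
  rw [← this]
  exact Subtype.mem _

lemma induct {P : FreeLieAlgebra K X → Prop} (h0 : P 0)
    (hg : ∀ x, P (FreeLieAlgebra.of K x))
    (ha : ∀ a b, P a → P b → P (a + b)) (hs : ∀ (t : K) a, P a → P (t • a))
    (hl : ∀ a b, P a → P b → P ⁅a, b⁆) (a : FreeLieAlgebra K X) : P a :=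
  mem_of_gen
    { carrier := {a | P a}
      zero_mem' := h0
      add_mem' := fun {a b} h1 h2 => ha a b h1 h2
      smul_mem' := fun t a h => hs t a h
      lie_mem' := fun {a b} h1 h2 => hl a b h1 h2 } hg a

variable (K X) in
/-- The free associative algebra as a monoid algebra. -/
abbrev A := MonoidAlgebra K (FreeMonoid X)

/-- The generators. -/
noncomputable def gen (x : X) : A K X := MonoidAlgebra.single (FreeMonoid.of x) 1

variable (K X) in
/-- The canonical map. -/
noncomputable def phi : FreeLieAlgebra K X →ₗ⁅K⁆ A K X :=
  FreeLieAlgebra.lift K (gen (K := K) (X := X))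

variable (K) in
/-- The operator of a generator on `F × K`. -/
noncomputable def op (x : X) : Module.End K (FreeLieAlgebra K X × K) :=
  LinearMap.prod
    (((LieAlgebra.ad K (FreeLieAlgebra K X) (FreeLieAlgebra.of K x)).comp
      (LinearMap.fst K _ _)) + (LinearMap.snd K _ K).smulRight (FreeLieAlgebra.of K x)) 0

lemma op_apply (x : X) (p : FreeLieAlgebra K X × K) :
    op K x p = (⁅FreeLieAlgebra.of K x, p.1⁆ + p.2 • FreeLieAlgebra.of K x, 0) := rfl

variable (K X) in
/-- The representation. -/
noncomputable def Psi : FreeLieAlgebra K X →ₗ⁅K⁆ Module.End K (FreeLieAlgebra K X × K) :=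
  FreeLieAlgebra.lift K (op K)

lemma Psi_of (x : X) : Psi K X (FreeLieAlgebra.of K x) = op K x := by simp [Psi]

variable (K X) in
/-- The degree derivation. -/
noncomputable def D : Module.End K (FreeLieAlgebra K X) where
  toFun a := (Psi K X a (0, 1)).1
  map_add' a b := by simp
  map_smul' t a := by simp

lemma D_def (a : FreeLieAlgebra K X) : D K X a = (Psi K X a (0, 1)).1 := rfl

lemma Psi_apply (a : FreeLieAlgebra K X) :
    (∀ w, Psi K X a (w, 0) = (⁅a, w⁆, 0)) ∧ Psi K X a (0, 1) = (D K X a, 0) := by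
  induction a using induct with
  | h0 => simp [D_def, Prod.ext_iff]
  | hg x => simp [D_def, Psi_of, op_apply]
  | ha a b iha ihb => simp [iha.1, ihb.1, iha.2, ihb.2]
  | hs t a ih => simp [ih.1, ih.2]
  | hl a b iha ihb =>
    constructor
    · intro w
      simp [LieRing.of_associative_ring_bracket, iha.1, ihb.1]
    · rw [D_def]
      simp [LieRing.of_associative_ring_bracket, iha.1, ihb.1, iha.2, ihb.2]

lemma D_of (x : X) : D K X (FreeLieAlgebra.of K x) = FreeLieAlgebra.of K x := by
  simp [D_def, Psi_of, op_apply]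

lemma D_lie (a b : FreeLieAlgebra K X) : D K X ⁅a, b⁆ = ⁅a, D K X b⁆ + ⁅D K X a, b⁆ := by
  rw [D_def]
  simp [LieRing.of_associative_ring_bracket, (Psi_apply a).1, (Psi_apply b).1,
    (Psi_apply a).2, (Psi_apply b).2]
  rw [← lie_skew (D K X a) b]; abel

lemma D_of_phi (a : FreeLieAlgebra K X) (h : phi K X a = 0) : D K X a = 0 := by
  have key : Psi K X = ((MonoidAlgebra.lift K (Module.End K (FreeLieAlgebra K X × K))
      (FreeMonoid X) (FreeMonoid.lift (op K)) : A K X →ₐ[K] _) : A K X →ₗ⁅K⁆ _).comp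
        (phi K X) := by
    apply FreeLieAlgebra.hom_ext
    intro x
    rw [Psi_of]
    simp [phi, gen]
  rw [D_def, key, LieHom.comp_apply, h]
  simp

lemma mem_sup (a : FreeLieAlgebra K X) :
    a ∈ ⨆ n : ℕ, (D K X).eigenspace ((n : K) + 1) := by
  set E : ℕ → Submodule K (FreeLieAlgebra K X) := fun n => (D K X).eigenspace ((n : K) + 1)
    with hE
  induction a using induct with
  | h0 => exact zero_mem _
  | hg x =>
    refine Submodule.mem_iSup_of_mem (p := E) 0 ?_
    simp [hE, D_of]
  | ha a b iha ihb => exact add_mem iha ihb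
  | hs t a ih => exact Submodule.smul_mem _ _ ih
  | hl a b iha ihb =>
    induction iha using Submodule.iSup_induction' with
    | zero => simp
    | add a a' _ _ h hphi => rw [add_lie]; exact add_mem h hphi
    | mem i a hi =>
      induction ihb using Submodule.iSup_induction' with
      | zero => simp
      | add a a' _ _ h hphi => rw [lie_add]; exact add_mem h hphi
      | mem j b hj =>
        refine Submodule.mem_iSup_of_mem (p := E) (i + j + 1) ?_
        simp only [hE, Module.End.mem_eigenspace_iff] at hi hj ⊢
        rw [D_lie, hi, hj, lie_smul, smul_lie, ← add_smul]
        congr 1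
        push_cast
        ring

lemma phi_inj [CharZero K] (a : FreeLieAlgebra K X) (h : phi K X a = 0) : a = 0 := by
  have h0 : a ∈ (D K X).eigenspace 0 := by
    rw [Module.End.mem_eigenspace_iff, D_of_phi a h, zero_smul]
  have hd := (D K X).eigenspaces_iSupIndep 0
  refine Submodule.disjoint_def.1 hd a h0 ?_
  refine (iSup_le fun n => ?_ : (⨆ n : ℕ, (D K X).eigenspace ((n : K) + 1)) ≤ _) (mem_sup a)
  exact le_iSup₂_of_le (f := fun j (_ : j ≠ 0) => (D K X).eigenspace j) ((n : K) + 1)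
    (by exact_mod_cast Nat.succ_ne_zero n) le_rfl

lemma gen_mul_cons (x : X) (f : A K X) (w : FreeMonoid X) :
    (gen x * f).coeff (FreeMonoid.of x * w) = f.coeff w := by
  simp [gen]

lemma gen_mul_cons_ne (x y : X) (hxy : y ≠ x) (f : A K X) (w : FreeMonoid X) :
    (gen x * f).coeff (FreeMonoid.of y * w) = 0 := by
  rw [gen, MonoidAlgebra.coeff_single_mul_of_forall_mul_ne]
  intro d hd
  have := congrArg FreeMonoid.toList hd
  simp at this
  exact hxy this.1.symm

lemma mul_gen_snoc (x : X) (f : A K X) (w : FreeMonoid X) :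
    (f * gen x).coeff (w * FreeMonoid.of x) = f.coeff w := by
  simp [gen]

lemma mul_gen_snoc_ne (x y : X) (hxy : y ≠ x) (f : A K X) (w : FreeMonoid X) :
    (f * gen x).coeff (w * FreeMonoid.of y) = 0 := by
  rw [gen, MonoidAlgebra.coeff_mul_single_of_forall_mul_ne]
  intro d hd
  have := congrArg FreeMonoid.toList hd
  simp at this
  exact hxy this.2.symm

lemma coeff_zero (x₁ x₂ : X) (hx : x₁ ≠ x₂) (f g : A K X)
    (h : gen x₁ * f + gen x₂ * g = f * gen x₁ + g * gen x₂) (z : X) (h1 : z ≠ x₁) (h2 : z ≠ x₂)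
    (p : FreeMonoid X) : ∀ q : FreeMonoid X,
    f.coeff (p * (FreeMonoid.of z * q)) = 0 ∧ g.coeff (p * (FreeMonoid.of z * q)) = 0 := by
  have e1 : ∀ w, f.coeff w = (gen x₁ * f + gen x₂ * g).coeff (w * FreeMonoid.of x₁) := by
    intro w
    rw [h, MonoidAlgebra.coeff_add, Finsupp.add_apply, mul_gen_snoc, mul_gen_snoc_ne _ _ hx, add_zero]
  have e2 : ∀ w, g.coeff w = (gen x₁ * f + gen x₂ * g).coeff (w * FreeMonoid.of x₂) := by
    intro w
    rw [h, MonoidAlgebra.coeff_add, Finsupp.add_apply, mul_gen_snoc, mul_gen_snoc_ne _ _ hx.symm, zero_add]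
  induction p using FreeMonoid.inductionOn' with
  | one =>
    intro q
    rw [e1, e2]
    simp only [one_mul, mul_assoc, MonoidAlgebra.coeff_add, Finsupp.add_apply]
    simp [gen_mul_cons_ne _ _ h1, gen_mul_cons_ne _ _ h2]
  | of_mul y p ih =>
    intro q
    rw [e1, e2]
    simp only [mul_assoc, MonoidAlgebra.coeff_add, Finsupp.add_apply]
    by_cases y1 : y = x₁
    · subst y1
      simp [gen_mul_cons, gen_mul_cons_ne _ _ hx, ih]
    · by_cases y2 : y = x₂
      · subst y2
        simp [gen_mul_cons, gen_mul_cons_ne _ _ y1, ih]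
      · simp [gen_mul_cons_ne _ _ y1, gen_mul_cons_ne _ _ y2]

open Classical in
/-- Retraction on the associative algebra. -/
noncomputable def rho (x₁ x₂ : X) : A K X →ₐ[K] A K X :=
  MonoidAlgebra.lift K _ _ (FreeMonoid.lift fun x => if x = x₁ ∨ x = x₂ then gen x else 0)

open Classical in
/-- Retraction on the Lie algebra. -/
noncomputable def pi (x₁ x₂ : X) : FreeLieAlgebra K X →ₗ⁅K⁆ FreeLieAlgebra K X :=
  FreeLieAlgebra.lift K fun x => if x = x₁ ∨ x = x₂ then FreeLieAlgebra.of K x else 0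

lemma phi_pi (x₁ x₂ : X) (a : FreeLieAlgebra K X) :
    phi K X (pi x₁ x₂ a) = rho x₁ x₂ (phi K X a) := by
  have : (phi K X).comp (pi x₁ x₂) = ((rho x₁ x₂ : A K X →ₐ[K] A K X) : A K X →ₗ⁅K⁆ A K X).comp
      (phi K X) := by
    apply FreeLieAlgebra.hom_ext
    intro x
    by_cases h : x = x₁ ∨ x = x₂ <;> simp [phi, pi, rho, gen, h]
  exact congrArg (fun f => f a) this

lemma pi_mem (x₁ x₂ : X) (a : FreeLieAlgebra K X) :
    pi x₁ x₂ a ∈ LieSubalgebra.lieSpan K (FreeLieAlgebra K X)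
        {FreeLieAlgebra.of K x₁, FreeLieAlgebra.of K x₂} := by
  induction a using induct with
  | h0 => simp
  | hg x =>
    by_cases h : x = x₁ ∨ x = x₂
    · simp only [pi, FreeLieAlgebra.lift_of_apply, h, if_true]
      apply LieSubalgebra.subset_lieSpan
      rcases h with rfl | rfl <;> simp
    · simp [pi, h]
  | ha a b iha ihb => rw [map_add]; exact add_mem iha ihb
  | hs t a ih => rw [map_smul]; exact LieSubalgebra.smul_mem _ _ ih
  | hl a b iha ihb => rw [LieHom.map_lie]; exact LieSubalgebra.lie_mem _ iha ihb

lemma rho_word (x₁ x₂ : X) (w : FreeMonoid X) :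
    (∀ x ∈ w.toList, x = x₁ ∨ x = x₂) →
    FreeMonoid.lift (fun x => by classical exact if x = x₁ ∨ x = x₂ then gen (K := K) x else 0) w =
      (MonoidAlgebra.single w 1 : A K X) := by
  induction w using FreeMonoid.inductionOn' with
  | one => intro _; simp [MonoidAlgebra.one_def]
  | of_mul y p ih =>
    intro h
    simp only [FreeMonoid.toList_mul, FreeMonoid.toList_of, List.singleton_append,
      List.mem_cons, forall_eq_or_imp] at h
    rw [map_mul, ih h.2, FreeMonoid.lift_eval_of, if_pos h.1, gen,
      MonoidAlgebra.single_mul_single, one_mul]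

lemma rho_fix (x₁ x₂ : X) (f : A K X)
    (hf : ∀ z, z ≠ x₁ → z ≠ x₂ → ∀ p q, f.coeff (p * (FreeMonoid.of z * q)) = 0) :
    rho x₁ x₂ f = f := by
  rw [rho, MonoidAlgebra.lift_apply]
  conv_rhs => rw [← MonoidAlgebra.sum_coeff_single f]
  refine Finsupp.sum_congr fun w hw => ?_
  rw [rho_word, MonoidAlgebra.smul_single', mul_one]
  intro x hxw
  by_contra hne
  push Not at hne
  obtain ⟨s, t, hst⟩ := List.append_of_mem hxw
  refine (Finsupp.mem_support_iff.1 hw) ?_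
  have := hf x hne.1 hne.2 (FreeMonoid.ofList s) (FreeMonoid.ofList t)
  rwa [show FreeMonoid.ofList s * (FreeMonoid.of x * FreeMonoid.ofList t) = w from
    hst.symm] at this

end FLAux


/-- (Remeslennikov–Stöhr) Let `F` be the free Lie algebra on a set `X` containing two distinct
elements `x₁, x₂`. If `u, v ∈ F` satisfy `⁅x₁, u⁆ + ⁅x₂, v⁆ = 0`, then `u` and `v` lie in the
free subalgebra of `F` generated by `x₁` and `x₂`. -/
theorem free_lie_linear_equation_inner_solutions
    (K : Type*) [Field K] [CharZero K] (X : Type*) (x₁ x₂ : X) (hx : x₁ ≠ x₂)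
    (u v : FreeLieAlgebra K X)
    (h : ⁅FreeLieAlgebra.of K x₁, u⁆ + ⁅FreeLieAlgebra.of K x₂, v⁆ = 0) :
    u ∈ LieSubalgebra.lieSpan K (FreeLieAlgebra K X)
        {FreeLieAlgebra.of K x₁, FreeLieAlgebra.of K x₂} ∧
    v ∈ LieSubalgebra.lieSpan K (FreeLieAlgebra K X)
        {FreeLieAlgebra.of K x₁, FreeLieAlgebra.of K x₂} := by
  have hphi := congrArg (FLAux.phi K X) h
  have g : ∀ x, FLAux.phi K X (FreeLieAlgebra.of K x) = FLAux.gen x := by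
    intro x; simp [FLAux.phi]
  simp only [map_add, LieHom.map_lie, g, map_zero, LieRing.of_associative_ring_bracket] at hphi
  have h2 : FLAux.gen x₁ * FLAux.phi K X u + FLAux.gen x₂ * FLAux.phi K X v
      = FLAux.phi K X u * FLAux.gen x₁ + FLAux.phi K X v * FLAux.gen x₂ := by
    rw [← sub_eq_zero, ← hphi]; abel
  have hc := FLAux.coeff_zero x₁ x₂ hx _ _ h2
  have fin : ∀ a : FreeLieAlgebra K X, FLAux.rho x₁ x₂ (FLAux.phi K X a) = FLAux.phi K X a →
      a ∈ LieSubalgebra.lieSpan K (FreeLieAlgebra K X)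
        {FreeLieAlgebra.of K x₁, FreeLieAlgebra.of K x₂} := by
    intro a ha
    have : FLAux.pi x₁ x₂ a - a = 0 := by
      apply FLAux.phi_inj
      rw [map_sub, FLAux.phi_pi, ha, sub_self]
    rw [← sub_eq_zero.1 this]
    exact FLAux.pi_mem x₁ x₂ a
  exact ⟨fin u (FLAux.rho_fix _ _ _ fun z h1 h2 p q => (hc z h1 h2 p q).1),
    fin v (FLAux.rho_fix _ _ _ fun z h1 h2 p q => (hc z h1 h2 p q).2)⟩
end

section
/- Let F_g be the free Lie algebra over a field K of characteristic zero on g ≥ 3 generators x_1, …, x_g. Suppose (u_{ij})_{1≤i,j≤g} is a family of elements of the derived subalgebra [F_g, F_g] with u_{ij} = u_{ji} for all i,j, satisfying [u_{ij}, x_k] + [x_j, u_{ik}] = 0 for all 1 ≤ i,j,k ≤ g. Then u_{ij} = 0 for all i,j (note Z(F_g) = 0). -/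
attribute [local instance] LieRing.ofAssociativeRing

namespace FreeLieAux

open MonoidAlgebra

variable {K : Type*} [Field K] {X : Type*}

/-- Induction principle for free Lie algebras. -/
theorem induct {P : FreeLieAlgebra K X → Prop}
    (hof : ∀ x, P (FreeLieAlgebra.of K x)) (h0 : P 0)
    (hadd : ∀ a b, P a → P b → P (a + b)) (hsmul : ∀ (c : K) a, P a → P (c • a))
    (hlie : ∀ a b, P a → P b → P ⁅a, b⁆) (a : FreeLieAlgebra K X) : P a := by
  let S : LieSubalgebra K (FreeLieAlgebra K X) :=
    { carrier := {a | P a}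
      add_mem' := fun {a b} ha hb => hadd a b ha hb
      zero_mem' := h0
      smul_mem' := fun c a ha => hsmul c a ha
      lie_mem' := fun {a b} ha hb => hlie a b ha hb }
  let f : FreeLieAlgebra K X →ₗ⁅K⁆ S :=
    FreeLieAlgebra.lift K (fun x => (⟨FreeLieAlgebra.of K x, hof x⟩ : S))
  have h : S.incl.comp f = LieHom.id := by
    ext x
    simp [f]
  have h2 : ((f a : S) : FreeLieAlgebra K X) = a := by
    have := congrArg (fun F => F a) h
    simpa using this
  have h3 : P ((f a : S) : FreeLieAlgebra K X) := (f a).2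
  rwa [h2] at h3

variable (K) in
/-- The generators of the free associative algebra. -/
noncomputable def gen (x : X) : MonoidAlgebra K (FreeMonoid X) := single (FreeMonoid.of x) 1

variable (K X) in
/-- The canonical map from the free Lie algebra to the free associative algebra. -/
noncomputable def toAss : FreeLieAlgebra K X →ₗ⁅K⁆ MonoidAlgebra K (FreeMonoid X) :=
  FreeLieAlgebra.lift K (gen K)

theorem toAss_of (x : X) : toAss K X (FreeLieAlgebra.of K x) = gen K x := by
  simp [toAss]

theorem toAss_lie (a b : FreeLieAlgebra K X) :
    toAss K X ⁅a, b⁆ = toAss K X a * toAss K X b - toAss K X b * toAss K X a := by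
  rw [LieHom.map_lie, LieRing.of_associative_ring_bracket]

theorem coeff_mul_nil (a b : MonoidAlgebra K (FreeMonoid X)) :
    (a * b).coeff 1 = a.coeff 1 * b.coeff 1 := by
  rw [coeff_mul_antidiag a b 1 {(1, 1)}]
  · simp
  · rintro ⟨p, q⟩
    simp only [Finset.mem_singleton, Prod.mk.injEq]
    constructor
    · rintro ⟨rfl, rfl⟩; simp
    · intro h
      exact List.append_eq_nil_iff.1 h

theorem coeff_toAss_nil (a : FreeLieAlgebra K X) : (toAss K X a).coeff 1 = 0 := by
  induction a using induct with
  | hof x =>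
    rw [toAss_of, gen, coeff_single, Finsupp.single_eq_of_ne]
    intro h
    exact (FreeMonoid.of_ne_one x) h.symm
  | h0 => simp
  | hadd a b ha hb => simp [ha, hb]
  | hsmul c a ha => simp [ha]
  | hlie a b ha hb =>
    rw [toAss_lie, coeff_sub, Finsupp.sub_apply, coeff_mul_nil, coeff_mul_nil, ha, hb]
    simp

/-- The operator `(v, c) ↦ (⁅u, v⁆ + c u, 0)`. -/
noncomputable def op (u : FreeLieAlgebra K X) : Module.End K (FreeLieAlgebra K X × K) where
  toFun p := (⁅u, p.1⁆ + p.2 • u, 0)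
  map_add' p q := by
    ext
    · simp only [Prod.fst_add, Prod.snd_add, lie_add, add_smul]; abel
    · simp
  map_smul' c p := by
    ext
    · simp [smul_add, mul_smul]
    · simp

variable (K X) in
/-- The Dynkin representation. -/
noncomputable def rho :
    MonoidAlgebra K (FreeMonoid X) →ₐ[K] Module.End K (FreeLieAlgebra K X × K) :=
  MonoidAlgebra.lift K _ (FreeMonoid X) (FreeMonoid.lift fun x => op (FreeLieAlgebra.of K x))

theorem rho_gen (x : X) : rho K X (gen K x) = op (FreeLieAlgebra.of K x) := by
  simp [rho, gen]

theorem rho_snd (a : FreeLieAlgebra K X) (p : FreeLieAlgebra K X × K) :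
    (rho K X (toAss K X a) p).2 = 0 := by
  induction a using induct generalizing p with
  | hof x => rw [toAss_of, rho_gen]; rfl
  | h0 => simp
  | hadd a b ha hb => simp [ha, hb]
  | hsmul c a ha => simp [ha]
  | hlie a b ha hb => rw [toAss_lie]; simp [ha, hb]

theorem rho_zero (a v : FreeLieAlgebra K X) :
    rho K X (toAss K X a) (v, 0) = (⁅a, v⁆, 0) := by
  induction a using induct generalizing v with
  | hof x => rw [toAss_of, rho_gen]; simp [op]
  | h0 => simp [Prod.zero_eq_mk]
  | hadd a b ha hb => simp [ha, hb]
  | hsmul c a ha => simp [ha]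
  | hlie a b ha hb => rw [toAss_lie]; simp [ha, hb]

variable (K X) in
/-- The Euler derivation. -/
noncomputable def eul : Module.End K (FreeLieAlgebra K X) where
  toFun a := (rho K X (toAss K X a) (0, 1)).1
  map_add' a b := by simp
  map_smul' c a := by simp

theorem rho_one (a : FreeLieAlgebra K X) :
    rho K X (toAss K X a) (0, 1) = (eul K X a, 0) := by
  ext
  · rfl
  · exact rho_snd _ _

theorem eul_of (x : X) : eul K X (FreeLieAlgebra.of K x) = FreeLieAlgebra.of K x := by
  change (rho K X (toAss K X _) (0, 1)).1 = _
  rw [toAss_of, rho_gen]; simp [op]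

theorem eul_lie (a b : FreeLieAlgebra K X) :
    eul K X ⁅a, b⁆ = ⁅a, eul K X b⁆ + ⁅eul K X a, b⁆ := by
  change (rho K X (toAss K X _) (0, 1)).1 = _
  rw [toAss_lie, map_sub, map_mul, map_mul, LinearMap.sub_apply, Module.End.mul_apply,
    Module.End.mul_apply, rho_one, rho_one, rho_zero, rho_zero]
  simp only [Prod.mk_sub_mk]
  rw [← lie_skew b, sub_neg_eq_add]

theorem mem_sup (a : FreeLieAlgebra K X) :
    a ∈ ⨆ n : ℕ, (eul K X).eigenspace ((n : K) + 1) := by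
  have hm : ∀ (n : ℕ) (a : FreeLieAlgebra K X), eul K X a = ((n : K) + 1) • a →
      a ∈ ⨆ n : ℕ, (eul K X).eigenspace ((n : K) + 1) := fun n a h =>
    Submodule.mem_iSup_of_mem n (Module.End.mem_eigenspace_iff.2 h)
  induction a using induct with
  | hof x => exact hm 0 _ (by simp [eul_of])
  | h0 => exact zero_mem _
  | hadd a b ha hb => exact add_mem ha hb
  | hsmul c a ha => exact Submodule.smul_mem _ c ha
  | hlie a b ha hb =>
    induction ha using Submodule.iSup_induction' with
    | zero => simp
    | add x y _ _ hx hy => rw [add_lie]; exact add_mem hx hy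
    | mem m a ha =>
      induction hb using Submodule.iSup_induction' with
      | zero => simp
      | add x y _ _ hx hy => rw [lie_add]; exact add_mem hx hy
      | mem n b hb =>
        rw [Module.End.mem_eigenspace_iff] at ha hb
        refine hm (m + n + 1) _ ?_
        rw [eul_lie, ha, hb, lie_smul, smul_lie, ← add_smul]
        congr 1
        push_cast
        ring

theorem eul_inj [CharZero K] (a : FreeLieAlgebra K X) (h : eul K X a = 0) : a = 0 := by
  have hind := (eul K X).eigenspaces_iSupIndep
  have h1 : a ∈ (eul K X).eigenspace 0 := Module.End.mem_eigenspace_iff.2 (by simp [h])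
  have h2 : a ∈ ⨆ (μ : K) (_ : μ ≠ 0), (eul K X).eigenspace μ := by
    have hle : (⨆ n : ℕ, (eul K X).eigenspace ((n : K) + 1)) ≤
        ⨆ (μ : K) (_ : μ ≠ 0), (eul K X).eigenspace μ :=
      iSup_le fun n => le_iSup₂_of_le ((n : K) + 1) (Nat.cast_add_one_ne_zero n) le_rfl
    exact hle (mem_sup a)
  exact Submodule.disjoint_def.1 (hind 0) a h1 h2

theorem toAss_inj [CharZero K] (a : FreeLieAlgebra K X) (h : toAss K X a = 0) : a = 0 := by
  apply eul_inj
  change (rho K X (toAss K X a) (0, 1)).1 = 0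
  simp [h]

theorem coeff_mul_gen_same (a : MonoidAlgebra K (FreeMonoid X)) (w : FreeMonoid X) (k : X) :
    (a * gen K k).coeff (w * FreeMonoid.of k) = a.coeff w := by
  rw [gen, coeff_mul_single_eq_coeff_mul w, mul_one]
  intro m _
  exact mul_left_inj _

theorem coeff_mul_gen_ne (a : MonoidAlgebra K (FreeMonoid X)) (w : FreeMonoid X) {k m : X}
    (h : m ≠ k) : (a * gen K k).coeff (w * FreeMonoid.of m) = 0 := by
  rw [gen, coeff_mul_single_of_forall_mul_ne]
  intro d hd
  have := (List.append_inj' (show d.toList ++ [k] = w.toList ++ [m] from hd) rfl).2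
  simp at this
  exact h this.symm

theorem coeff_gen_mul_same (a : MonoidAlgebra K (FreeMonoid X)) (w : FreeMonoid X) (k : X) :
    (gen K k * a).coeff (FreeMonoid.of k * w) = a.coeff w := by
  rw [gen, coeff_single_mul_eq_mul_coeff w, one_mul]
  intro m _
  exact mul_right_inj _

theorem coeff_gen_mul_ne (a : MonoidAlgebra K (FreeMonoid X)) (w : FreeMonoid X) {k m : X}
    (h : m ≠ k) : (gen K k * a).coeff (FreeMonoid.of m * w) = 0 := by
  rw [gen, coeff_single_mul_of_forall_mul_ne]
  intro d hd
  have := (List.append_inj (show [k] ++ d.toList = [m] ++ w.toList from hd) rfl).1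
  simp at this
  exact h this.symm

theorem exists_third {g : ℕ} (hg : 3 ≤ g) (a b : Fin g) : ∃ c, c ≠ a ∧ c ≠ b := by
  have : ∃ c ∈ (Finset.univ : Finset (Fin g)), c ∉ ({a, b} : Finset (Fin g)) := by
    apply Finset.exists_mem_notMem_of_card_lt_card
    have := Finset.card_le_two (a := a) (b := b)
    simp; omega
  obtain ⟨c, _, hc⟩ := this
  simp at hc
  exact ⟨c, hc.1, hc.2⟩

theorem ass_system [CharZero K] {g : ℕ} (hg : 3 ≤ g)
    (a : Fin g → MonoidAlgebra K (FreeMonoid (Fin g))) (h1 : ∀ j, (a j).coeff 1 = 0)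
    (h : ∀ j k, a j * gen K k + gen K j * a k = a k * gen K j + gen K k * a j) :
    ∀ j, a j = 0 := by
  have hA : ∀ j l w, l ≠ j → (a j).coeff (FreeMonoid.of l * w) = 0 := by
    intro j l w hl
    obtain ⟨k, hkj, hkl⟩ := exists_third hg j l
    have e := congrArg (fun z => z.coeff (FreeMonoid.of l * w * FreeMonoid.of k)) (h j k)
    simp only [coeff_add, Finsupp.add_apply] at e
    rw [coeff_mul_gen_same, coeff_mul_gen_ne _ _ hkj, mul_assoc, coeff_gen_mul_ne _ _ hl,
      coeff_gen_mul_ne _ _ hkl.symm] at e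
    simpa using e
  have hB : ∀ j k w, k ≠ j →
      (a j).coeff (FreeMonoid.of j * w) = - (a k).coeff (w * FreeMonoid.of k) := by
    intro j k w hkj
    have e := congrArg (fun z => z.coeff (FreeMonoid.of j * w * FreeMonoid.of k)) (h j k)
    simp only [coeff_add, Finsupp.add_apply] at e
    rw [coeff_mul_gen_same, coeff_mul_gen_ne _ _ hkj, mul_assoc, coeff_gen_mul_same,
      coeff_gen_mul_ne _ _ hkj.symm] at e
    rw [eq_neg_iff_add_eq_zero]
    simpa using e
  intro j
  ext w
  rw [coeff_zero, Finsupp.zero_apply]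
  cases w using FreeMonoid.casesOn with
  | one => exact h1 j
  | of_mul l w =>
    by_cases hl : l = j
    · subst hl
      cases w using FreeMonoid.casesOn with
      | one =>
        obtain ⟨k, hk, -⟩ := exists_third hg l l
        obtain ⟨m, hml, hmk⟩ := exists_third hg l k
        have e1 := hB l k 1 hk
        have e2 := hB l m 1 hml
        have e3 := hB k m 1 hmk
        simp only [mul_one, one_mul] at e1 e2 e3 ⊢
        have e4 : (2 : K) * (a l).coeff (FreeMonoid.of l) = 0 := by
          linear_combination e1 + e2 - e3
        simpa using e4
      | of_mul p w =>
        obtain ⟨k, hkl, hkp⟩ := exists_third hg l p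
        rw [hB l k _ hkl, mul_assoc, hA k p _ hkp.symm, neg_zero]
    · exact hA j l w hl

end FreeLieAux

/-- Let `F_g` be the free Lie algebra on `g ≥ 3` generators over a field of characteristic
zero. Any symmetric family `(u i j)` of elements of the derived subalgebra `[F_g, F_g]`
satisfying `⁅u i j, x k⁆ + ⁅x j, u i k⁆ = 0` for all `i, j, k` is identically zero. -/
theorem free_lie_system_solutions_trivial
    (K : Type*) [Field K] [CharZero K] (g : ℕ) (hg : 3 ≤ g)
    (u : Fin g → Fin g → FreeLieAlgebra K (Fin g))
    (hder : ∀ i j, u i j ∈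
      ⁅(⊤ : LieIdeal K (FreeLieAlgebra K (Fin g))), (⊤ : LieIdeal K (FreeLieAlgebra K (Fin g)))⁆)
    (hsymm : ∀ i j, u i j = u j i)
    (heq : ∀ i j k, ⁅u i j, FreeLieAlgebra.of K k⁆ + ⁅FreeLieAlgebra.of K j, u i k⁆ = 0) :
    ∀ i j, u i j = 0 := by
  have key : ∀ i j, FreeLieAux.toAss K (Fin g) (u i j) = 0 := by
    intro i
    refine FreeLieAux.ass_system hg (fun j => FreeLieAux.toAss K (Fin g) (u i j))
      (fun j => FreeLieAux.coeff_toAss_nil _) (fun j k => ?_)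
    have e := congrArg (FreeLieAux.toAss K (Fin g)) (heq i j k)
    rw [map_add, map_zero, FreeLieAux.toAss_lie, FreeLieAux.toAss_lie, FreeLieAux.toAss_of,
      FreeLieAux.toAss_of] at e
    rw [← sub_eq_zero, ← e]
    abel
  exact fun i j => FreeLieAux.toAss_inj _ (key i j)
end

section
/- Let F_{g,c} be the free-nilpotent Lie algebra over a field K of characteristic zero on g ≥ 3 generators x_1, …, x_g of nilpotency class c ≥ 2. Suppose (u_{ij})_{1≤i,j≤g} is a family of elements of the derived subalgebra [F_{g,c}, F_{g,c}] with u_{ij} = u_{ji} for all i,j, satisfying [u_{ij}, x_k] + [x_j, u_{ik}] = 0 for all 1 ≤ i,j,k ≤ g. Then u_{ij} ∈ Z(F_{g,c}) for all i,j. -/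
namespace FNSolve

section Comb
variable {K : Type*} [Field K] {g : ℕ}

/-- coefficient of `l` in `f * x_k` -/
def cR (f : List (Fin g) → K) (k : Fin g) (l : List (Fin g)) : K :=
  if l.getLast? = some k then f l.dropLast else 0

/-- coefficient of `l` in `x_k * f` -/
def cL (f : List (Fin g) → K) (k : Fin g) (l : List (Fin g)) : K :=
  if l.head? = some k then f l.tail else 0

lemma cR_append (f : List (Fin g) → K) (k m : Fin g) (l : List (Fin g)) :
    cR f k (l ++ [m]) = if m = k then f l else 0 := by
  simp [cR]

lemma cL_cons (f : List (Fin g) → K) (k m : Fin g) (l : List (Fin g)) :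
    cL f k (m :: l) = if m = k then f l else 0 := by
  simp [cL]

lemma exists_third (hg : 3 ≤ g) (a b : Fin g) : ∃ k : Fin g, k ≠ a ∧ k ≠ b := by
  have h : (({a, b} : Finset (Fin g))).card < Fintype.card (Fin g) := by
    have := Finset.card_le_two (a := a) (b := b)
    simp only [Fintype.card_fin]; omega
  obtain ⟨k, hk⟩ := Finset.exists_mem_notMem_of_card_lt_card
    (s := ({a, b} : Finset (Fin g))) (t := Finset.univ) (by simpa using h)
  exact ⟨k, by aesop⟩

lemma comb [CharZero K] (hg : 3 ≤ g) (n : ℕ) (v : Fin g → List (Fin g) → K)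
    (h0 : ∀ j, v j [] = 0)
    (h : ∀ j k l, l.length ≤ n + 1 →
      cR (v j) k l - cL (v j) k l - (cR (v k) j l - cL (v k) j l) = 0) :
    ∀ j l, l.length ≤ n → v j l = 0 := by
  have A : ∀ j m l, m ≠ j → (m :: l).length ≤ n → v j (m :: l) = 0 := by
    intro j m l hm hl
    obtain ⟨k, hkj, hkm⟩ := exists_third hg j m
    have e := h j k ((m :: l) ++ [k]) (by simpa using hl)
    rw [cR_append, cR_append, List.cons_append, cL_cons, cL_cons] at e
    simpa [hkj, hkm.symm, hm] using e
  have B : ∀ j m l, m ≠ j → (l ++ [m]).length ≤ n → v j (l ++ [m]) = 0 := by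
    intro j m l hm hl
    obtain ⟨k, hkj, hkm⟩ := exists_third hg j m
    have e := h j k (k :: (l ++ [m])) (by simpa using hl)
    rw [cL_cons, cL_cons, ← List.cons_append, cR_append, cR_append] at e
    simpa [hkj, hkm.symm, hm] using e
  have C : ∀ j k l, k ≠ j → (l ++ [j]).length ≤ n → v j (l ++ [j]) = - v k (k :: l) := by
    intro j k l hk hl
    have e := h j k (k :: (l ++ [j])) (by simpa using hl)
    rw [cL_cons, cL_cons, ← List.cons_append, cR_append, cR_append] at e
    simp [hk, hk.symm] at e
    linear_combination -e
  intro j l hl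
  rcases List.eq_nil_or_concat l with rfl | ⟨l', m, rfl⟩
  · exact h0 j
  rw [List.concat_eq_append] at *
  by_cases hm : m = j
  swap
  · exact B j m l' hm hl
  subst hm
  rcases List.eq_nil_or_concat l' with rfl | ⟨l'', p, rfl⟩
  · obtain ⟨k, hk, -⟩ := exists_third hg m m
    obtain ⟨q, hq, hqk⟩ := exists_third hg m k
    have hl1 : 1 ≤ n := by simpa using hl
    have e1 := C m k [] hk (by simpa using hl1)
    have e2 := C k q [] hqk (by simpa using hl1)
    have e3 := C q m [] hq.symm (by simpa using hl1)
    simp only [List.nil_append] at *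
    have : (2 : K) * v m [m] = 0 := by linear_combination e1 - e2 + e3
    simpa using this
  · obtain ⟨k, hk, hkp⟩ := exists_third hg m p
    rw [List.concat_eq_append] at *
    rw [C m k _ hk hl, ← List.cons_append, B k p _ hkp.symm, neg_zero]
    simp only [List.length_append, List.length_cons, List.length_nil] at hl ⊢
    omega
end Comb

noncomputable section Alg
variable (K : Type*) [Field K] (g : ℕ)

abbrev A := MonoidAlgebra K (FreeMonoid (Fin g))
abbrev L := FreeLieAlgebra K (Fin g)
abbrev γ (n : ℕ) : LieIdeal K (L K g) := LieModule.lowerCentralSeries K (L K g) (L K g) n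

attribute [local instance] LieRing.ofAssociativeRing

variable {K g}

def X (i : Fin g) : A K g := MonoidAlgebra.single (FreeMonoid.of i) 1

variable (K g) in
def φ : L K g →ₗ⁅K⁆ A K g := FreeLieAlgebra.lift K X

lemma φ_of (i : Fin g) : φ K g (FreeLieAlgebra.of K i) = X i := by simp [φ]

lemma lie_ind (S : LieSubalgebra K (L K g)) (h : ∀ i, FreeLieAlgebra.of K i ∈ S) (p : L K g) :
    p ∈ S := by
  let f : L K g →ₗ⁅K⁆ S := FreeLieAlgebra.lift K (fun i => ⟨_, h i⟩)
  have : S.incl.comp f = LieHom.id := by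
    ext i; simp [f]
  have h2 := congrArg (fun F : L K g →ₗ⁅K⁆ L K g => F p) this
  simp at h2
  rw [← h2]; exact (f p).2

lemma lie_mem_γ (n : ℕ) (a b : L K g) (hb : b ∈ γ K g n) : ⁅a, b⁆ ∈ γ K g (n+1) := by
  rw [γ, LieModule.lowerCentralSeries_succ]
  exact LieSubmodule.lie_mem_lie (LieSubmodule.mem_top a) hb

lemma γ_succ_ind (n : ℕ) (S : Submodule K (L K g))
    (h : ∀ a b : L K g, b ∈ γ K g n → ⁅a, b⁆ ∈ S) : ∀ p ∈ γ K g (n+1), p ∈ S := by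
  intro p hp
  rw [γ, LieModule.lowerCentralSeries_succ, ← LieSubmodule.mem_toSubmodule,
    LieSubmodule.lieIdeal_oper_eq_linear_span'] at hp
  refine (Submodule.span_le (p := S)).2 ?_ hp
  rintro _ ⟨a, -, b, hb, rfl⟩
  exact h a b hb

lemma γ_anti (n : ℕ) : γ K g (n+1) ≤ γ K g n :=
  LieModule.antitone_lowerCentralSeries _ _ _ (Nat.le_succ n)

/-- filtration by word length -/
def T (n : ℕ) : Submodule K (A K g) :=
  Submodule.span K {f | ∃ w : FreeMonoid (Fin g), n ≤ w.length ∧ f = MonoidAlgebra.single w 1}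

lemma T_mul (m n : ℕ) (a b : A K g) (ha : a ∈ T m) (hb : b ∈ T n) : a * b ∈ T (m+n) := by
  have := Submodule.mul_mem_mul ha hb
  rw [T, T, Submodule.span_mul_span] at this
  refine Submodule.span_mono ?_ this
  rintro _ ⟨_, ⟨w, hw, rfl⟩, _, ⟨w', hw', rfl⟩, rfl⟩
  refine ⟨w * w', ?_, by simp⟩
  rw [FreeMonoid.length_mul]; omega

lemma T_coeff (n : ℕ) (a : A K g) (ha : a ∈ T n) (w : FreeMonoid (Fin g)) (hw : w.length < n) :
    a.coeff w = 0 := by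
  induction ha using Submodule.span_induction with
  | mem x hx =>
    obtain ⟨w', hw', rfl⟩ := hx
    have : w' ≠ w := by rintro rfl; omega
    simp [this]
  | zero => simp
  | add x y _ _ hx hy => simp [hx, hy]
  | smul c x _ hx => simp [hx]

lemma mem_T (n : ℕ) (a : A K g) (h : ∀ w : FreeMonoid (Fin g), w.length < n → a.coeff w = 0) :
    a ∈ T n := by
  rw [← MonoidAlgebra.sum_coeff_single a]
  refine Submodule.sum_mem _ fun w hw => ?_
  have : MonoidAlgebra.single w (a.coeff w) = a.coeff w • (MonoidAlgebra.single w 1 : A K g) := by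
    simp
  rw [this]
  refine Submodule.smul_mem _ _ (Submodule.subset_span ⟨w, ?_, rfl⟩)
  by_contra hlt
  exact (Finsupp.mem_support_iff.1 hw) (h w (by omega))

lemma T_anti {m n : ℕ} (h : m ≤ n) : (T n : Submodule K (A K g)) ≤ T m := by
  refine Submodule.span_mono ?_
  rintro _ ⟨w, hw, rfl⟩
  exact ⟨w, by omega, rfl⟩

lemma φ_mem_one (p : L K g) : φ K g p ∈ T (K := K) (g := g) 1 := by
  let S : LieSubalgebra K (L K g) :=
    { (T (K := K) (g := g) 1).comap (φ K g : L K g →ₗ[K] A K g) with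
      lie_mem' := by
        intro a b ha hb
        simp only [AddSubsemigroup.mem_carrier, AddSubmonoid.mem_toSubsemigroup, Submodule.mem_toAddSubmonoid, Submodule.mem_comap, LieHom.coe_toLinearMap, LieHom.map_lie] at *
        rw [LieRing.of_associative_ring_bracket]
        exact Submodule.sub_mem _ (T_anti (by omega) (T_mul 1 1 _ _ ha hb))
          (T_anti (by omega) (T_mul 1 1 _ _ hb ha)) }
  refine lie_ind S ?_ p
  intro i
  change φ K g _ ∈ T (K := K) (g := g) 1
  rw [φ_of]
  exact Submodule.subset_span ⟨_, by simp, rfl⟩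

lemma φ_mem (n : ℕ) : ∀ p ∈ γ K g n, φ K g p ∈ T (K := K) (g := g) (n+1) := by
  induction n with
  | zero => intro p _; exact φ_mem_one p
  | succ n ih =>
    refine γ_succ_ind n ((T (n+1+1)).comap (φ K g : L K g →ₗ[K] A K g)) ?_
    intro a b hb
    simp only [Submodule.mem_comap, LieHom.coe_toLinearMap, LieHom.map_lie]
    rw [LieRing.of_associative_ring_bracket]
    exact Submodule.sub_mem _ (T_anti (by omega) (T_mul _ _ _ _ (φ_mem_one a) (ih b hb)))
          (T_anti (by omega) (T_mul _ _ _ _ (ih b hb) (φ_mem_one a)))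

/-- the operators on `L × K` -/
def op (i : Fin g) : Module.End K (L K g × K) :=
  LinearMap.prod
    (LinearMap.coprod (LieAlgebra.ad K (L K g) (FreeLieAlgebra.of K i))
      (LinearMap.toSpanSingleton K (L K g) (FreeLieAlgebra.of K i))) 0

lemma op_apply (i : Fin g) (l : L K g) (t : K) :
    op i (l, t) = (⁅FreeLieAlgebra.of K i, l⁆ + t • FreeLieAlgebra.of K i, 0) := by
  simp [op]

def Θ : A K g →ₐ[K] Module.End K (L K g × K) :=
  MonoidAlgebra.lift K _ _ (FreeMonoid.lift op)

lemma Θ_X (i : Fin g) : Θ (X i : A K g) = op i := by simp [Θ, X]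

def E : L K g →ₗ[K] L K g where
  toFun p := (Θ (φ K g p) (0, 1)).1
  map_add' := by simp
  map_smul' := by simp

lemma Θ_φ (p : L K g) : (∀ l, Θ (φ K g p) (l, 0) = (⁅p, l⁆, 0)) ∧
    Θ (φ K g p) (0, 1) = (E p, 0) := by
  have key : ∀ p q : L K g, Θ (φ K g ⁅p, q⁆) =
      Θ (φ K g p) * Θ (φ K g q) - Θ (φ K g q) * Θ (φ K g p) := by
    intro p q
    rw [LieHom.map_lie, LieRing.of_associative_ring_bracket, map_sub, map_mul, map_mul]
  let S : LieSubalgebra K (L K g) :=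
    { carrier := {p | (∀ l, Θ (φ K g p) (l, 0) = (⁅p, l⁆, 0)) ∧ (Θ (φ K g p) (0, 1)).2 = 0}
      zero_mem' := by simp [Prod.zero_eq_mk]
      add_mem' := by
        rintro a b ⟨ha, ha'⟩ ⟨hb, hb'⟩
        exact ⟨fun l => by simp [ha, hb], by simp [ha', hb']⟩
      smul_mem' := by
        rintro c a ⟨ha, ha'⟩
        exact ⟨fun l => by simp [ha], by simp [ha']⟩
      lie_mem' := by
        rintro a b ⟨ha, ha'⟩ ⟨hb, hb'⟩
        have ea : Θ (φ K g a) (0, 1) = (E a, 0) := Prod.ext rfl ha'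
        have eb : Θ (φ K g b) (0, 1) = (E b, 0) := Prod.ext rfl hb'
        refine ⟨fun l => ?_, ?_⟩
        · rw [key]; simp [ha, hb]
        · rw [key]; simp [ea, eb, ha, hb] }
  have hp : p ∈ S := by
    refine lie_ind S ?_ p
    intro i
    refine ⟨fun l => ?_, ?_⟩
    · rw [φ_of, Θ_X, op_apply]; simp
    · rw [φ_of, Θ_X, op_apply]
  exact ⟨hp.1, Prod.ext rfl hp.2⟩

lemma E_of (i : Fin g) : E (FreeLieAlgebra.of K i) = FreeLieAlgebra.of K i := by
  change (Θ (φ K g _) (0, 1)).1 = _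
  rw [φ_of, Θ_X, op_apply]; simp

lemma E_lie (p q : L K g) : E ⁅p, q⁆ = ⁅p, E q⁆ + ⁅E p, q⁆ := by
  change (Θ (φ K g ⁅p, q⁆) (0, 1)).1 = _
  rw [LieHom.map_lie, LieRing.of_associative_ring_bracket, map_sub, map_mul, map_mul]
  simp only [LinearMap.sub_apply, Module.End.mul_apply, (Θ_φ p).2, (Θ_φ q).2, (Θ_φ p).1,
    (Θ_φ q).1, Prod.fst_sub]
  rw [← lie_skew q]; abel

lemma Θ_T (n : ℕ) (a : A K g) (ha : a ∈ T (n+1)) : (Θ a (0, 1)).1 ∈ γ K g n := by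
  have W : ∀ w : FreeMonoid (Fin g), ∀ n, n + 1 ≤ w.length →
      (FreeMonoid.lift op w (0, 1) : L K g × K).1 ∈ γ K g n ∧
      (FreeMonoid.lift op w (0, 1) : L K g × K).2 = 0 := by
    intro w
    induction w using FreeMonoid.inductionOn' with
    | one => intro n hn; simp at hn
    | of_mul i w ih =>
      intro n hn
      rw [FreeMonoid.length_mul, FreeMonoid.length_of] at hn
      rw [map_mul, Module.End.mul_apply, FreeMonoid.lift_eval_of]
      cases n with
      | zero =>
        refine ⟨by simp [γ], ?_⟩
        rw [← Prod.mk.eta (p := FreeMonoid.lift op w (0,1)), op_apply]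
      | succ n =>
        obtain ⟨h1, h2⟩ := ih n (by omega)
        rw [← Prod.mk.eta (p := FreeMonoid.lift op w (0,1)), op_apply, h2]
        refine ⟨?_, rfl⟩
        simpa using lie_mem_γ n _ _ h1
  induction ha using Submodule.span_induction with
  | mem x hx =>
    obtain ⟨w, hw, rfl⟩ := hx
    simpa [Θ] using (W w n hw).1
  | zero => simp
  | add x y _ _ hx hy => simpa using add_mem hx hy
  | smul c x _ hx => simpa using (γ K g n).smul_mem c hx

lemma E_zero (p : L K g) : E p - p ∈ γ K g 1 := by
  let S : LieSubalgebra K (L K g) :=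
    { (γ K g 1).toSubmodule.comap (E - LinearMap.id) with
      lie_mem' := by
        intro a b _ _
        change E ⁅a, b⁆ - ⁅a, b⁆ ∈ γ K g 1
        rw [E_lie]
        have h : ∀ a b : L K g, ⁅a, b⁆ ∈ γ K g 1 := fun a b => lie_mem_γ 0 a b (by simp [γ])
        exact sub_mem (add_mem (h _ _) (h _ _)) (h _ _) }
  refine lie_ind S (fun i => ?_) p
  change E (FreeLieAlgebra.of K i) - FreeLieAlgebra.of K i ∈ γ K g 1
  rw [E_of, sub_self]; exact zero_mem _

lemma γ_one_lie (n : ℕ) (b : L K g) (hb : b ∈ γ K g n) (a : L K g) (ha : a ∈ γ K g 1) :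
    ⁅a, b⁆ ∈ γ K g (n+2) := by
  let S : Submodule K (L K g) :=
    { carrier := {a | ⁅a, b⁆ ∈ γ K g (n+2)}
      zero_mem' := by simp
      add_mem' := by
        intro x y hx hy
        simp only [Set.mem_ofPred_eq, add_lie] at *
        exact add_mem hx hy
      smul_mem' := by
        intro c x hx
        simp only [Set.mem_ofPred_eq, smul_lie] at *
        exact (γ K g (n+2)).smul_mem c hx }
  refine γ_succ_ind 0 S (fun p q _ => ?_) a ha
  change ⁅⁅p, q⁆, b⁆ ∈ γ K g (n+2)
  rw [lie_lie]
  exact sub_mem (lie_mem_γ _ _ _ (lie_mem_γ _ _ _ hb)) (lie_mem_γ _ _ _ (lie_mem_γ _ _ _ hb))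

lemma E_γ (n : ℕ) : ∀ p ∈ γ K g n, E p - ((n : K) + 1) • p ∈ γ K g (n+1) := by
  induction n with
  | zero => intro p _; simpa using E_zero p
  | succ n ih =>
    refine γ_succ_ind n ((γ K g (n+1+1)).toSubmodule.comap
      (E - (((n + 1 : ℕ) : K) + 1) • LinearMap.id)) ?_
    intro a b hb
    change E ⁅a, b⁆ - (((n + 1 : ℕ) : K) + 1) • ⁅a, b⁆ ∈ γ K g (n+1+1)
    have e : E ⁅a, b⁆ - (((n + 1 : ℕ) : K) + 1) • ⁅a, b⁆ =
        ⁅a, E b - ((n : K) + 1) • b⁆ + ⁅E a - a, b⁆ := by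
      rw [E_lie, lie_sub, sub_lie, lie_smul]
      push_cast
      module
    rw [e]
    exact add_mem (lie_mem_γ _ _ _ (ih b hb)) (γ_one_lie n b hb _ (E_zero a))

lemma mem_γ_of_φ [CharZero K] (n : ℕ) (p : L K g) (h : φ K g p ∈ T (K := K) (g := g) (n+1)) :
    p ∈ γ K g n := by
  have hE : E p ∈ γ K g n := Θ_T n _ h
  have : ∀ m ≤ n, p ∈ γ K g m := by
    intro m
    induction m with
    | zero => intro _; simp [γ]
    | succ m ih =>
      intro hm
      have h1 := E_γ m p (ih (by omega))
      have h2 : E p ∈ γ K g (m+1) := LieModule.antitone_lowerCentralSeries _ _ _ hm hE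
      have h3 : ((m : K) + 1) • p ∈ γ K g (m+1) := by
        simpa using sub_mem h2 h1
      have h4 := (γ K g (m+1)).smul_mem ((m : K) + 1)⁻¹ h3
      rwa [inv_smul_smul₀ (by exact_mod_cast Nat.succ_ne_zero m)] at h4
  exact this n le_rfl

lemma coeff_mul_X (f : A K g) (k : Fin g) (l : List (Fin g)) :
    (f * X k).coeff (FreeMonoid.ofList l) = cR (fun l => f.coeff (FreeMonoid.ofList l)) k l := by
  rcases List.eq_nil_or_concat l with rfl | ⟨l', m, rfl⟩
  · rw [X, MonoidAlgebra.coeff_mul_single_of_forall_mul_ne]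
    · simp [cR]
    · intro d hd
      have := congrArg FreeMonoid.length hd
      rw [FreeMonoid.length_mul] at this
      simp at this
  · rw [List.concat_eq_append, cR_append]
    split_ifs with h
    · subst h
      rw [X, MonoidAlgebra.coeff_mul_single_eq_coeff_mul (FreeMonoid.ofList l'), mul_one]
      intro d _
      rw [FreeMonoid.ofList_append, FreeMonoid.ofList_singleton, mul_left_inj]
    · rw [X, MonoidAlgebra.coeff_mul_single_of_forall_mul_ne]
      intro d hd
      have := congrArg FreeMonoid.toList hd
      rw [FreeMonoid.toList_mul, FreeMonoid.toList_of, FreeMonoid.toList_ofList] at this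
      have h2 := (List.append_inj' this rfl).2
      simp only [List.cons.injEq, and_true] at h2
      exact h h2.symm

lemma coeff_X_mul (f : A K g) (k : Fin g) (l : List (Fin g)) :
    (X k * f).coeff (FreeMonoid.ofList l) = cL (fun l => f.coeff (FreeMonoid.ofList l)) k l := by
  rcases l with _ | ⟨m, l⟩
  · rw [X, MonoidAlgebra.coeff_single_mul_of_forall_mul_ne]
    · simp [cL]
    · intro d hd
      have := congrArg FreeMonoid.length hd
      rw [FreeMonoid.length_mul] at this
      simp at this
  · rw [cL_cons]
    split_ifs with h
    · subst h
      rw [X, MonoidAlgebra.coeff_single_mul_eq_mul_coeff (FreeMonoid.ofList l), one_mul]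
      intro d _
      rw [FreeMonoid.ofList_cons, mul_right_inj]
    · rw [X, MonoidAlgebra.coeff_single_mul_of_forall_mul_ne]
      intro d hd
      have := congrArg FreeMonoid.toList hd
      simp at this
      exact h this.1.symm

lemma main [CharZero K] (hg : 3 ≤ g) (n : ℕ) (v : Fin g → L K g)
    (h : ∀ j k, ⁅v j, FreeLieAlgebra.of K k⁆ + ⁅FreeLieAlgebra.of K j, v k⁆ ∈ γ K g (n+1)) (j : Fin g) :
    v j ∈ γ K g n := by
  refine mem_γ_of_φ n _ (mem_T _ _ fun w hw => ?_)
  refine comb hg n (fun j l => (φ K g (v j)).coeff (FreeMonoid.ofList l)) ?_ ?_ j w.toList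
    (Nat.lt_succ_iff.1 hw)
  · intro j
    exact T_coeff 1 _ (φ_mem_one _) _ (by simp)
  · intro j k l hl
    have e := T_coeff _ _ (φ_mem _ _ (h j k)) (FreeMonoid.ofList l)
      (show l.length < _ by omega)
    rw [map_add, LieHom.map_lie, LieHom.map_lie, φ_of, φ_of, LieRing.of_associative_ring_bracket,
      LieRing.of_associative_ring_bracket] at e
    simp only [MonoidAlgebra.coeff_add, MonoidAlgebra.coeff_sub, Finsupp.add_apply,
      Finsupp.sub_apply, coeff_mul_X, coeff_X_mul] at e
    linear_combination e

end Alg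
end FNSolve

/-- Let `F_{g,c}` be the free-nilpotent Lie algebra on `g ≥ 3` generators of nilpotency
class `c ≥ 2` over a field of characteristic zero, with `x i` the images of the free
generators. Any symmetric family `(u i j)` of elements of `[F_{g,c}, F_{g,c}]` satisfying
`⁅u i j, x k⁆ + ⁅x j, u i k⁆ = 0` for all `i, j, k` lies in the center. -/
theorem free_nilpotent_system_solutions_central
    (K : Type*) [Field K] [CharZero K] (g c : ℕ) (hg : 3 ≤ g) (hc : 2 ≤ c)
    (x : Fin g → FreeNilpotentLieAlgebra K g c)
    (hx : ∀ i, x i = LieSubmodule.Quotient.mk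
      (N := LieModule.lowerCentralSeries K (FreeLieAlgebra K (Fin g)) (FreeLieAlgebra K (Fin g)) c)
      (FreeLieAlgebra.of K i))
    (u : Fin g → Fin g → FreeNilpotentLieAlgebra K g c)
    (hder : ∀ i j, u i j ∈
      ⁅(⊤ : LieIdeal K (FreeNilpotentLieAlgebra K g c)),
        (⊤ : LieIdeal K (FreeNilpotentLieAlgebra K g c))⁆)
    (hsymm : ∀ i j, u i j = u j i)
    (heq : ∀ i j k, ⁅u i j, x k⁆ + ⁅x j, u i k⁆ = 0) :
    ∀ i j, u i j ∈ LieAlgebra.center K (FreeNilpotentLieAlgebra K g c) := by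
  obtain _ | n := c
  · omega
  choose v hv using fun i j => LieSubmodule.Quotient.surjective_mk' _ (u i j)
  intro i j
  have hm := FNSolve.main hg n (v i) (fun j k => by
    have e := heq i j k
    rw [← hv, ← hv, hx, hx] at e
    exact (LieSubmodule.Quotient.mk_eq_zero' (N := FNSolve.γ K g (n+1))).1 e) j
  rw [LieModule.mem_maxTrivSubmodule]
  intro y
  obtain ⟨y, rfl⟩ := LieSubmodule.Quotient.surjective_mk' _ y
  rw [← hv]
  exact (LieSubmodule.Quotient.mk_eq_zero' (N := FNSolve.γ K g (n+1))).2
    (FNSolve.lie_mem_γ n y _ hm)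
end
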